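/- arXiv:1807.10998 — 2 statements merged into one kernel-verified Lean document; each statement's English description precedes it below -/
import Mathlib

section
/- Let A ⊆ F_p satisfy |A|²|AA| ≤ C p² for an absolute constant C. Then E^+(A) ≪ |AA|^{3/2} |A|, where E^+(A) is the additive energy of A. -/
open Pointwise

namespace RNRS

/-- Chain rule for substituting univariate polynomials in a polynomial. -/
theorem chain_rule {K : Type*} [Field K] (f : Fin 3 → Polynomial K) (P : MvPolynomial (Fin 3) K) :
    Polynomial.derivative (MvPolynomial.aeval f P) =
      ∑ k, MvPolynomial.aeval f (MvPolynomial.pderiv k P) * Polynomial.derivative (f k) := by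
  induction P using MvPolynomial.induction_on with
  | C a => simp [Polynomial.algebraMap_eq]
  | add p q hp hq => simp only [map_add, hp, hq, add_mul, Finset.sum_add_distrib]
  | mul_X p i hp =>
    simp only [map_mul, Polynomial.derivative_mul, hp, MvPolynomial.aeval_X, Derivation.leibniz,
      smul_eq_mul, map_add, add_mul, Finset.sum_add_distrib, MvPolynomial.pderiv_X, Fin.sum_univ_three]
    fin_cases i <;> simp <;> ring

theorem pd_comm {K : Type*} [Field K] (i j : Fin 3) (P : MvPolynomial (Fin 3) K) :
    MvPolynomial.pderiv i (MvPolynomial.pderiv j P) =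
      MvPolynomial.pderiv j (MvPolynomial.pderiv i P) := by
  induction P using MvPolynomial.induction_on with
  | C a => simp
  | add p q hp hq => simp only [map_add, hp, hq]
  | mul_X p k hp =>
    simp only [Derivation.leibniz, smul_eq_mul, map_add, hp, MvPolynomial.pderiv_X]
    simp only [Pi.single_apply]
    split_ifs <;> simp <;> ring

theorem totalDegree_pd {K : Type*} [Field K] (i : Fin 3) (P : MvPolynomial (Fin 3) K) :
    (MvPolynomial.pderiv i P).totalDegree ≤ P.totalDegree - 1 := by
  refine Finset.sup_le fun s hs => ?_
  rw [MvPolynomial.mem_support_iff, MvPolynomial.coeff_pderiv] at hs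
  have h1 : s + Finsupp.single i 1 ∈ P.support := by
    rw [MvPolynomial.mem_support_iff]
    intro h0
    exact hs (by rw [h0]; simp)
  have h2 := MvPolynomial.le_totalDegree h1
  rw [Finsupp.sum_add_index' (by simp) (by simp), Finsupp.sum_single_index (by simp)] at h2
  omega

theorem ode_aux {K : Type*} [Field K] (p : ℕ) [CharP K p] (h v : Polynomial K) (e : K) (x : K)
    (hv : v.eval x ≠ 0) (hh : h.eval x = 0) (hd : h.natDegree < p)
    (heq : v * Polynomial.derivative h = Polynomial.C e * Polynomial.derivative v * h) : h = 0 := by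
  classical
  by_contra hne
  obtain ⟨g, hg, hgx⟩ := Polynomial.exists_eq_pow_rootMultiplicity_mul_and_not_dvd h hne x
  set m := h.rootMultiplicity x with hm
  have hm0 : 0 < m := (Polynomial.rootMultiplicity_pos hne).2 hh
  obtain ⟨n, hn⟩ : ∃ n, m = n + 1 := ⟨m - 1, by omega⟩
  have hmd : m ≤ h.natDegree := by
    rw [hm]
    exact (Polynomial.count_roots h (a := x)) ▸ (Multiset.count_le_card _ _).trans (Polynomial.card_roots' h)
  rw [Polynomial.dvd_iff_isRoot, Polynomial.IsRoot] at hgx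
  have hmK : ((n : K) + 1) ≠ 0 := by
    intro h0
    have : ((n + 1 : ℕ) : K) = 0 := by push_cast; exact h0
    rw [CharP.cast_eq_zero_iff K p] at this
    have := Nat.le_of_dvd (by omega) this
    omega
  rw [hg, hn] at heq
  have h2 : (Polynomial.X - Polynomial.C x) ^ n * (v * (((n : Polynomial K) + 1) * g
      + (Polynomial.X - Polynomial.C x) * Polynomial.derivative g)) =
      (Polynomial.X - Polynomial.C x) ^ n * (Polynomial.C e * Polynomial.derivative v *
        (Polynomial.X - Polynomial.C x) * g) := by
    have h3 : Polynomial.derivative ((Polynomial.X - Polynomial.C x) ^ (n+1) * g) =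
       (Polynomial.X - Polynomial.C x) ^ n * (((n : Polynomial K) + 1) * g
      + (Polynomial.X - Polynomial.C x) * Polynomial.derivative g) := by
      simp [Polynomial.derivative_mul, Polynomial.derivative_pow]
      ring
    rw [h3] at heq
    linear_combination heq
  have h4 := mul_left_cancel₀ (pow_ne_zero n (Polynomial.X_sub_C_ne_zero x)) h2
  have h5 := congrArg (Polynomial.eval x) h4
  simp at h5
  tauto

theorem ode {K : Type*} [Field K] [Infinite K] (p d : ℕ) [CharP K p] (hp : 2 * d < p)
    (u v : Polynomial K) (hv : v ≠ 0) (hud : u.natDegree ≤ d) (hvd : v.natDegree ≤ d)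
    (heq : v * (v * Polynomial.derivative (Polynomial.derivative u)
        - u * Polynomial.derivative (Polynomial.derivative v)) =
      2 * Polynomial.derivative v * (v * Polynomial.derivative u - u * Polynomial.derivative v)) :
    ∃ s t : K, u = (Polynomial.C s * Polynomial.X + Polynomial.C t) * v := by
  obtain ⟨x, hx⟩ : ∃ x, v.eval x ≠ 0 := by
    by_contra! hcon
    exact hv (Polynomial.funext (by simpa using hcon))
  by_cases hd0 : d = 0
  · subst hd0
    rw [Polynomial.eq_C_of_natDegree_le_zero hud, Polynomial.eq_C_of_natDegree_le_zero hvd]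
    refine ⟨0, u.coeff 0 / v.coeff 0, ?_⟩
    rw [Polynomial.eq_C_of_natDegree_le_zero hvd] at hx
    simp at hx
    simp only [map_zero, zero_mul, zero_add, ← Polynomial.C_mul]
    congr 1; field_simp
  set w := v * Polynomial.derivative u - u * Polynomial.derivative v with hw
  set s : K := w.eval x / (v.eval x) ^ 2 with hs
  have hdu := Polynomial.natDegree_derivative_le u
  have hdv := Polynomial.natDegree_derivative_le v
  have h1 : w - Polynomial.C s * v ^ 2 = 0 := by
    apply ode_aux p _ v 2 x hx
    · simp [hs]; field_simp; ring
    · refine lt_of_le_of_lt ?_ hp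
      refine (Polynomial.natDegree_sub_le _ _).trans (max_le ?_ ?_)
      · refine (Polynomial.natDegree_sub_le _ _).trans (max_le ?_ ?_)
        · refine Polynomial.natDegree_mul_le.trans ?_
          omega
        · refine Polynomial.natDegree_mul_le.trans ?_
          omega
      · refine (Polynomial.natDegree_C_mul_le _ _).trans ?_
        refine Polynomial.natDegree_pow_le.trans ?_
        omega
    · have hC : Polynomial.C (2 : K) = 2 := map_ofNat Polynomial.C 2
      simp only [hw, pow_two, Polynomial.derivative_mul, Polynomial.derivative_sub,
        Polynomial.derivative_C] at heq ⊢
      rw [hC]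
      linear_combination heq
  set t : K := u.eval x / v.eval x - s * x with ht
  have h2 : u - (Polynomial.C s * Polynomial.X + Polynomial.C t) * v = 0 := by
    apply ode_aux p _ v 1 x hx
    · simp [ht]; field_simp; ring
    · refine lt_of_le_of_lt (?_ : _ ≤ d + 1) (by omega)
      refine (Polynomial.natDegree_sub_le _ _).trans (max_le (by omega) ?_)
      refine Polynomial.natDegree_mul_le.trans ?_
      have : (Polynomial.C s * Polynomial.X + Polynomial.C t).natDegree ≤ 1 :=
        Polynomial.natDegree_linear_le
      omega
    · simp [Polynomial.derivative_mul]
      linear_combination h1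
  exact ⟨s, t, by linear_combination h2⟩


section core
open MvPolynomial

variable {K : Type*} [Field K]

/-- restriction of a polynomial to the red line `Y = α, Z = β X + γ`. -/
noncomputable def red (α β γ : K) : MvPolynomial (Fin 3) K →ₐ[K] Polynomial K :=
  aeval ![Polynomial.X, Polynomial.C α, Polynomial.C β * Polynomial.X + Polynomial.C γ]

/-- restriction of a polynomial to the blue line `X = α, Z = β Y + γ`. -/
noncomputable def blue (α β γ : K) : MvPolynomial (Fin 3) K →ₐ[K] Polynomial K :=
  aeval ![Polynomial.C α, Polynomial.X, Polynomial.C β * Polynomial.X + Polynomial.C γ]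

theorem red_deriv (α β γ : K) (P : MvPolynomial (Fin 3) K) :
    Polynomial.derivative (red α β γ P) =
      red α β γ (pderiv 0 P) + Polynomial.C β * red α β γ (pderiv 2 P) := by
  unfold red
  rw [chain_rule, Fin.sum_univ_three]
  simp
  ring

theorem blue_deriv (α β γ : K) (P : MvPolynomial (Fin 3) K) :
    Polynomial.derivative (blue α β γ P) =
      blue α β γ (pderiv 1 P) + Polynomial.C β * blue α β γ (pderiv 2 P) := by
  unfold blue
  rw [chain_rule, Fin.sum_univ_three]
  simp
  ring

theorem red_natDegree (α β γ : K) (P : MvPolynomial (Fin 3) K) :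
    (red α β γ P).natDegree ≤ P.totalDegree := by
  unfold red
  have := MvPolynomial.aeval_natDegree_le P (le_refl P.totalDegree)
    ![Polynomial.X, Polynomial.C α, Polynomial.C β * Polynomial.X + Polynomial.C γ] (n := 1) (by
      intro i
      fin_cases i
      · exact Polynomial.natDegree_X_le
      · simp
      · exact Polynomial.natDegree_linear_le)
  simpa using this

theorem blue_natDegree (α β γ : K) (P : MvPolynomial (Fin 3) K) :
    (blue α β γ P).natDegree ≤ P.totalDegree := by
  unfold blue
  have := MvPolynomial.aeval_natDegree_le P (le_refl P.totalDegree)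
    ![Polynomial.C α, Polynomial.X, Polynomial.C β * Polynomial.X + Polynomial.C γ] (n := 1) (by
      intro i
      fin_cases i
      · simp
      · exact Polynomial.natDegree_X_le
      · exact Polynomial.natDegree_linear_le)
  simpa using this

theorem red_eval (α β γ x : K) (P : MvPolynomial (Fin 3) K) :
    (red α β γ P).eval x = eval ![x, α, β * x + γ] P := by
  unfold red
  induction P using MvPolynomial.induction_on with
  | C a => simp [Polynomial.algebraMap_eq]
  | add p q hp hq => simp only [map_add, Polynomial.eval_add, hp, hq]
  | mul_X p i hp =>
    simp only [map_mul, Polynomial.eval_mul, hp, aeval_X, eval_X]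
    fin_cases i <;> simp

theorem blue_eval (α β γ x : K) (P : MvPolynomial (Fin 3) K) :
    (blue α β γ P).eval x = eval ![α, x, β * x + γ] P := by
  unfold blue
  induction P using MvPolynomial.induction_on with
  | C a => simp [Polynomial.algebraMap_eq]
  | add p q hp hq => simp only [map_add, Polynomial.eval_add, hp, hq]
  | mul_X p i hp =>
    simp only [map_mul, Polynomial.eval_mul, hp, aeval_X, eval_X]
    fin_cases i <;> simp

/-- second order obstruction to containing lines in the blue direction -/
noncomputable def FF (Q : MvPolynomial (Fin 3) K) : MvPolynomial (Fin 3) K :=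
  pderiv 1 (pderiv 1 Q) * (pderiv 2 Q * pderiv 2 Q)
    - 2 * (pderiv 1 Q * pderiv 2 Q * pderiv 1 (pderiv 2 Q))
    + pderiv 2 (pderiv 2 Q) * (pderiv 1 Q * pderiv 1 Q)

noncomputable def GG (Q : MvPolynomial (Fin 3) K) : MvPolynomial (Fin 3) K :=
  pderiv 2 Q * pderiv 0 (FF Q) - pderiv 0 Q * pderiv 2 (FF Q)

theorem FF_deg (Q : MvPolynomial (Fin 3) K) : (FF Q).totalDegree ≤ 3 * Q.totalDegree := by
  have h1 := totalDegree_pd 1 Q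
  have h2 := totalDegree_pd 2 Q
  have h11 := totalDegree_pd 1 (pderiv 1 Q)
  have h12 := totalDegree_pd 1 (pderiv 2 Q)
  have h22 := totalDegree_pd 2 (pderiv 2 Q)
  unfold FF
  refine (totalDegree_add _ _).trans (max_le ((totalDegree_sub _ _).trans (max_le ?_ ?_)) ?_)
  · have e1 := totalDegree_mul (pderiv 1 (pderiv 1 Q)) (pderiv 2 Q * pderiv 2 Q)
    have e2 := totalDegree_mul (pderiv 2 Q) (pderiv 2 Q)
    omega
  · have e0 := totalDegree_mul (2 : MvPolynomial (Fin 3) K) (pderiv 1 Q * pderiv 2 Q * pderiv 1 (pderiv 2 Q))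
    have e1 := totalDegree_mul (pderiv 1 Q * pderiv 2 Q) (pderiv 1 (pderiv 2 Q))
    have e2 := totalDegree_mul (pderiv 1 Q) (pderiv 2 Q)
    have e3 : (2 : MvPolynomial (Fin 3) K).totalDegree = 0 := totalDegree_C (2 : K)
    omega
  · have e1 := totalDegree_mul (pderiv 2 (pderiv 2 Q)) (pderiv 1 Q * pderiv 1 Q)
    have e2 := totalDegree_mul (pderiv 1 Q) (pderiv 1 Q)
    omega

theorem GG_deg (Q : MvPolynomial (Fin 3) K) : (GG Q).totalDegree ≤ 4 * Q.totalDegree := by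
  have h1 := totalDegree_pd 0 Q
  have h2 := totalDegree_pd 2 Q
  have h11 := totalDegree_pd 0 (FF Q)
  have h12 := totalDegree_pd 2 (FF Q)
  have := FF_deg Q
  unfold GG
  refine (totalDegree_sub _ _).trans (max_le ?_ ?_)
  · have e2 := totalDegree_mul (pderiv 2 Q) (pderiv 0 (FF Q))
    omega
  · have e2 := totalDegree_mul (pderiv 0 Q) (pderiv 2 (FF Q))
    omega

theorem red_deriv_zero (α β γ : K) (Q : MvPolynomial (Fin 3) K) (hQ : red α β γ Q = 0) :
    red α β γ (pderiv 0 Q) = - Polynomial.C β * red α β γ (pderiv 2 Q) := by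
  have h1 := red_deriv α β γ Q
  rw [hQ, map_zero] at h1
  linear_combination -h1

theorem blue_deriv_zero (α β γ : K) (Q : MvPolynomial (Fin 3) K) (hQ : blue α β γ Q = 0) :
    blue α β γ (pderiv 1 Q) = - Polynomial.C β * blue α β γ (pderiv 2 Q) := by
  have h1 := blue_deriv α β γ Q
  rw [hQ, map_zero] at h1
  linear_combination -h1

theorem blue_deriv2_zero (α β γ : K) (Q : MvPolynomial (Fin 3) K) (hQ : blue α β γ Q = 0) :
    blue α β γ (pderiv 1 (pderiv 1 Q)) = - 2 * Polynomial.C β * blue α β γ (pderiv 1 (pderiv 2 Q))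
      - Polynomial.C β ^ 2 * blue α β γ (pderiv 2 (pderiv 2 Q)) := by
  have h1 := congrArg Polynomial.derivative (blue_deriv_zero α β γ Q hQ)
  simp only [blue_deriv, Polynomial.derivative_mul, Polynomial.derivative_neg,
    Polynomial.derivative_C, neg_zero, zero_mul, zero_add] at h1
  rw [pd_comm 2 1] at h1
  linear_combination h1

theorem blue_FF (α β γ : K) (Q : MvPolynomial (Fin 3) K) (hQ : blue α β γ Q = 0) :
    blue α β γ (FF Q) = 0 := by
  unfold FF
  simp only [map_add, map_sub, map_mul, map_ofNat]
  rw [blue_deriv2_zero α β γ Q hQ, blue_deriv_zero α β γ Q hQ]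
  ring

theorem blue_GG (α β γ : K) (Q : MvPolynomial (Fin 3) K) (hQ : blue α β γ Q = 0) :
    blue α β γ (GG Q) = blue α β γ (pderiv 2 Q) * (
      blue α β γ (pderiv 2 Q) * (
        blue α β γ (pderiv 2 Q) * Polynomial.derivative (Polynomial.derivative (blue α β γ (pderiv 0 Q)))
        - blue α β γ (pderiv 0 Q) * Polynomial.derivative (Polynomial.derivative (blue α β γ (pderiv 2 Q))))
      - 2 * Polynomial.derivative (blue α β γ (pderiv 2 Q)) *
       (blue α β γ (pderiv 2 Q) * Polynomial.derivative (blue α β γ (pderiv 0 Q))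
        - blue α β γ (pderiv 0 Q) * Polynomial.derivative (blue α β γ (pderiv 2 Q)))) := by
  have h2 : ∀ i : Fin 3, pderiv i (2 : MvPolynomial (Fin 3) K) = 0 := fun i => pderiv_C (a := (2 : K))
  have hQ1 := blue_deriv_zero α β γ Q hQ
  have hQ2 := blue_deriv2_zero α β γ Q hQ
  unfold GG FF
  simp only [map_add, map_sub, pderiv_mul, map_mul, map_ofNat, blue_deriv, h2, map_zero,
    Polynomial.derivative_mul, Polynomial.derivative_C]
  simp only [pd_comm 1 0, pd_comm 2 0, pd_comm 2 1]
  rw [hQ2, hQ1]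
  ring

theorem red_GG (α β γ α' β' γ' : K) (Q : MvPolynomial (Fin 3) K) (hQ : red α β γ Q = 0)
    (hF : red α β γ (FF Q) = 0) (hinc : β * α' + γ = β' * α + γ') :
    (blue α' β' γ' (GG Q)).eval α = 0 := by
  have h1 := red_deriv_zero α β γ Q hQ
  have h2 := red_deriv_zero α β γ _ hF
  rw [blue_eval, ← hinc, ← red_eval]
  unfold GG
  rw [map_sub, map_mul, map_mul, h1, h2]
  simp
  ring

theorem regulus (p : ℕ) [CharP K p] [Infinite K] (Q : MvPolynomial (Fin 3) K)
    (hp : 2 * Q.totalDegree < p) (α' β' γ' : K)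
    (hQ : blue α' β' γ' Q = 0) (hG : blue α' β' γ' (GG Q) = 0)
    (hZ : blue α' β' γ' (pderiv 2 Q) ≠ 0) :
    ∃ s t u v : K, ∀ α β γ : K, red α β γ Q = 0 → β * α' + γ = β' * α + γ' →
      (blue α' β' γ' (pderiv 2 Q)).eval α ≠ 0 → (β = s * α + t ∧ γ = u * α + v) := by
  have h1 := blue_GG α' β' γ' Q hQ
  rw [hG] at h1
  have h2 := (mul_eq_zero.1 h1.symm).resolve_left hZ
  obtain ⟨s, t, hst⟩ := ode p Q.totalDegree hp (blue α' β' γ' (pderiv 0 Q)) _ hZ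
    ((blue_natDegree _ _ _ _).trans ((totalDegree_pd _ _).trans (by omega)))
    ((blue_natDegree _ _ _ _).trans ((totalDegree_pd _ _).trans (by omega))) (sub_eq_zero.1 h2)
  refine ⟨-s, -t, β' + s * α', γ' + t * α', fun α β γ hr hinc hz => ?_⟩
  have h3 := congrArg (Polynomial.eval α') (red_deriv_zero α β γ Q hr)
  have h4 := congrArg (Polynomial.eval α) hst
  rw [red_eval, hinc, ← blue_eval, h4] at h3
  simp only [Polynomial.eval_mul, Polynomial.eval_neg, Polynomial.eval_C] at h3
  rw [red_eval, hinc, ← blue_eval] at h3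
  simp only [Polynomial.eval_add, Polynomial.eval_mul, Polynomial.eval_C, Polynomial.eval_X] at h3
  have h5 : s * α + t = - β := mul_right_cancel₀ hz h3
  constructor
  · linear_combination h5
  · linear_combination hinc - α' * h5

end core

section counting

open Classical in
/-- number of incident pairs -/
noncomputable def inc {ι κ : Type*} (r : ι → κ → Prop) (R : Finset ι) (B : Finset κ) : ℕ :=
  ∑ i ∈ R, ∑ j ∈ B, if r i j then 1 else 0

variable {ι κ : Type*} (r : ι → κ → Prop)

theorem inc_split_left (R : Finset ι) (B : Finset κ) (P : ι → Prop) [DecidablePred P] :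
    inc r R B = inc r (R.filter P) B + inc r (R.filter (fun i => ¬ P i)) B := by
  unfold inc
  rw [Finset.sum_filter_add_sum_filter_not]

theorem inc_split_right (R : Finset ι) (B : Finset κ) (P : κ → Prop) [DecidablePred P] :
    inc r R B = inc r R (B.filter P) + inc r R (B.filter (fun i => ¬ P i)) := by
  unfold inc
  rw [← Finset.sum_add_distrib]
  refine Finset.sum_congr rfl fun i _ => ?_
  rw [Finset.sum_filter_add_sum_filter_not]

open Classical in
theorem inc_le_left (R : Finset ι) (B : Finset κ) (M : ℕ)
    (h : ∀ i ∈ R, (B.filter (fun j => r i j)).card ≤ M) : inc r R B ≤ M * R.card := by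
  unfold inc
  calc _ ≤ ∑ i ∈ R, M := Finset.sum_le_sum fun i hi => by
        rw [Finset.sum_boole]; exact_mod_cast h i hi
    _ = _ := by simp [mul_comm]

open Classical in
theorem inc_le_right (R : Finset ι) (B : Finset κ) (M : ℕ)
    (h : ∀ j ∈ B, (R.filter (fun i => r i j)).card ≤ M) : inc r R B ≤ M * B.card := by
  unfold inc
  rw [Finset.sum_comm]
  calc _ ≤ ∑ i ∈ B, M := Finset.sum_le_sum fun i hi => by
        rw [Finset.sum_boole]; exact_mod_cast h i hi
    _ = _ := by simp [mul_comm]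

theorem inc_mono (R R' : Finset ι) (B B' : Finset κ) (h : R ⊆ R') (h' : B ⊆ B') :
    inc r R B ≤ inc r R' B' := by
  unfold inc
  exact (Finset.sum_le_sum fun i _ => Finset.sum_le_sum_of_subset h').trans
    (Finset.sum_le_sum_of_subset h)

theorem inc_pieces (s M : ℕ) (B : Finset κ) : ∀ (T : ℕ) (R : Finset ι), R.card ≤ T * s →
    (∀ R' ⊆ R, R'.card ≤ s → inc r R' B ≤ M) → inc r R B ≤ T * M := by
  classical
  intro T
  induction T with
  | zero =>
    intro R hR _
    have : R = ∅ := by simpa using hR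
    subst this
    simp [inc]
  | succ T ih =>
    intro R hR h
    by_cases hs : R.card ≤ s
    · have := h R (Finset.Subset.refl _) hs
      nlinarith
    · obtain ⟨R', hR', hc⟩ := Finset.exists_subset_card_eq (show s ≤ R.card by omega)
      have h1 := h R' hR' hc.le
      have h2 := ih (R \ R') (by rw [Finset.card_sdiff_of_subset hR', hc]; rw [add_mul] at hR; omega)
        (fun R'' h'' => h R'' (h''.trans Finset.sdiff_subset))
      have h3 : inc r R B = inc r (R \ R') B + inc r R' B := by
        unfold inc
        rw [Finset.sum_sdiff hR']
      rw [h3, add_mul]; omega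

end counting

theorem card_roots_le {K κ : Type*} [Field K] (f : Polynomial K) (hf : f ≠ 0) (a : κ → K)
    (ha : Function.Injective a) (S : Finset κ) (e : ℕ) (he : f.natDegree ≤ e)
    (hS : ∀ j ∈ S, f.eval (a j) = 0) : S.card ≤ e := by
  classical
  rw [← Finset.card_image_of_injective S ha]
  refine le_trans ?_ he
  refine le_trans ?_ (Polynomial.card_roots' f)
  refine le_trans (Finset.card_le_card ?_) (Multiset.toFinset_card_le _)
  intro x hx
  obtain ⟨j, hj, rfl⟩ := Finset.mem_image.1 hx
  simp [hf, hS j hj]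

section main
open MvPolynomial

variable {K ι κ : Type*} [Field K] (a b c : ι → K) (a' b' c' : κ → K)

def rel (i : ι) (j : κ) : Prop := b i * a' j + c i = b' j * a i + c' j

open Classical in
theorem red_count (ha' : Function.Injective a') (P : MvPolynomial (Fin 3) K) (e : ℕ) (he : P.totalDegree ≤ e) (i : ι)
    (hi : red (a i) (b i) (c i) P ≠ 0) (S : Finset κ)
    (hS : ∀ j ∈ S, rel a b c a' b' c' i j → (blue (a' j) (b' j) (c' j) P).eval (a i) = 0) :
    (S.filter (fun j => rel a b c a' b' c' i j)).card ≤ e := by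
  refine card_roots_le _ hi a' ha' _ e ((red_natDegree _ _ _ _).trans he) ?_
  intro j hj
  rw [Finset.mem_filter] at hj
  have h1 := hS j hj.1 hj.2
  have h2 := hj.2
  unfold rel at h2
  rw [red_eval, h2, ← blue_eval, h1]

open Classical in
theorem blue_count (ha : Function.Injective a) (P : MvPolynomial (Fin 3) K) (e : ℕ) (he : P.totalDegree ≤ e) (j : κ)
    (hj : blue (a' j) (b' j) (c' j) P ≠ 0) (S : Finset ι)
    (hS : ∀ i ∈ S, rel a b c a' b' c' i j → (red (a i) (b i) (c i) P).eval (a' j) = 0) :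
    (S.filter (fun i => rel a b c a' b' c' i j)).card ≤ e := by
  refine card_roots_le _ hj a ha _ e ((blue_natDegree _ _ _ _).trans he) ?_
  intro i hi
  rw [Finset.mem_filter] at hi
  have h1 := hS i hi.1 hi.2
  have h2 := hi.2
  unfold rel at h2
  rw [blue_eval, ← h2, ← red_eval, h1]

open Classical in
theorem smooth_bound (ha : Function.Injective a) (ha' : Function.Injective a')
    (p : ℕ) [CharP K p] [Infinite K] (k d : ℕ) (hd : 2 * d < p)
    (Q : MvPolynomial (Fin 3) K) (hQd : Q.totalDegree ≤ d) (R : Finset ι) (B : Finset κ)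
    (hk : ∀ s t u v : K, (R.filter (fun i => b i = s * a i + t ∧ c i = u * a i + v)).card ≤ k)
    (hR : ∀ i ∈ R, red (a i) (b i) (c i) Q = 0)
    (hB : ∀ j ∈ B, blue (a' j) (b' j) (c' j) Q = 0)
    (hZ : ∀ j ∈ B, blue (a' j) (b' j) (c' j) (pderiv 2 Q) ≠ 0) :
    inc (rel a b c a' b' c') R B ≤ (5 * d + k) * (R.card + B.card) := by
  set r := rel a b c a' b' c' with hr
  rw [inc_split_left r R B (fun i => red (a i) (b i) (c i) (FF Q) = 0)]
  set R1 := R.filter (fun i => red (a i) (b i) (c i) (FF Q) = 0) with hR1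
  have e1 : inc r (R.filter (fun i => ¬ red (a i) (b i) (c i) (FF Q) = 0)) B ≤ 3 * d * R.card := by
    refine (inc_le_left r _ _ (3 * d) ?_).trans
      (Nat.mul_le_mul_left _ (Finset.card_le_card (Finset.filter_subset _ _)))
    intro i hi
    rw [Finset.mem_filter] at hi
    refine red_count a b c a' b' c' ha' (FF Q) (3 * d) ((FF_deg Q).trans (by omega)) i hi.2 B ?_
    intro j hj _
    rw [blue_FF _ _ _ Q (hB j hj)]; simp
  rw [inc_split_right r R1 B (fun j => blue (a' j) (b' j) (c' j) (GG Q) = 0)]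
  have e2 : inc r R1 (B.filter (fun j => ¬ blue (a' j) (b' j) (c' j) (GG Q) = 0)) ≤
      4 * d * B.card := by
    refine (inc_le_right r _ _ (4 * d) ?_).trans
      (Nat.mul_le_mul_left _ (Finset.card_le_card (Finset.filter_subset _ _)))
    intro j hj
    rw [Finset.mem_filter] at hj
    refine blue_count a b c a' b' c' ha (GG Q) (4 * d) ((GG_deg Q).trans (by omega)) j hj.2 _ ?_
    intro i hi hij
    rw [hR1, Finset.mem_filter] at hi
    have := red_GG (a i) (b i) (c i) (a' j) (b' j) (c' j) Q (hR i hi.1) hi.2 hij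
    rw [blue_eval] at this
    unfold rel at hij
    rw [red_eval, hij, this]
  have e3 : inc r R1 (B.filter (fun j => blue (a' j) (b' j) (c' j) (GG Q) = 0)) ≤
      (d + k) * B.card := by
    refine (inc_le_right r _ _ (d + k) ?_).trans
      (Nat.mul_le_mul_left _ (Finset.card_le_card (Finset.filter_subset _ _)))
    intro j hj
    rw [Finset.mem_filter] at hj
    obtain ⟨s, t, u, v, hreg⟩ := regulus p Q (by omega) (a' j) (b' j) (c' j) (hB j hj.1) hj.2
      (hZ j hj.1)
    have f1 := hk s t u v
    have f2 := card_roots_le _ (hZ j hj.1) a ha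
      (R.filter (fun i => (blue (a' j) (b' j) (c' j) (pderiv 2 Q)).eval (a i) = 0)) d
      ((blue_natDegree _ _ _ _).trans ((totalDegree_pd _ _).trans (by omega))) (by simp)
    refine le_trans ?_ (add_le_add f2 f1)
    refine (Finset.card_le_card ?_).trans (Finset.card_union_le _ _)
    intro i hi
    rw [Finset.mem_filter, hR1, Finset.mem_filter] at hi
    rw [Finset.mem_union, Finset.mem_filter, Finset.mem_filter]
    by_cases hz : (blue (a' j) (b' j) (c' j) (pderiv 2 Q)).eval (a i) = 0
    · exact Or.inl ⟨hi.1.1, hz⟩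
    · exact Or.inr ⟨hi.1.1, hreg _ _ _ (hR i hi.1.1) hi.2 hz⟩
  have e4 : (5 * d + k) * (R.card + B.card) = 3 * d * R.card + 4 * d * B.card + (d + k) * B.card
    + (2 * (d * R.card) + k * R.card) := by ring
  omega

theorem arith1 {d k r r1 r2 b i1 i2 : ℕ} (h1 : i1 ≤ (6 * d + k) * (r1 + b)) (h2 : i2 ≤ d * r2)
    (h3 : r1 + r2 = r) : i1 + i2 ≤ (6 * (d + 1) + k) * (r + b) := by
  subst h3
  have : (6 * (d + 1) + k) * (r1 + r2 + b) = (6 * d + k) * (r1 + b) + d * r2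
    + (5 * (d * r2) + k * r2 + 6 * (r1 + r2 + b)) := by ring
  omega

theorem arith2 {d k r1 r2 b1 b2 i11 i12 i21 i22 : ℕ} (h1 : i11 ≤ (6 * d + k) * (r1 + b1))
    (h12 : i12 ≤ d * b2) (h21 : i21 ≤ d * r2) (h22 : i22 ≤ (5 * (d + 1) + k) * (r2 + b2)) :
    i11 + i12 + (i21 + i22) ≤ (6 * (d + 1) + k) * (r1 + r2 + (b1 + b2)) := by
  have : (6 * (d + 1) + k) * (r1 + r2 + (b1 + b2)) = (6 * d + k) * (r1 + b1) + d * b2 + d * r2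
    + (5 * (d + 1) + k) * (r2 + b2) + (6 * (r1 + b1) + r2 + b2) := by ring
  omega

theorem exists_pd_ne_zero (p : ℕ) [CharP K p] (Q : MvPolynomial (Fin 3) K)
    (hd : Q.totalDegree < p) (h : ∀ i, pderiv i Q = 0) : Q = C (coeff 0 Q) := by
  ext s
  rw [coeff_C]
  split_ifs with hs
  · rw [← hs]
  · obtain ⟨i, hi⟩ : ∃ i, s i ≠ 0 := by
      by_contra! hcon
      exact hs (Finsupp.ext (by simpa using hcon)).symm
    by_contra hne
    have h1 : s ∈ Q.support := mem_support_iff.2 hne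
    have h2 : s i ≤ Q.totalDegree := by
      refine le_trans ?_ (le_totalDegree h1)
      by_cases hsi : i ∈ s.support
      · exact Finset.single_le_sum (f := fun i => s i) (fun _ _ => Nat.zero_le _) hsi
      · simp at hsi; omega
    have h3 : coeff (s - Finsupp.single i 1) (pderiv i Q) = 0 := by rw [h i]; simp
    rw [coeff_pderiv] at h3
    have h4 : s - Finsupp.single i 1 + Finsupp.single i 1 = s := by
      ext l
      simp only [Finsupp.add_apply, Finsupp.tsub_apply, Finsupp.single_apply]
      split_ifs with hl
      · subst hl; omega
      · simp
    rw [h4] at h3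
    have h5 := (mul_eq_zero.1 h3).resolve_left hne
    have h6 : ((s i : ℕ) : K) = 0 := by
      rw [← h5]
      simp only [Finsupp.tsub_apply, Finsupp.single_apply, if_true]
      norm_cast
      congr 1; omega
    rw [CharP.cast_eq_zero_iff K p] at h6
    have := Nat.le_of_dvd (by omega) h6
    omega

open Classical in
theorem surface_bound (ha : Function.Injective a) (ha' : Function.Injective a')
    (p : ℕ) [CharP K p] [Infinite K] (k : ℕ) : ∀ d : ℕ, 2 * d < p →
    ∀ (Q : MvPolynomial (Fin 3) K), Q ≠ 0 → Q.totalDegree ≤ d → ∀ (R : Finset ι) (B : Finset κ),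
    (∀ s t u v : K, (R.filter (fun i => b i = s * a i + t ∧ c i = u * a i + v)).card ≤ k) →
    (∀ i ∈ R, red (a i) (b i) (c i) Q = 0) →
    (∀ j ∈ B, blue (a' j) (b' j) (c' j) Q = 0) →
    inc (rel a b c a' b' c') R B ≤ (6 * d + k) * (R.card + B.card) := by
  intro d
  set r := rel a b c a' b' c' with hr
  have hconst : ∀ (Q : MvPolynomial (Fin 3) K) (q : K), Q = C q → Q ≠ 0 → ∀ R : Finset ι,
      ∀ B : Finset κ, (∀ i ∈ R, red (a i) (b i) (c i) Q = 0) → inc r R B = 0 := by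
    intro Q q hq hQ R B h
    have : R = ∅ := by
      rw [Finset.eq_empty_iff_forall_notMem]
      intro i hi
      have := h i hi
      rw [hq] at this hQ
      unfold red at this
      simp only [algHom_C, Polynomial.algebraMap_eq, Polynomial.C_eq_zero] at this
      rw [this] at hQ
      simp at hQ
    subst this
    simp [inc]
  induction d with
  | zero =>
    intro _ Q hQ hQd R B _ hR _
    rw [hconst Q _ (totalDegree_eq_zero_iff_eq_C.1 (Nat.le_zero.1 hQd)) hQ R B hR]
    exact Nat.zero_le _
  | succ d ih =>
    intro hd Q hQ hQd R B hk hR hB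
    have ih := ih (by omega)
    have hk' : ∀ R' ⊆ R, ∀ s t u v : K, (R'.filter
        (fun i => b i = s * a i + t ∧ c i = u * a i + v)).card ≤ k := by
      intro R' hR' s t u v
      refine (Finset.card_le_card ?_).trans (hk s t u v)
      exact Finset.filter_subset_filter _ hR'
    have hpd : ∀ i, (pderiv i Q).totalDegree ≤ d := fun i =>
      (totalDegree_pd i Q).trans (by omega)
    by_cases hZ : pderiv 2 Q = 0
    · by_cases hX : pderiv 0 Q = 0
      · by_cases hY : pderiv 1 Q = 0
        · rw [hconst Q _ (exists_pd_ne_zero p Q (by omega)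
            (Fin.forall_fin_succ.2 ⟨hX, Fin.forall_fin_succ.2 ⟨hY, Fin.forall_fin_one.2 hZ⟩⟩)) hQ R B hR]
          exact Nat.zero_le _
        · rw [inc_split_left r R B (fun i => red (a i) (b i) (c i) (pderiv 1 Q) = 0)]
          have hB' : ∀ j ∈ B, blue (a' j) (b' j) (c' j) (pderiv 1 Q) = 0 := fun j hj => by
            rw [blue_deriv_zero _ _ _ _ (hB j hj), hZ]; simp
          have e1 := ih (pderiv 1 Q) hY (hpd 1)
            (R.filter (fun i => red (a i) (b i) (c i) (pderiv 1 Q) = 0)) B (hk' _ (Finset.filter_subset _ _)) (by simp) hB'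
          have e2 := inc_le_left r (R.filter (fun i => ¬ red (a i) (b i) (c i) (pderiv 1 Q) = 0)) B
            d (by
              intro i hi
              rw [Finset.mem_filter] at hi
              exact red_count a b c a' b' c' ha' _ d (hpd 1) i hi.2 B
                (fun j hj _ => by rw [hB' j hj]; simp))
          have e3 := Finset.card_filter_add_card_filter_not (s := R)
            (fun i => red (a i) (b i) (c i) (pderiv 1 Q) = 0)
          exact arith1 e1 e2 e3
      · rw [inc_split_right r R B (fun j => blue (a' j) (b' j) (c' j) (pderiv 0 Q) = 0)]
        have hR' : ∀ i ∈ R, red (a i) (b i) (c i) (pderiv 0 Q) = 0 := fun j hj => by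
          rw [red_deriv_zero _ _ _ _ (hR j hj), hZ]; simp
        have e1 := ih (pderiv 0 Q) hX (hpd 0) R
          (B.filter (fun j => blue (a' j) (b' j) (c' j) (pderiv 0 Q) = 0)) hk hR' (by simp)
        have e2 := inc_le_right r R (B.filter (fun j => ¬ blue (a' j) (b' j) (c' j) (pderiv 0 Q) = 0))
          d (by
            intro j hj
            rw [Finset.mem_filter] at hj
            exact blue_count a b c a' b' c' ha _ d (hpd 0) j hj.2 R
              (fun j hj _ => by rw [hR' j hj]; simp))
        have e3 := Finset.card_filter_add_card_filter_not (s := B)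
          (fun j => blue (a' j) (b' j) (c' j) (pderiv 0 Q) = 0)
        rw [add_comm R.card] at e1 ⊢
        exact arith1 e1 e2 e3
    · rw [inc_split_left r R B (fun i => red (a i) (b i) (c i) (pderiv 2 Q) = 0)]
      rw [inc_split_right r _ B (fun j => blue (a' j) (b' j) (c' j) (pderiv 2 Q) = 0),
        inc_split_right r (R.filter (fun i => ¬ red (a i) (b i) (c i) (pderiv 2 Q) = 0)) B
          (fun j => blue (a' j) (b' j) (c' j) (pderiv 2 Q) = 0)]
      set R1 := R.filter (fun i => red (a i) (b i) (c i) (pderiv 2 Q) = 0)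
      set R2 := R.filter (fun i => ¬ red (a i) (b i) (c i) (pderiv 2 Q) = 0)
      set B1 := B.filter (fun j => blue (a' j) (b' j) (c' j) (pderiv 2 Q) = 0)
      set B2 := B.filter (fun j => ¬ blue (a' j) (b' j) (c' j) (pderiv 2 Q) = 0)
      have e3 : R1.card + R2.card = R.card := Finset.card_filter_add_card_filter_not (s := R)
            (fun i => red (a i) (b i) (c i) (pderiv 2 Q) = 0)
      have e4 : B1.card + B2.card = B.card := Finset.card_filter_add_card_filter_not (s := B)
          (fun j => blue (a' j) (b' j) (c' j) (pderiv 2 Q) = 0)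
      have f11 : inc r R1 B1 ≤ _ := ih (pderiv 2 Q) hZ (hpd 2) R1 B1 (hk' _ (Finset.filter_subset _ _))
        (fun i hi => (Finset.mem_filter.1 hi).2) (fun i hi => (Finset.mem_filter.1 hi).2)
      have f22 : inc r R2 B2 ≤ _ := smooth_bound a b c a' b' c' ha ha' p k (d + 1) hd Q hQd R2 B2
        (hk' _ (Finset.filter_subset _ _)) (fun i hi => hR i (Finset.mem_filter.1 hi).1)
        (fun i hi => hB i (Finset.mem_filter.1 hi).1) (fun i hi => (Finset.mem_filter.1 hi).2)
      have f12 := inc_le_right r R1 B2 d (by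
            intro j hj
            exact blue_count a b c a' b' c' ha _ d (hpd 2) j (Finset.mem_filter.1 hj).2 R1
              (fun i hi _ => by rw [(Finset.mem_filter.1 hi).2]; simp))
      have f21 := inc_le_left r R2 B1 d (by
            intro j hj
            exact red_count a b c a' b' c' ha' _ d (hpd 2) j (Finset.mem_filter.1 hj).2 B1
              (fun i hi _ => by rw [(Finset.mem_filter.1 hi).2]; simp))
      rw [← e3, ← e4]
      exact arith2 f11 f12 f21 f22

end main

section exist
open MvPolynomial

variable {K ι κ : Type*} [Field K] (a b c : ι → K) (a' b' c' : κ → K)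

/-- exponent vectors in a box -/
noncomputable def expo (m : ℕ) (x : Fin m × Fin m × Fin m) : Fin 3 →₀ ℕ :=
  Finsupp.equivFunOnFinite.symm ![(x.1 : ℕ), (x.2.1 : ℕ), (x.2.2 : ℕ)]

theorem expo_inj (m : ℕ) : Function.Injective (expo m) := by
  intro x y h
  have h' := Finsupp.equivFunOnFinite.symm.injective h
  have h0 := congrFun h' 0
  have h1 := congrFun h' 1
  have h2 := congrFun h' 2
  simp at h0 h1 h2
  ext
  · exact h0
  · exact h1
  · exact h2

theorem exists_poly (R : Finset ι) (m : ℕ) (hm : 3 * R.card < m ^ 2) :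
    ∃ Q : MvPolynomial (Fin 3) K, Q ≠ 0 ∧ Q.totalDegree ≤ 3 * m ∧
      ∀ i ∈ R, red (a i) (b i) (c i) Q = 0 := by
  classical
  have hm0 : 0 < m := by
    rcases Nat.eq_zero_or_pos m with h | h
    · subst h; simp at hm
    · exact h
  let Φ : (Fin m × Fin m × Fin m → K) →ₗ[K] MvPolynomial (Fin 3) K :=
    ∑ x, (monomial (expo m x)).comp (LinearMap.proj x)
  have hΦ : ∀ w, Φ w = ∑ x, monomial (expo m x) (w x) := by
    intro w; simp [Φ]
  have hdeg : ∀ w, (Φ w).totalDegree < 3 * m := by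
    intro w
    rw [hΦ]
    refine lt_of_le_of_lt (totalDegree_finsetSum_le (d := 3 * (m - 1)) ?_) (by omega)
    intro x _
    refine (totalDegree_monomial_le _ _).trans ?_
    rw [Finsupp.sum_fintype _ _ (by simp), Fin.sum_univ_three]
    simp [expo]
    omega
  let Ψ : (Fin m × Fin m × Fin m → K) →ₗ[K] (R × Fin (3 * m) → K) :=
    LinearMap.pi fun x => (Polynomial.lcoeff K x.2).comp
      ((red (a x.1) (b x.1) (c x.1)).toLinearMap.comp Φ)
  have hker : LinearMap.ker Ψ ≠ ⊥ := by
    apply LinearMap.ker_ne_bot_of_finrank_lt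
    simp only [Module.finrank_fintype_fun_eq_card, Fintype.card_prod, Fintype.card_fin,
      Fintype.card_coe]
    nlinarith
  obtain ⟨w, hw, hw0⟩ := (Submodule.ne_bot_iff _).1 hker
  refine ⟨Φ w, ?_, (hdeg w).le, ?_⟩
  · intro h0
    apply hw0
    ext x
    have := congrArg (coeff (expo m x)) h0
    rw [hΦ, coeff_sum] at this
    simpa [coeff_monomial, (expo_inj m).eq_iff] using this
  · intro i hi
    ext n
    by_cases hn : n < 3 * m
    · have := congrFun (LinearMap.mem_ker.1 hw) (⟨i, hi⟩, ⟨n, hn⟩)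
      simpa [Ψ] using this
    · rw [Polynomial.coeff_zero]
      apply Polynomial.coeff_eq_zero_of_natDegree_lt
      have := red_natDegree (a i) (b i) (c i) (Φ w)
      have := hdeg w
      omega

open Classical in
theorem inc_bound (ha : Function.Injective a) (ha' : Function.Injective a')
    (p : ℕ) [CharP K p] [Infinite K] (k m : ℕ) (R : Finset ι) (B : Finset κ)
    (hm : 3 * R.card < m ^ 2) (hp : 6 * m < p)
    (hk : ∀ s t u v : K, (R.filter (fun i => b i = s * a i + t ∧ c i = u * a i + v)).card ≤ k) :
    inc (rel a b c a' b' c') R B ≤ (21 * m + k) * (R.card + B.card) := by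
  obtain ⟨Q, hQ, hQd, hQR⟩ := exists_poly a b c R m hm
  set r := rel a b c a' b' c' with hr
  rw [inc_split_right r R B (fun j => blue (a' j) (b' j) (c' j) Q = 0)]
  have e1 : inc r R (B.filter (fun j => blue (a' j) (b' j) (c' j) Q = 0)) ≤ _ :=
    surface_bound a b c a' b' c' ha ha' p k (3 * m) (by omega) Q hQ hQd R
    (B.filter (fun j => blue (a' j) (b' j) (c' j) Q = 0)) hk hQR
    (fun j hj => (Finset.mem_filter.1 hj).2)
  have e2 := inc_le_right r R (B.filter (fun j => ¬ blue (a' j) (b' j) (c' j) Q = 0)) (3 * m) (by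
    intro j hj
    exact blue_count a b c a' b' c' ha _ _ hQd j (Finset.mem_filter.1 hj).2 R
      (fun i hi _ => by rw [hQR i hi]; simp))
  have e3 : (B.filter (fun j => blue (a' j) (b' j) (c' j) Q = 0)).card
    + (B.filter (fun j => ¬ blue (a' j) (b' j) (c' j) Q = 0)).card = B.card :=
    Finset.card_filter_add_card_filter_not (s := B) (fun j => blue (a' j) (b' j) (c' j) Q = 0)
  rw [← e3]
  generalize (B.filter (fun j => blue (a' j) (b' j) (c' j) Q = 0)).card = b1 at *
  generalize (B.filter (fun j => ¬ blue (a' j) (b' j) (c' j) Q = 0)).card = b2 at *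
  have : (21 * m + k) * (R.card + (b1 + b2)) = (6 * (3 * m) + k) * (R.card + b1) + 3 * m * b2
    + (3 * m * (R.card + b1) + (18 * m + k) * b2) := by ring
  omega

end exist

section application

theorem det_zero {K : Type*} [Field K] (A1 A2 B1 B2 C1 C2 w0 w1 w2 l0 l1 l2 x0 x1 x2 z0 z1 z2 : K)
    (h0 : 1 = A1 * w0 + A2 * l0) (h1 : 1 = A1 * w1 + A2 * l1) (h2 : 1 = A1 * w2 + A2 * l2)
    (hx0 : x0 = B1 * w0 + B2 * l0) (hx1 : x1 = B1 * w1 + B2 * l1) (hx2 : x2 = B1 * w2 + B2 * l2)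
    (hz0 : z0 = C1 * w0 + C2 * l0) (hz1 : z1 = C1 * w1 + C2 * l1) (hz2 : z2 = C1 * w2 + C2 * l2) :
    (x1 - x0) * (z2 - z0) = (x2 - x0) * (z1 - z0) := by
  subst hx0 hx1 hx2 hz0 hz1 hz2
  linear_combination ((B1 * w1 + B2 * l1) * (C1 * w2 + C2 * l2)
      - (B1 * w2 + B2 * l2) * (C1 * w1 + C2 * l1)) * h0
    - ((B1 * w0 + B2 * l0) * (C1 * w2 + C2 * l2)
      - (B1 * w2 + B2 * l2) * (C1 * w0 + C2 * l0)) * h1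
    + ((B1 * w0 + B2 * l0) * (C1 * w1 + C2 * l1)
      - (B1 * w1 + B2 * l1) * (C1 * w0 + C2 * l0)) * h2

theorem collinear_card {F : Type*} [Field F] (S : Finset (F × F × F)) (P Y A : Finset F) (k : ℕ)
    (hS : ∀ q ∈ S, q.1 ∈ P ∧ q.2.1 ∈ Y ∧ q.2.2 ∈ A) (hP : P.card ≤ k) (hY : Y.card ≤ k)
    (hA : A.card ≤ k)
    (hxy : ∀ q ∈ S, ∀ q' ∈ S, ∀ t ∈ S, (q'.1 - q.1) * (t.2.1 - q.2.1) = (t.1 - q.1) * (q'.2.1 - q.2.1))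
    (hxz : ∀ q ∈ S, ∀ q' ∈ S, ∀ t ∈ S, (q'.1 - q.1) * (t.2.2 - q.2.2) = (t.1 - q.1) * (q'.2.2 - q.2.2))
    (hyz : ∀ q ∈ S, ∀ q' ∈ S, ∀ t ∈ S,
      (q'.2.1 - q.2.1) * (t.2.2 - q.2.2) = (t.2.1 - q.2.1) * (q'.2.2 - q.2.2)) : S.card ≤ k := by
  by_cases h1 : ∃ q0 ∈ S, ∃ q1 ∈ S, q0.1 ≠ q1.1
  · obtain ⟨q0, hq0, q1, hq1, hne⟩ := h1
    refine (Finset.card_le_card_of_injOn (fun q => q.1) (fun q hq => (hS q hq).1) ?_).trans hP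
    intro s hs s' hs' heq
    simp only at heq
    obtain ⟨t, ht, htne⟩ : ∃ t ∈ S, t.1 - s.1 ≠ 0 := by
      by_cases h : q0.1 = s.1
      · exact ⟨q1, hq1, sub_ne_zero.2 (fun h' => hne (h.trans h'.symm))⟩
      · exact ⟨q0, hq0, sub_ne_zero.2 h⟩
    have e1 := hxy s hs s' hs' t ht
    have e2 := hxz s hs s' hs' t ht
    rw [heq, sub_self, zero_mul, ← heq] at e1 e2
    have e3 := (mul_eq_zero.1 e1.symm).resolve_left htne
    have e4 := (mul_eq_zero.1 e2.symm).resolve_left htne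
    exact Prod.ext heq (Prod.ext (sub_eq_zero.1 e3).symm (sub_eq_zero.1 e4).symm)
  · push Not at h1
    by_cases h2 : ∃ q0 ∈ S, ∃ q1 ∈ S, q0.2.1 ≠ q1.2.1
    · obtain ⟨q0, hq0, q1, hq1, hne⟩ := h2
      refine (Finset.card_le_card_of_injOn (fun q => q.2.1) (fun q hq => (hS q hq).2.1) ?_).trans hY
      intro s hs s' hs' heq
      simp only at heq
      obtain ⟨t, ht, htne⟩ : ∃ t ∈ S, t.2.1 - s.2.1 ≠ 0 := by
        by_cases h : q0.2.1 = s.2.1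
        · exact ⟨q1, hq1, sub_ne_zero.2 (fun h' => hne (h.trans h'.symm))⟩
        · exact ⟨q0, hq0, sub_ne_zero.2 h⟩
      have e2 := hyz s hs s' hs' t ht
      rw [heq, sub_self, zero_mul, ← heq] at e2
      have e4 := (mul_eq_zero.1 e2.symm).resolve_left htne
      exact Prod.ext (h1 s hs s' hs') (Prod.ext heq (sub_eq_zero.1 e4).symm)
    · push Not at h2
      refine (Finset.card_le_card_of_injOn (fun q => q.2.2) (fun q hq => (hS q hq).2.2) ?_).trans hA
      intro s hs s' hs' heq
      exact Prod.ext (h1 s hs s' hs') (Prod.ext (h2 s hs s' hs') heq)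

variable {F : Type*} [Field F]

open Polynomial in
noncomputable def w1 (q : F × F × F) : RatFunc F := algebraMap F[X] (RatFunc F) (1 + C q.1 * X ^ 4)
open Polynomial in
noncomputable def l1 (q : F × F × F) : RatFunc F :=
  algebraMap F[X] (RatFunc F) (C q.2.1 + C q.1 * X + C q.2.2 * X ^ 2)
open Polynomial in
noncomputable def w2 (q : F × F × F) : RatFunc F :=
  algebraMap F[X] (RatFunc F) (1 + C q.2.1 * X ^ 2)
open Polynomial in
noncomputable def l2 (q : F × F × F) : RatFunc F :=
  algebraMap F[X] (RatFunc F) (C q.1 - C q.2.1 * X + C q.2.2 * X ^ 4)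
open Polynomial in
noncomputable def em (x : F) : RatFunc F := algebraMap F[X] (RatFunc F) (C x)

theorem w1_ne (q : F × F × F) : w1 q ≠ 0 := by
  unfold w1
  rw [Ne, map_eq_zero_iff _ (RatFunc.algebraMap_injective F)]
  intro h
  have := congrArg (Polynomial.coeff · 0) h
  simp at this

theorem w2_ne (q : F × F × F) : w2 q ≠ 0 := by
  unfold w2
  rw [Ne, map_eq_zero_iff _ (RatFunc.algebraMap_injective F)]
  intro h
  have := congrArg (Polynomial.coeff · 0) h
  simp at this

open Polynomial in
theorem inj1 : Function.Injective (fun q : F × F × F => l1 q / w1 q) := by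
  intro q q' h
  simp only at h
  rw [div_eq_div_iff (w1_ne _) (w1_ne _)] at h
  unfold l1 w1 at h
  rw [← map_mul, ← map_mul] at h
  have h := RatFunc.algebraMap_injective F h
  have e : ∀ q q' : F × F × F, (C q.2.1 + C q.1 * X + C q.2.2 * X ^ 2 : F[X]) * (1 + C q'.1 * X ^ 4)
    = C q.2.1 + C q.1 * X ^ 1 + C q.2.2 * X ^ 2 + C (q.2.1 * q'.1) * X ^ 4 + C (q.1 * q'.1) * X ^ 5
      + C (q.2.2 * q'.1) * X ^ 6 := by
    intro q q'
    simp only [C_mul]; ring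
  rw [e, e] at h
  have h0 := congrArg (coeff · 0) h
  have h1 := congrArg (coeff · 1) h
  have h2 := congrArg (coeff · 2) h
  simp only [coeff_add, coeff_C_mul, coeff_X_pow, coeff_C] at h0 h1 h2
  norm_num at h0 h1 h2
  exact Prod.ext h1 (Prod.ext h0 h2)

open Polynomial in
theorem inj2 : Function.Injective (fun q : F × F × F => l2 q / w2 q) := by
  intro q q' h
  simp only at h
  rw [div_eq_div_iff (w2_ne _) (w2_ne _)] at h
  unfold l2 w2 at h
  rw [← map_mul, ← map_mul] at h
  have h := RatFunc.algebraMap_injective F h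
  have e : ∀ q q' : F × F × F, (C q.1 - C q.2.1 * X + C q.2.2 * X ^ 4 : F[X]) * (1 + C q'.2.1 * X ^ 2)
    = C q.1 - C q.2.1 * X ^ 1 + C (q.1 * q'.2.1) * X ^ 2 - C (q.2.1 * q'.2.1) * X ^ 3
      + C (q.2.2) * X ^ 4 + C (q.2.2 * q'.2.1) * X ^ 6 := by
    intro q q'
    simp only [C_mul]; ring
  rw [e, e] at h
  have h0 := congrArg (coeff · 0) h
  have h1 := congrArg (coeff · 1) h
  have h2 := congrArg (coeff · 4) h
  simp only [coeff_add, coeff_sub, coeff_C_mul, coeff_X_pow, coeff_C] at h0 h1 h2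
  norm_num at h0 h1 h2
  exact Prod.ext h0 (Prod.ext h1 h2)

theorem em_inj : Function.Injective (em : F → RatFunc F) :=
  (RatFunc.algebraMap_injective F).comp Polynomial.C_injective

theorem em_sub (x y : F) : em (x - y) = em x - em y := by simp [em]
theorem em_add (x y : F) : em (x + y) = em x + em y := by simp [em]
theorem em_mul (x y : F) : em (x * y) = em x * em y := by simp [em]

/-- the incidence relation used for the energy -/
def therel : F × F × F → F × F × F → Prop :=
  rel (fun q : F × F × F => l1 q / w1 q) (fun q => em q.1 / w1 q) (fun q => - em q.2.2 / w1 q)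
    (fun q : F × F × F => l2 q / w2 q) (fun q => - em q.2.1 / w2 q) (fun q => em q.2.2 / w2 q)

theorem therel_of (q q' : F × F × F) (h : q.1 * q'.1 + q.2.1 * q'.2.1 = q.2.2 + q'.2.2) :
    therel q q' := by
  unfold therel rel
  have h1 := w1_ne q
  have h2 := w2_ne q'
  have h3 := congrArg em h
  simp only [em_add, em_mul] at h3
  simp only
  field_simp
  simp only [em] at h3 ⊢
  simp only [w1, l1, w2, l2, map_add, map_sub, map_mul, map_pow, map_one]
  linear_combination h3

theorem class_card (P Y A : Finset F) (k : ℕ) (hP : P.card ≤ k) (hY : Y.card ≤ k)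
    (hA : A.card ≤ k) (S : Finset (F × F × F)) (hS : ∀ q ∈ S, q.1 ∈ P ∧ q.2.1 ∈ Y ∧ q.2.2 ∈ A)
    (s t u v : RatFunc F)
    (h : ∀ q ∈ S, em q.1 / w1 q = s * (l1 q / w1 q) + t ∧ - em q.2.2 / w1 q = u * (l1 q / w1 q) + v) :
    S.card ≤ k := by
  set τ : RatFunc F := algebraMap (Polynomial F) (RatFunc F) Polynomial.X with hτ
  have hw : ∀ q : F × F × F, w1 q = 1 + em q.1 * τ ^ 4 := fun q => by simp [w1, em, hτ]
  have hl : ∀ q : F × F × F, l1 q = em q.2.1 + em q.1 * τ + em q.2.2 * τ ^ 2 := fun q => by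
    simp [l1, em, hτ]
  have hx : ∀ q ∈ S, em q.1 = t * w1 q + s * l1 q := by
    intro q hq
    have h1 := (h q hq).1
    have := w1_ne q
    field_simp at h1
    linear_combination h1
  have hz : ∀ q ∈ S, em q.2.2 = (-v) * w1 q + (-u) * l1 q := by
    intro q hq
    have h1 := (h q hq).2
    have := w1_ne q
    field_simp at h1
    linear_combination -h1
  have ho : ∀ q ∈ S, 1 = (1 - τ ^ 4 * t) * w1 q + (- τ ^ 4 * s) * l1 q := by
    intro q hq
    linear_combination (- hw q) - τ ^ 4 * hx q hq
  have hy : ∀ q ∈ S, em q.2.1 = (- τ * t + τ ^ 2 * v) * w1 q + (1 - τ * s + τ ^ 2 * u) * l1 q := by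
    intro q hq
    linear_combination (- hl q) - τ * hx q hq - τ ^ 2 * hz q hq
  refine collinear_card S P Y A k hS hP hY hA ?_ ?_ ?_ <;> intro q hq q' hq' r hr <;>
    apply em_inj <;> simp only [em_mul, em_sub]
  · exact det_zero _ _ _ _ _ _ _ _ _ _ _ _ _ _ _ _ _ _ (ho q hq) (ho q' hq') (ho r hr)
      (hx q hq) (hx q' hq') (hx r hr) (hy q hq) (hy q' hq') (hy r hr)
  · exact det_zero _ _ _ _ _ _ _ _ _ _ _ _ _ _ _ _ _ _ (ho q hq) (ho q' hq') (ho r hr)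
      (hx q hq) (hx q' hq') (hx r hr) (hz q hq) (hz q' hq') (hz r hr)
  · exact det_zero _ _ _ _ _ _ _ _ _ _ _ _ _ _ _ _ _ _ (ho q hq) (ho q' hq') (ho r hr)
      (hy q hq) (hy q' hq') (hy r hr) (hz q hq) (hz q' hq') (hz r hr)

/-- Rudnev-type bound in product form -/
theorem product_bound (p : ℕ) [CharP F p] (P Y A : Finset F) (k : ℕ) (hP : P.card ≤ k)
    (hY : Y.card ≤ k) (hA : A.card ≤ k) (m s T : ℕ) (hm : 3 * s < m ^ 2) (hp : 6 * m < p)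
    (hT : P.card * (Y.card * A.card) ≤ T * s) :
    inc (therel (F := F)) (P ×ˢ (Y ×ˢ A)) (Y ×ˢ (P ×ˢ A)) ≤
      T * ((21 * m + k) * (2 * (P.card * (Y.card * A.card)))) := by
  classical
  have : CharP (RatFunc F) p :=
    charP_of_injective_ringHom (f := (algebraMap (Polynomial F) (RatFunc F)).comp Polynomial.C)
      ((RatFunc.algebraMap_injective F).comp Polynomial.C_injective) p
  have : Infinite (RatFunc F) := Infinite.of_injective _ (RatFunc.algebraMap_injective F)
  apply inc_pieces _ s _ _ T
  · simpa [Finset.card_product] using hT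
  · intro R' hR' hs
    have h1 := inc_bound _ (fun q => em q.1 / w1 q) (fun q => - em q.2.2 / w1 q) _
      (fun q => - em q.2.1 / w2 q) (fun q => em q.2.2 / w2 q) (inj1 (F := F)) (inj2 (F := F)) p k m R'
      (Y ×ˢ (P ×ˢ A)) (by omega) hp (by
        intro s t u v
        refine class_card P Y A k hP hY hA _ ?_ s t u v ?_
        · intro q hq
          have := hR' (Finset.mem_filter.1 hq).1
          simpa using this
        · intro q hq
          exact (Finset.mem_filter.1 hq).2)
    refine h1.trans (Nat.mul_le_mul_left _ ?_)
    have h2 := Finset.card_le_card hR'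
    simp only [Finset.card_product] at h2 ⊢
    have : Y.card * (P.card * A.card) = P.card * (Y.card * A.card) := by ring
    omega

theorem energy_le_inc [DecidableEq F] (A : Finset F) :
    (A.erase 0).card ^ 2 * (((A ×ˢ A) ×ˢ (A ×ˢ A)).filter
      (fun q => q.1.1 + q.1.2 = q.2.1 + q.2.2)).card ≤
    inc (therel (F := F)) ((A * A) ×ˢ (((A.erase 0).image (·⁻¹)) ×ˢ A))
      (((A.erase 0).image (·⁻¹)) ×ˢ ((A * A) ×ˢ A)) := by
  set Y := (A.erase 0).image (·⁻¹) with hY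
  have hYc : Y.card = (A.erase 0).card := Finset.card_image_of_injective _ inv_injective
  have hYm : ∀ y ∈ Y, y ≠ 0 ∧ y⁻¹ ∈ A := by
    intro y hy
    obtain ⟨z, hz, rfl⟩ := Finset.mem_image.1 hy
    rw [Finset.mem_erase] at hz
    exact ⟨inv_ne_zero hz.1, by simpa using hz.2⟩
  unfold inc
  rw [← Finset.sum_product', Finset.sum_boole, pow_two, ← hYc, ← Finset.card_product,
    ← Finset.card_product]
  simp only [Nat.cast_id]
  refine Finset.card_le_card_of_injOn (fun x : (F × F) × ((F × F) × (F × F)) =>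
    ((x.2.1.1 * x.1.1⁻¹, x.1.2, x.2.2.1), (x.1.1, x.2.1.2 * x.1.2⁻¹, x.2.2.2))) ?_ ?_
  · rintro ⟨⟨x, y⟩, ⟨⟨a, b⟩, ⟨c, d⟩⟩⟩ h
    simp only [Finset.coe_filter, Finset.coe_product, Set.mem_prod, Finset.mem_coe,
      Finset.mem_product, Set.mem_ofPred_eq] at h ⊢
    obtain ⟨⟨hx, hy⟩, ⟨⟨ha, hb⟩, hc, hd⟩, he⟩ := h
    refine ⟨⟨⟨Finset.mul_mem_mul ha (hYm x hx).2, hy, hc⟩,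
      hx, Finset.mul_mem_mul hb (hYm y hy).2, hd⟩, ?_⟩
    apply therel_of
    have h1 := (hYm x hx).1
    have h2 := (hYm y hy).1
    simp only
    field_simp
    exact he
  · rintro ⟨⟨x, y⟩, ⟨⟨a, b⟩, ⟨c, d⟩⟩⟩ h ⟨⟨x', y'⟩, ⟨⟨a', b'⟩, ⟨c', d'⟩⟩⟩ h' heq
    simp only [Finset.coe_filter, Finset.coe_product, Set.mem_prod, Finset.mem_coe,
      Finset.mem_product, Set.mem_ofPred_eq] at h h'
    simp only [Prod.mk.injEq] at heq ⊢
    obtain ⟨⟨h1, h2, h3⟩, h4, h5, h6⟩ := heq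
    subst h2 h3 h4 h6
    have e1 := inv_ne_zero (hYm x h.1.1).1
    have e2 := inv_ne_zero (hYm y h.1.2).1
    exact ⟨⟨rfl, rfl⟩, ⟨mul_right_cancel₀ e1 h1, mul_right_cancel₀ e2 h5⟩, rfl, rfl⟩

end application

section final

theorem le_of_sq_le_sq_aux {x y : ℝ} (h : x ^ 2 ≤ y ^ 2) (hy : 0 ≤ y) : x ≤ y :=
  abs_le_of_sq_le_sq h hy |> (le_abs_self x).trans

theorem energy_trivial {F : Type*} [Field F] [DecidableEq F] (A : Finset F) :
    (((A ×ˢ A) ×ˢ (A ×ˢ A)).filter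
      (fun q => q.1.1 + q.1.2 = q.2.1 + q.2.2)).card ≤ A.card ^ 3 := by
  have h : A.card ^ 3 = ((A ×ˢ A) ×ˢ A).card := by
    simp only [Finset.card_product]; ring
  rw [h]
  refine Finset.card_le_card_of_injOn (fun q => (q.1, q.2.1)) ?_ ?_
  · rintro ⟨⟨a, b⟩, c, d⟩ hq
    have := (Finset.mem_filter.1 hq).1
    simp only [Finset.mem_product] at this
    simp [this]
  · rintro ⟨⟨a, b⟩, c, d⟩ hq ⟨⟨a', b'⟩, c', d'⟩ hq' heq
    have h1 := (Finset.mem_filter.1 hq).2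
    have h2 := (Finset.mem_filter.1 hq').2
    simp only [Prod.mk.injEq] at heq h1 h2 ⊢
    obtain ⟨⟨rfl, rfl⟩, rfl⟩ := heq
    exact ⟨⟨rfl, rfl⟩, rfl, add_left_cancel (h1.symm.trans h2)⟩

/-- the arithmetic at the end -/
theorem arith (C : ℝ) (hC : 0 < C) (T p n q n' E : ℕ) (hT : 1000 * C ≤ T) (hT1 : 1 ≤ T)
    (hp : 100 ≤ p) (hn : 2 ≤ n) (hn1 : n' ≤ n) (hn2 : n ≤ n' + 1) (hnq : n ≤ q) (hq : q ≤ n ^ 2)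
    (hyp : (n : ℝ) ^ 2 * q ≤ C * (p : ℝ) ^ 2)
    (main : ∀ m s : ℕ, 3 * s < m ^ 2 → 6 * m < p → q * (n' * n) ≤ T * s →
      n' ^ 2 * E ≤ T * ((21 * m + q) * (2 * (q * (n' * n))))) :
    (E : ℝ) ≤ 340 * T * (q : ℝ) ^ ((3 : ℝ) / 2) * n := by
  set N := q * (n' * n) with hN
  set s := N / T + 1 with hs
  set m := Nat.sqrt (3 * s) + 1 with hm
  have hTpos : (0 : ℝ) < T := by exact_mod_cast hT1
  have hn'1 : 1 ≤ n' := by omega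
  have hNn : N ≤ q * n ^ 2 := by
    rw [hN, pow_two]; gcongr
  have hNR : (N : ℝ) ≤ q * (n : ℝ) ^ 2 := by exact_mod_cast hNn
  have hN1 : 1 ≤ N := by
    rw [hN]
    have : 0 < q * (n' * n) := Nat.mul_pos (by omega) (Nat.mul_pos (by omega) (by omega))
    omega
  have h1 : 3 * s < m ^ 2 := by rw [pow_two]; exact Nat.lt_succ_sqrt _
  have hsq : (Nat.sqrt (3 * s)) ^ 2 ≤ 3 * s := Nat.sqrt_le' _
  have hsN : (s : ℝ) ≤ N / T + 1 := by
    rw [hs]; push_cast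
    have := @Nat.cast_div_le ℝ _ _ _ N T
    linarith
  have hpR : (100 : ℝ) ≤ p := by exact_mod_cast hp
  have hNp : (N : ℝ) / T ≤ (p : ℝ) ^ 2 / 1000 := by
    rw [div_le_div_iff₀ hTpos (by norm_num)]
    have : (N : ℝ) ≤ C * (p : ℝ) ^ 2 := by linarith
    nlinarith [sq_nonneg (p : ℝ)]
  have hsqR : ((Nat.sqrt (3 * s) : ℕ) : ℝ) ^ 2 ≤ 3 * s := by exact_mod_cast hsq
  have h2 : 6 * m < p := by
    have : (6 : ℝ) * m < p := by
      rw [hm]; push_cast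
      have : ((Nat.sqrt (3 * s) : ℕ) : ℝ) ≤ (p : ℝ) / 10 := by
        refine le_of_sq_le_sq_aux ?_ (by positivity)
        nlinarith
      linarith
    exact_mod_cast this
  have h3 : N ≤ T * s := by
    rw [hs]; exact (Nat.lt_mul_div_succ N hT1).le
  have h4 := main m s h1 h2 h3
  have hmN : (m : ℝ) ≤ 4 * (√q * n) := by
    have hsn : (0:ℝ) ≤ √q * n := by positivity
    have hss : (√(q:ℝ) * n) ^ 2 = q * (n : ℝ) ^ 2 := by
      rw [mul_pow, Real.sq_sqrt (by positivity)]
    have hN1R : (1 : ℝ) ≤ N := by exact_mod_cast hN1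
    have hNT : (N : ℝ) / T ≤ N := div_le_self (by positivity) (by exact_mod_cast hT1)
    have : ((Nat.sqrt (3 * s) : ℕ) : ℝ) ≤ 3 * (√q * n) := by
      refine le_of_sq_le_sq_aux ?_ (by positivity)
      nlinarith
    have : 1 ≤ √(q:ℝ) * n := by
      refine le_of_sq_le_sq_aux ?_ (by positivity)
      nlinarith
    rw [hm]; push_cast; linarith
  have hqs : (q : ℝ) ≤ √q * n := by
    have h5 : √(q : ℝ) ≤ n := by
      apply Real.sqrt_le_iff.2 ⟨by positivity, by exact_mod_cast hq⟩
    calc (q : ℝ) = √q * √q := (Real.mul_self_sqrt (by positivity)).symm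
      _ ≤ √q * n := by gcongr
  have h5 : E ≤ T * ((21 * m + q) * (4 * q)) := by
    have h6 : n' ^ 2 * E ≤ n' ^ 2 * (T * ((21 * m + q) * (4 * q))) := by
      refine h4.trans ?_
      have h7 : N ≤ 2 * q * n' ^ 2 := by
        rw [hN]
        have : n ≤ 2 * n' := by omega
        calc q * (n' * n) ≤ q * (n' * (2 * n')) := by gcongr
          _ = _ := by ring
      calc T * ((21 * m + q) * (2 * N)) ≤ T * ((21 * m + q) * (2 * (2 * q * n' ^ 2))) := by gcongr
        _ = _ := by ring
    exact Nat.le_of_mul_le_mul_left h6 (pow_pos (by omega) 2)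
  have h5R : (E : ℝ) ≤ T * ((21 * m + q) * (4 * q)) := by exact_mod_cast h5
  have hpow : (q : ℝ) ^ ((3 : ℝ) / 2) = q * √q := by
    have hq0 : (0 : ℝ) < q := by exact_mod_cast (by omega : 0 < q)
    rw [show (3 : ℝ) / 2 = 1 + 1 / 2 by norm_num, Real.rpow_add hq0, Real.rpow_one,
      Real.sqrt_eq_rpow]
  rw [hpow]
  calc (E : ℝ) ≤ T * ((21 * m + q) * (4 * q)) := h5R
    _ ≤ T * ((21 * (4 * (√q * n)) + √q * n) * (4 * q)) := by gcongr
    _ = _ := by ring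

theorem final (C : ℝ) (hC : 0 < C) (T : ℕ) (hT : 1000 * C ≤ T) (hT1 : 1 ≤ T)
    (p : ℕ) [Fact p.Prime] (A : Finset (ZMod p)) (hA : A.Nonempty)
    (hyp : (A.card : ℝ) ^ 2 * ((A * A).card : ℝ) ≤ C * (p : ℝ) ^ 2) :
    ((((A ×ˢ A) ×ˢ (A ×ˢ A)).filter
        (fun q => q.1.1 + q.1.2 = q.2.1 + q.2.2)).card : ℝ) ≤
      (340 * T + 10000) * ((A * A).card : ℝ) ^ ((3 : ℝ) / 2) * (A.card : ℝ) := by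
  have hn0 : 1 ≤ A.card := hA.card_pos
  have hq0 : 1 ≤ (A * A).card := (hA.mul hA).card_pos
  have hpow1 : (1 : ℝ) ≤ ((A * A).card : ℝ) ^ ((3 : ℝ) / 2) :=
    Real.one_le_rpow (by exact_mod_cast hq0) (by norm_num)
  have htriv := energy_trivial A
  have hnp : A.card ≤ p := by
    have := Finset.card_le_univ A
    rwa [ZMod.card] at this
  have hn0R : (1 : ℝ) ≤ A.card := by exact_mod_cast hn0
  by_cases hsm : A.card < 100
  · have h1 : A.card ^ 3 ≤ 10000 * A.card := by
      rw [pow_succ]; gcongr; nlinarith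
    have h2 := htriv.trans h1
    have h2R : ((((A ×ˢ A) ×ˢ (A ×ˢ A)).filter
        (fun q => q.1.1 + q.1.2 = q.2.1 + q.2.2)).card : ℝ) ≤ 10000 * A.card := by
      exact_mod_cast h2
    refine h2R.trans ?_
    gcongr
    have hTR : (0 : ℝ) ≤ T := by positivity
    nlinarith
  · have hnq : A.card ≤ (A * A).card := by
      obtain ⟨x, hx, hx0⟩ : ∃ x ∈ A, x ≠ 0 := by
        obtain ⟨x, hx, hne⟩ := Finset.exists_mem_ne (s := A) (by omega) 0
        exact ⟨x, hx, hne⟩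
      refine Finset.card_le_card_of_injOn (fun a => x * a)
        (fun a ha => Finset.mul_mem_mul hx ha) (fun a _ b _ h => mul_left_cancel₀ hx0 h)
    have hYc : ((A.erase 0).image (·⁻¹)).card = (A.erase 0).card :=
      Finset.card_image_of_injective _ inv_injective
    have hn1 : (A.erase 0).card ≤ A.card := Finset.card_erase_le
    have hn2 : A.card ≤ (A.erase 0).card + 1 := by
      have := Finset.pred_card_le_card_erase (s := A) (a := 0)
      omega
    have key := arith C hC T p A.card (A * A).card (A.erase 0).card
      (((A ×ˢ A) ×ˢ (A ×ˢ A)).filter (fun q => q.1.1 + q.1.2 = q.2.1 + q.2.2)).card hT hT1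
      (by omega) (by omega) hn1 hn2 hnq (by rw [pow_two]; exact Finset.card_mul_le) hyp (by
        intro m s h1 h2 h3
        refine (energy_le_inc A).trans ?_
        have := product_bound p (A * A) ((A.erase 0).image (·⁻¹)) A (A * A).card le_rfl
          (by omega) hnq m s T h1 h2 (by rw [hYc]; exact h3)
        rw [hYc] at this
        exact this)
    refine key.trans ?_
    gcongr
    linarith

end final

end RNRS

theorem stmt_12 :
    ∀ C : ℝ, 0 < C →
      ∃ D : ℝ, 0 < D ∧
        ∀ (p : ℕ), p.Prime →
          ∀ (A : Finset (ZMod p)), A.Nonempty →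
            (A.card : ℝ) ^ 2 * ((A * A).card : ℝ) ≤ C * (p : ℝ) ^ 2 →
            ((((A ×ˢ A) ×ˢ (A ×ˢ A)).filter
                (fun q => q.1.1 + q.1.2 = q.2.1 + q.2.2)).card : ℝ) ≤
              D * ((A * A).card : ℝ) ^ ((3 : ℝ) / 2) * (A.card : ℝ) := by
  intro C hC
  refine ⟨340 * ((⌈1000 * C⌉₊ + 1 : ℕ) : ℝ) + 10000, by positivity, ?_⟩
  intro p hp A hA hyp
  haveI := Fact.mk hp
  have hT : 1000 * C ≤ ((⌈1000 * C⌉₊ + 1 : ℕ) : ℝ) := by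
    have := Nat.le_ceil (1000 * C)
    push_cast
    linarith
  have := RNRS.final C hC (⌈1000 * C⌉₊ + 1) hT (by omega) p A hA hyp
  convert this using 2
end

section
/- Let A ⊂ F_p satisfy |A| < p^{2/3}. Then E_3^+(A) ≲ |AA|^{4/3} |A|², where ≲ hides absolute constants and powers of log|A|. -/
open Pointwise

section Elim

section Sylv
open Polynomial
variable {R : Type*} [CommRing R]

/-- Columns of a Sylvester type matrix. -/
noncomputable def sCol (f g : R[X]) (m n : ℕ) : Fin m ⊕ Fin n → R[X] :=
  Sum.elim (fun j => g * X ^ (j : ℕ)) (fun j => f * X ^ (j : ℕ))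

/-- A Sylvester type matrix. -/
noncomputable def sMat (f g : R[X]) (m n : ℕ) : Matrix (Fin m ⊕ Fin n) (Fin m ⊕ Fin n) R :=
  Matrix.of fun i j => (sCol f g m n j).coeff (finSumFinEquiv i : ℕ)

lemma sCol_natDegree (f g : R[X]) (m n : ℕ) (hm : f.natDegree = m) (hn : g.natDegree = n) (j) :
    (sCol f g m n j).natDegree < m + n := by
  rcases j with j | j
  · have h1 : (g * X ^ (j : ℕ)).natDegree ≤ n + j :=
      natDegree_mul_le.trans (Nat.add_le_add hn.le (natDegree_X_pow_le _))
    have := j.2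
    simp only [sCol, Sum.elim_inl]; omega
  · have h1 : (f * X ^ (j : ℕ)).natDegree ≤ m + j :=
      natDegree_mul_le.trans (Nat.add_le_add hm.le (natDegree_X_pow_le _))
    have := j.2
    simp only [sCol, Sum.elim_inr]; omega

lemma sSum (f g : R[X]) (m n : ℕ) (c : Fin m ⊕ Fin n → R) :
    ∑ j, C (c j) * sCol f g m n j =
        (∑ j : Fin n, C (c (Sum.inr j)) * X ^ (j : ℕ)) * f +
        (∑ j : Fin m, C (c (Sum.inl j)) * X ^ (j : ℕ)) * g := by
  rw [Fintype.sum_sum_type, add_comm, Finset.sum_mul, Finset.sum_mul]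
  congr 1
  · refine Finset.sum_congr rfl fun j _ => ?_
    simp only [sCol, Sum.elim_inr]; ring
  · refine Finset.sum_congr rfl fun j _ => ?_
    simp only [sCol, Sum.elim_inl]; ring

lemma sExt (f g : R[X]) (m n : ℕ) (hm : f.natDegree = m) (hn : g.natDegree = n) (h0 : 0 < m + n)
    (c : Fin m ⊕ Fin n → R) (q : R[X]) (hq : q.natDegree < m + n)
      (h : ∀ i, (sMat f g m n).mulVec c i = q.coeff (finSumFinEquiv i : ℕ)) :
      ∑ j, C (c j) * sCol f g m n j = q := by
  have hcoeff : ∀ (i : Fin m ⊕ Fin n),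
      (∑ j, C (c j) * sCol f g m n j).coeff (finSumFinEquiv i : ℕ) = (sMat f g m n).mulVec c i := by
    intro i
    simp only [finsetSum_coeff, coeff_C_mul, Matrix.mulVec, dotProduct, sMat,
      Matrix.of_apply]
    exact Finset.sum_congr rfl fun j _ => mul_comm _ _
  have hdeg : (∑ j, C (c j) * sCol f g m n j).natDegree < m + n := by
    refine lt_of_le_of_lt (natDegree_sum_le_of_forall_le (n := m + n - 1) _ _ ?_)
      (by omega)
    intro j _
    have := sCol_natDegree f g m n hm hn j
    exact (natDegree_C_mul_le _ _).trans (by omega)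
  ext1 k
  by_cases hk : k < m + n
  · have := hcoeff (finSumFinEquiv.symm ⟨k, hk⟩)
    rw [h] at this
    simpa using this
  · rw [coeff_eq_zero_of_natDegree_lt (hdeg.trans_le (by omega)),
        coeff_eq_zero_of_natDegree_lt (hq.trans_le (by omega))]

lemma coeff_sum_fin (n : ℕ) (c : Fin n → R) (j : Fin n) :
    (∑ j : Fin n, C (c j) * X ^ (j : ℕ)).coeff (j : ℕ) = c j := by
  rw [finsetSum_coeff, Finset.sum_eq_single j]
  · simp
  · intro b _ hb
    rw [coeff_C_mul, coeff_X_pow, if_neg (fun h => hb (Fin.ext h.symm)), mul_zero]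
  · simp

lemma sDet [IsDomain R] [UniqueFactorizationMonoid R] (f g : R[X]) (hg : g ≠ 0)
    (hrel : IsRelPrime f g) (m n : ℕ) (hm : f.natDegree = m)
    (hn : g.natDegree = n) (h0 : 0 < m + n) : (sMat f g m n).det ≠ 0 := by
  intro h
  obtain ⟨c, hc, hMc⟩ := Matrix.exists_mulVec_eq_zero_iff.mpr h
  have h1 := sExt f g m n hm hn h0 c 0 (by simpa using h0) (by simp [hMc])
  rw [sSum] at h1
  have hac := coeff_sum_fin n (fun j => c (Sum.inr j))
  have hbc := coeff_sum_fin m (fun j => c (Sum.inl j))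
  have hadeg : (∑ j : Fin n, C (c (Sum.inr j)) * X ^ (j : ℕ)).degree < (n : WithBot ℕ) :=
    degree_sum_fin_lt fun j => c (Sum.inr j)
  generalize (∑ j : Fin n, C (c (Sum.inr j)) * X ^ (j : ℕ)) = a at *
  generalize (∑ j : Fin m, C (c (Sum.inl j)) * X ^ (j : ℕ)) = b at *
  have hga : g ∣ a := by
    have : g ∣ a * f := ⟨-b, by linear_combination h1⟩
    exact (hrel.symm).dvd_of_dvd_mul_right this
  have ha0 : a = 0 := by
    by_contra hne
    have := degree_le_of_dvd hga hne
    rw [degree_eq_natDegree hg, hn] at this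
    exact absurd (this.trans_lt hadeg) (lt_irrefl _)
  have hb0 : b = 0 := by
    rw [ha0, zero_mul, zero_add] at h1
    exact (mul_eq_zero.mp h1).resolve_right hg
  apply hc
  funext j
  rcases j with j | j
  · rw [← hbc, hb0]; simp
  · rw [← hac, ha0]; simp

lemma sBez (f g : R[X]) (m n : ℕ) (hm : f.natDegree = m)
    (hn : g.natDegree = n) (h0 : 0 < m + n) :
    ∃ a b, a * f + b * g = C (sMat f g m n).det := by
  obtain ⟨i0, hi0⟩ : ∃ i0 : Fin m ⊕ Fin n, finSumFinEquiv i0 = ⟨0, h0⟩ :=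
    ⟨finSumFinEquiv.symm ⟨0, h0⟩, by simp⟩
  have hMc : (sMat f g m n).mulVec ((sMat f g m n).adjugate.mulVec (Pi.single i0 1)) =
      (sMat f g m n).det • (Pi.single i0 1 : Fin m ⊕ Fin n → R) := by
    simp only [Matrix.mulVec_mulVec, Matrix.mul_adjugate, Matrix.smul_mulVec, Matrix.one_mulVec]
  have h1 := sExt f g m n hm hn h0 _ (C (sMat f g m n).det) (by simpa using h0) (by
      intro i
      rw [hMc]
      by_cases hi : i = i0
      · subst hi; simp [hi0]
      · have : (finSumFinEquiv i : ℕ) ≠ 0 := by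
          intro h
          apply hi
          apply finSumFinEquiv.injective
          apply Fin.ext
          rw [hi0, h]
        simp [hi, coeff_C, this])
  rw [sSum] at h1
  exact ⟨_, _, h1⟩
end Sylv

open MvPolynomial

variable {K : Type*} [Field K]

/-- Elimination for two polynomials in one variable over a polynomial ring. -/
lemma elim_poly {n₀ : ℕ} (f g : Polynomial (MvPolynomial (Fin n₀) K)) (hf : f ≠ 0) (hg : g ≠ 0)
    (hrel : IsRelPrime f g) (df dg : ℕ) (hf1 : ∀ i, (f.coeff i).totalDegree ≤ df)
    (hg1 : ∀ i, (g.coeff i).totalDegree ≤ dg) (hf2 : f.natDegree ≤ df) (hg2 : g.natDegree ≤ dg) :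
    ∃ r : MvPolynomial (Fin n₀) K, r ≠ 0 ∧ r.totalDegree ≤ 2 * df * dg + df ∧
      ∃ a b, a * f + b * g = Polynomial.C r := by
  classical
  rcases Nat.eq_zero_or_pos (f.natDegree + g.natDegree) with h0 | h0
  · refine ⟨f.coeff 0, ?_, ?_, 1, 0, ?_⟩
    · have := Polynomial.eq_C_of_natDegree_eq_zero (show f.natDegree = 0 by omega)
      intro h
      rw [h] at this
      exact hf (by rw [this]; simp)
    · exact (hf1 0).trans (by omega)
    · have := Polynomial.eq_C_of_natDegree_eq_zero (show f.natDegree = 0 by omega)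
      rw [← this]; ring
  refine ⟨_, sDet f g hg hrel _ _ rfl rfl h0, ?_, sBez f g _ _ rfl rfl h0⟩
  rw [Matrix.det_apply]
  refine totalDegree_finsetSum_le fun σ _ => ?_
  refine (totalDegree_smul_le _ _).trans ?_
  refine (totalDegree_finsetProd _ _).trans ?_
  have h1 : ∀ j, (sMat f g f.natDegree g.natDegree (σ j) j).totalDegree ≤
      Sum.elim (fun _ => dg) (fun _ => df) j := by
    rintro (j | j)
    · simp only [sMat, Matrix.of_apply, sCol, Sum.elim_inl, Polynomial.coeff_mul_X_pow']
      split_ifs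
      · exact hg1 _
      · simp
    · simp only [sMat, Matrix.of_apply, sCol, Sum.elim_inr, Polynomial.coeff_mul_X_pow']
      split_ifs
      · exact hf1 _
      · simp
  refine (Finset.sum_le_sum fun j _ => h1 j).trans ?_
  rw [Fintype.sum_sum_type]
  simp only [Sum.elim_inl, Sum.elim_inr, Finset.sum_const, Finset.card_univ, Fintype.card_fin,
    smul_eq_mul]
  nlinarith [Nat.mul_le_mul_right dg hf2, Nat.mul_le_mul_right df hg2]

lemma fse_rename_succ (n : ℕ) (r : MvPolynomial (Fin n) K) :
    finSuccEquiv K n (rename Fin.succ r) = Polynomial.C r := by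
  induction r using MvPolynomial.induction_on with
  | C a => simp [finSuccEquiv_apply]
  | add p q hp hq => simp [hp, hq]
  | mul_X p i hp => simp [hp, finSuccEquiv_X_succ]

/-- Elimination of the variable `X 0` for two relatively prime polynomials. -/
lemma elim_mv (P F : MvPolynomial (Fin 3) K) (hP : P ≠ 0) (hF : F ≠ 0) (h : IsRelPrime P F) :
    ∃ r : MvPolynomial (Fin 2) K, r ≠ 0 ∧
      r.totalDegree ≤ 2 * P.totalDegree * F.totalDegree + P.totalDegree ∧
      ∃ a b, a * P + b * F = rename Fin.succ r := by
  have key : ∀ Q : MvPolynomial (Fin 3) K, ∀ i,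
      ((finSuccEquiv K 2 Q).coeff i).totalDegree ≤ Q.totalDegree := by
    intro Q i
    by_cases h0 : (finSuccEquiv K 2 Q).coeff i = 0
    · simp [h0]
    · have := totalDegree_coeff_finSuccEquiv_add_le Q i h0
      omega
  have key2 : ∀ Q : MvPolynomial (Fin 3) K, (finSuccEquiv K 2 Q).natDegree ≤ Q.totalDegree := by
    intro Q
    rw [natDegree_finSuccEquiv]
    exact degreeOf_le_totalDegree _ _
  obtain ⟨r, hr, hdeg, a, b, hab⟩ := elim_poly (finSuccEquiv K 2 P) (finSuccEquiv K 2 F)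
    (by simpa using hP) (by simpa using hF) (by
      intro d h1 h2
      have e1 : (finSuccEquiv K 2).symm d ∣ P := by
        have := map_dvd (finSuccEquiv K 2).symm h1; simpa using this
      have e2 : (finSuccEquiv K 2).symm d ∣ F := by
        have := map_dvd (finSuccEquiv K 2).symm h2; simpa using this
      have := (h e1 e2).map (finSuccEquiv K 2)
      simpa using this) _ _ (key P) (key F) (key2 P) (key2 F)
  refine ⟨r, hr, hdeg, (finSuccEquiv K 2).symm a, (finSuccEquiv K 2).symm b, ?_⟩
  apply (finSuccEquiv K 2).injective
  rw [map_add, map_mul, map_mul, AlgEquiv.apply_symm_apply, AlgEquiv.apply_symm_apply, hab]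
  exact (fse_rename_succ 2 r).symm

end Elim

section Lines
open MvPolynomial

variable {K : Type*} [Field K]

/-- Restriction to the line `s = s₀, y = α τ + β`. -/
noncomputable def psi (α β s : K) : MvPolynomial (Fin 3) K →ₐ[K] Polynomial K :=
  aeval ![Polynomial.C α * Polynomial.X + Polynomial.C β, Polynomial.C s, Polynomial.X]

/-- Restriction to the line `τ = t₀, y = γ s + δ`. -/
noncomputable def phi (γ δ t : K) : MvPolynomial (Fin 3) K →ₐ[K] Polynomial K :=
  aeval ![Polynomial.C γ * Polynomial.X + Polynomial.C δ, Polynomial.X, Polynomial.C t]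

lemma natDegree_psi_le (α β s : K) (F : MvPolynomial (Fin 3) K) :
    (psi α β s F).natDegree ≤ F.totalDegree := by
  have := MvPolynomial.aeval_natDegree_le (m := F.totalDegree) F le_rfl
    ![Polynomial.C α * Polynomial.X + Polynomial.C β, Polynomial.C s, Polynomial.X] (n := 1) (by
      intro i; fin_cases i
      · exact Polynomial.natDegree_linear_le
      · simp
      · simp)
  simpa [psi] using this

lemma natDegree_phi_le (α β s : K) (F : MvPolynomial (Fin 3) K) :
    (phi α β s F).natDegree ≤ F.totalDegree := by
  have := MvPolynomial.aeval_natDegree_le (m := F.totalDegree) F le_rfl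
    ![Polynomial.C α * Polynomial.X + Polynomial.C β, Polynomial.X, Polynomial.C s] (n := 1) (by
      intro i; fin_cases i
      · exact Polynomial.natDegree_linear_le
      · simp
      · simp)
  simpa [phi] using this

lemma eval_psi (α β s t : K) (F : MvPolynomial (Fin 3) K) :
    (psi α β s F).eval t = eval ![α * t + β, s, t] F := by
  rw [psi, ← Polynomial.coe_evalRingHom]
  induction F using MvPolynomial.induction_on with
  | C a => simp
  | add p q hp hq => simp only [map_add, hp, hq]
  | mul_X p i hp =>
    simp only [map_mul, hp]
    fin_cases i <;> simp

lemma eval_phi (γ δ s t : K) (F : MvPolynomial (Fin 3) K) :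
    (phi γ δ t F).eval s = eval ![γ * s + δ, s, t] F := by
  rw [phi, ← Polynomial.coe_evalRingHom]
  induction F using MvPolynomial.induction_on with
  | C a => simp
  | add p q hp hq => simp only [map_add, hp, hq]
  | mul_X p i hp =>
    simp only [map_mul, hp]
    fin_cases i <;> simp

/-- Two variable polynomials as iterated polynomials. -/
noncomputable def toQ : MvPolynomial (Fin 2) K →ₐ[K] Polynomial (Polynomial K) :=
  aeval ![Polynomial.X, Polynomial.C Polynomial.X]

lemma toQ_eq (r : MvPolynomial (Fin 2) K) :
    toQ r = (finSuccEquiv K 1 r).map ((uniqueAlgEquiv K (Fin 1) : _ ≃ₐ[K] _) : _ →+* Polynomial K) := by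
  induction r using MvPolynomial.induction_on with
  | C a => simp [toQ, finSuccEquiv_apply]
  | add p q hp hq => simp only [map_add, hp, hq, Polynomial.map_add]
  | mul_X p i hp =>
    simp only [map_mul, hp, Polynomial.map_mul]
    congr 1
    fin_cases i
    · simp [toQ, finSuccEquiv_X_zero]
    · have : finSuccEquiv K 1 (X 1) = Polynomial.C (X 0) := finSuccEquiv_X_succ (j := 0)
      simp [toQ, this]

lemma toQ_ne (r : MvPolynomial (Fin 2) K) (hr : r ≠ 0) : toQ r ≠ 0 := by
  rw [toQ_eq]
  intro h
  rw [Polynomial.map_eq_zero_iff (by exact (uniqueAlgEquiv K (Fin 1)).injective)] at h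
  simp at h
  exact hr h

lemma toQ_natDegree (r : MvPolynomial (Fin 2) K) : (toQ r).natDegree ≤ r.totalDegree := by
  rw [toQ_eq]
  refine Polynomial.natDegree_map_le.trans ?_
  rw [natDegree_finSuccEquiv]
  exact degreeOf_le_totalDegree _ _

lemma psi_rename (α β s : K) (r : MvPolynomial (Fin 2) K) :
    psi α β s (rename Fin.succ r) = (toQ r).eval (Polynomial.C s) := by
  rw [← Polynomial.coe_evalRingHom]
  induction r using MvPolynomial.induction_on with
  | C a => simp [toQ, psi]
  | add p q hp hq => simp only [map_add, hp, hq]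
  | mul_X p i hp =>
    simp only [map_mul, hp]
    fin_cases i <;> simp [psi, toQ]

lemma card_rename {ι : Type*} (I : Finset ι) (α β s : ι → K) (hs : Set.InjOn s I)
    (r : MvPolynomial (Fin 2) K) (hr : r ≠ 0)
    (h : ∀ i ∈ I, psi (α i) (β i) (s i) (rename Fin.succ r) = 0) : I.card ≤ r.totalDegree := by
  classical
  refine le_trans ?_ (toQ_natDegree r)
  have h1 : (I.image fun i => (Polynomial.C (s i) : Polynomial K)).card = I.card := by
    apply Finset.card_image_of_injOn
    intro a ha b hb hab
    exact hs ha hb (Polynomial.C_injective hab)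
  rw [← h1]
  refine Polynomial.card_le_degree_of_subset_roots (p := toQ r) ?_
  intro x hx
  simp only [Finset.image_val, Multiset.mem_dedup, Multiset.mem_map] at hx
  obtain ⟨i, hi, rfl⟩ := hx
  rw [Polynomial.mem_roots (toQ_ne r hr), Polynomial.IsRoot, ← psi_rename (α i) (β i)]
  exact h i hi

/-- Bezout type bound for lines in the common zero set. -/
lemma bezout_lines {ι : Type*} (I : Finset ι) (α β s : ι → K) (hs : Set.InjOn s I)
    (P F : MvPolynomial (Fin 3) K) (hP : P ≠ 0) (hF : F ≠ 0) (hrel : IsRelPrime P F)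
    (h1 : ∀ i ∈ I, psi (α i) (β i) (s i) P = 0) (h2 : ∀ i ∈ I, psi (α i) (β i) (s i) F = 0) :
    I.card ≤ 2 * P.totalDegree * F.totalDegree + P.totalDegree := by
  obtain ⟨r, hr, hd, a, b, hab⟩ := elim_mv P F hP hF hrel
  refine (card_rename I α β s hs r hr ?_).trans hd
  intro i hi
  rw [← hab, map_add, map_mul, map_mul, h1 i hi, h2 i hi]
  simp

/-- Roots bound. -/
lemma card_roots_le {ι : Type*} (J : Finset ι) (t : ι → K) (ht : Set.InjOn t J)
    (f : Polynomial K) (hf : f ≠ 0) (h : ∀ j ∈ J, f.eval (t j) = 0) : J.card ≤ f.natDegree := by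
  classical
  rw [← Finset.card_image_of_injOn ht]
  refine Polynomial.card_le_degree_of_subset_roots ?_
  intro x hx
  simp only [Finset.image_val, Multiset.mem_dedup, Multiset.mem_map] at hx
  obtain ⟨i, hi, rfl⟩ := hx
  rw [Polynomial.mem_roots hf, Polynomial.IsRoot]
  exact h i hi

end Lines

section Diff
open MvPolynomial

variable {K : Type*} [Field K]

lemma pderiv_swap (i j : Fin 3) (P : MvPolynomial (Fin 3) K) :
    pderiv i (pderiv j P) = pderiv j (pderiv i P) := by
  induction P using MvPolynomial.induction_on with
  | C a => simp
  | add p q hp hq => simp only [map_add, hp, hq]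
  | mul_X p k hp =>
    simp only [pderiv_mul, map_add, hp]
    have : ∀ a b c : Fin 3, pderiv a (pderiv b (X c : MvPolynomial (Fin 3) K)) = 0 := by
      intro a b c
      rw [pderiv_X]
      by_cases h : b = c
      · subst h; simp
      · simp [h]
    rw [this, this]; ring

lemma totalDegree_pderiv_le (i : Fin 3) (P : MvPolynomial (Fin 3) K) :
    (pderiv i P).totalDegree ≤ P.totalDegree - 1 := by
  rw [totalDegree]
  refine Finset.sup_le fun m hm => ?_
  rw [mem_support_iff, coeff_pderiv] at hm
  have h1 : coeff (m + Finsupp.single i 1) P ≠ 0 := left_ne_zero_of_mul hm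
  have h2 := le_totalDegree (mem_support_iff.mpr h1)
  rw [Finsupp.sum_add_index' (by simp) (by simp)] at h2
  simp at h2
  omega

lemma exists_rename_of_pderiv (P : MvPolynomial (Fin 3) K)
    (hchar : ∀ k : ℕ, 0 < k → k ≤ P.totalDegree → (k : K) ≠ 0) (h : pderiv 0 P = 0) :
    ∃ r : MvPolynomial (Fin 2) K, rename Fin.succ r = P := by
  apply exists_rename_eq_of_vars_subset_range P Fin.succ (Fin.succ_injective 2)
  intro i hi
  rw [Finset.mem_coe, mem_vars_iff_mem_support] at hi
  obtain ⟨m, hm, hmi⟩ := hi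
  by_cases h0 : i = 0
  · exfalso
    subst h0
    have hm0 : m 0 ≠ 0 := by simpa using hmi
    have h1 := congrArg (coeff (m - Finsupp.single 0 1)) h
    have hle : Finsupp.single 0 1 ≤ m := by
      rw [Finsupp.single_le_iff]; omega
    rw [coeff_pderiv, tsub_add_cancel_of_le hle, coeff_zero] at h1
    rcases mul_eq_zero.mp h1 with h1 | h1
    · exact (mem_support_iff.mp hm) h1
    · have h2 : m 0 ≤ P.totalDegree := (monomial_le_degreeOf 0 hm).trans (degreeOf_le_totalDegree P 0)
      apply hchar (m 0) (by omega) h2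
      have h3 : ((m 0 : ℕ) : K) = ((m - (Finsupp.single 0 1 : Fin 3 →₀ ℕ)) 0 : ℕ) + 1 := by
        rw [Finsupp.tsub_apply]; simp
        rw [Nat.cast_sub (by omega)]; simp
      rw [h3]; exact_mod_cast h1
  · exact ⟨i.pred h0, by simp⟩

lemma derivative_phi (γ δ t : K) (P : MvPolynomial (Fin 3) K) :
    Polynomial.derivative (phi γ δ t P) =
      phi γ δ t (pderiv 1 P) + Polynomial.C γ * phi γ δ t (pderiv 0 P) := by
  induction P using MvPolynomial.induction_on with
  | C a => simp [phi]
  | add p q hp hq => simp only [map_add, hp, hq]; ring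
  | mul_X p k hp =>
    simp only [pderiv_mul, map_add, map_mul, Polynomial.derivative_mul, hp]
    have : Polynomial.derivative (phi γ δ t (X k)) =
      phi γ δ t (pderiv 1 (X k)) + Polynomial.C γ * phi γ δ t (pderiv 0 (X k)) := by
      fin_cases k <;> simp [phi, pderiv_X]
    rw [this]; ring

/-- The Hessian type polynomial. -/
noncomputable def hess (P : MvPolynomial (Fin 3) K) : MvPolynomial (Fin 3) K :=
  pderiv 0 (pderiv 0 P) * pderiv 1 P ^ 2 - 2 * pderiv 1 (pderiv 0 P) * pderiv 1 P * pderiv 0 P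
    + pderiv 1 (pderiv 1 P) * pderiv 0 P ^ 2

lemma phi_hess (γ δ t : K) (P : MvPolynomial (Fin 3) K) (h : phi γ δ t P = 0) :
    phi γ δ t (hess P) = 0 := by
  have h1 := derivative_phi γ δ t P
  rw [h, Polynomial.derivative_zero] at h1
  have h2 : phi γ δ t (pderiv 1 P) = - (Polynomial.C γ * phi γ δ t (pderiv 0 P)) := by
    linear_combination -h1
  have h3 := derivative_phi γ δ t (pderiv 1 P)
  rw [h2, Polynomial.derivative_neg, Polynomial.derivative_C_mul, derivative_phi,
    pderiv_swap 0 1] at h3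
  simp only [hess, map_add, map_sub, map_mul, map_pow, h2, map_ofNat]
  linear_combination - phi γ δ t (pderiv 0 P) ^ 2 * h3

lemma totalDegree_hess (P : MvPolynomial (Fin 3) K) : (hess P).totalDegree ≤ 3 * P.totalDegree := by
  have h0 := totalDegree_pderiv_le 0 P
  have h1 := totalDegree_pderiv_le 1 P
  have h00 := totalDegree_pderiv_le 0 (pderiv 0 P)
  have h10 := totalDegree_pderiv_le 1 (pderiv 0 P)
  have h11 := totalDegree_pderiv_le 1 (pderiv 1 P)
  have e0 := totalDegree_pow (pderiv 0 P) 2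
  have e1 := totalDegree_pow (pderiv 1 P) 2
  unfold hess
  refine (totalDegree_add _ _).trans (max_le ((totalDegree_sub _ _).trans (max_le ?_ ?_)) ?_)
  · refine (totalDegree_mul _ _).trans ?_
    omega
  · have : (2 * pderiv 1 (pderiv 0 P) * pderiv 1 P * pderiv 0 P) =
      C 2 * (pderiv 1 (pderiv 0 P) * pderiv 1 P * pderiv 0 P) := by
      rw [map_ofNat]; ring
    rw [this]
    refine (totalDegree_mul _ _).trans ?_
    rw [totalDegree_C]
    have := totalDegree_mul (pderiv 1 (pderiv 0 P) * pderiv 1 P) (pderiv 0 P)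
    have := totalDegree_mul (pderiv 1 (pderiv 0 P)) (pderiv 1 P)
    omega
  · refine (totalDegree_mul _ _).trans ?_
    omega

/-- Coefficientwise application of a derivation. -/
noncomputable def wt {A : Type*} [CommRing A] [Algebra K A] (W : Derivation K A A)
    (f : Polynomial A) : Polynomial A :=
  f.sum fun n a => Polynomial.monomial n (W a)

lemma coeff_wt {A : Type*} [CommRing A] [Algebra K A] (W : Derivation K A A)
    (f : Polynomial A) (n : ℕ) : (wt W f).coeff n = W (f.coeff n) := by
  rw [wt, Polynomial.sum_def, Polynomial.finsetSum_coeff]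
  simp only [Polynomial.coeff_monomial]
  rw [Finset.sum_ite_eq']
  split_ifs with h
  · rfl
  · rw [Polynomial.notMem_support_iff.mp h, map_zero]

lemma wt_add {A : Type*} [CommRing A] [Algebra K A] (W : Derivation K A A)
    (f g : Polynomial A) : wt W (f + g) = wt W f + wt W g := by
  ext n; simp [coeff_wt]

lemma wt_mul {A : Type*} [CommRing A] [Algebra K A] (W : Derivation K A A)
    (f g : Polynomial A) : wt W (f * g) = wt W f * g + f * wt W g := by
  ext n
  simp only [coeff_wt, Polynomial.coeff_mul, Polynomial.coeff_add, map_sum, Derivation.leibniz,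
    smul_eq_mul, Finset.sum_add_distrib]
  rw [add_comm]
  congr 1
  exact Finset.sum_congr rfl fun x _ => mul_comm _ _

lemma wt_C {A : Type*} [CommRing A] [Algebra K A] (W : Derivation K A A)
    (a : A) : wt W (Polynomial.C a) = Polynomial.C (W a) := by
  ext n
  rw [coeff_wt, Polynomial.coeff_C, Polynomial.coeff_C]
  split_ifs <;> simp

lemma wt_X {A : Type*} [CommRing A] [Algebra K A] (W : Derivation K A A)
     : wt W (Polynomial.X) = 0 := by
  ext n
  rw [coeff_wt, Polynomial.coeff_X]
  split_ifs <;> simp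

/-- The flow map. -/
noncomputable def flow (u w : MvPolynomial (Fin 3) K) :
    MvPolynomial (Fin 3) K →ₐ[K] Polynomial (MvPolynomial (Fin 3) K) :=
  aeval ![Polynomial.C (X 0) + Polynomial.X * Polynomial.C w,
    Polynomial.C (X 1) + Polynomial.X * Polynomial.C u, Polynomial.C (X 2)]

/-- The vector field. -/
noncomputable def vf (u w : MvPolynomial (Fin 3) K) :
    Derivation K (MvPolynomial (Fin 3) K) (MvPolynomial (Fin 3) K) :=
  u • pderiv 1 + w • pderiv 0

lemma derivative_flow (u w F : MvPolynomial (Fin 3) K) :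
    Polynomial.derivative (flow u w F) = Polynomial.C w * flow u w (pderiv 0 F)
      + Polynomial.C u * flow u w (pderiv 1 F) := by
  induction F using MvPolynomial.induction_on with
  | C a => simp [flow, Polynomial.algebraMap_apply]
  | add p q hp hq => simp only [map_add, hp, hq]; ring
  | mul_X p k hp =>
    simp only [pderiv_mul, map_add, map_mul, Polynomial.derivative_mul, hp]
    have : Polynomial.derivative (flow u w (X k)) = Polynomial.C w * flow u w (pderiv 0 (X k))
      + Polynomial.C u * flow u w (pderiv 1 (X k)) := by
      fin_cases k <;> simp [flow, pderiv_X]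
    rw [this]; ring

lemma wt_flow (u w F : MvPolynomial (Fin 3) K) :
    wt (vf u w) (flow u w F) =
      (Polynomial.C w + Polynomial.X * Polynomial.C (vf u w w)) * flow u w (pderiv 0 F)
      + (Polynomial.C u + Polynomial.X * Polynomial.C (vf u w u)) * flow u w (pderiv 1 F) := by
  induction F using MvPolynomial.induction_on with
  | C a => simp [flow, Polynomial.algebraMap_apply, wt_C, vf]
  | add p q hp hq => simp only [map_add, hp, hq, wt_add]; ring
  | mul_X p k hp =>
    simp only [pderiv_mul, map_add, map_mul, wt_mul, hp]
    have : wt (vf u w) (flow u w (X k)) =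
      (Polynomial.C w + Polynomial.X * Polynomial.C (vf u w w)) * flow u w (pderiv 0 (X k))
      + (Polynomial.C u + Polynomial.X * Polynomial.C (vf u w u)) * flow u w (pderiv 1 (X k)) := by
      fin_cases k
      · simp [flow, wt_add, wt_mul, wt_C, wt_X]; simp [vf]
      · simp [flow, wt_add, wt_mul, wt_C, wt_X]; simp [vf]
      · simp [flow, wt_add, wt_mul, wt_C, wt_X]; simp [vf]
    rw [this]; ring

lemma flow_key (u w F : MvPolynomial (Fin 3) K) :
    Polynomial.C u * wt (vf u w) (flow u w F) =
      (Polynomial.C u + Polynomial.X * Polynomial.C (vf u w u)) *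
        Polynomial.derivative (flow u w F) +
      Polynomial.X * flow u w (pderiv 0 F) * Polynomial.C (u * vf u w w - w * vf u w u) := by
  rw [wt_flow, derivative_flow]
  simp only [map_sub, map_mul]
  ring

lemma natDegree_aeval_le {B : Type*} [CommRing B] [Algebra K B] (f : Fin 3 → Polynomial B)
    (hf : ∀ i, (f i).natDegree ≤ 1) (F : MvPolynomial (Fin 3) K) :
    (aeval f F).natDegree ≤ F.totalDegree := by
  rw [aeval_def, eval₂_eq']
  refine Polynomial.natDegree_sum_le_of_forall_le _ _ fun d hd => ?_
  rw [IsScalarTower.algebraMap_apply K B (Polynomial B), Polynomial.algebraMap_eq]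
  refine (Polynomial.natDegree_C_mul_le _ _).trans ?_
  refine (Polynomial.natDegree_prod_le _ _).trans ?_
  refine le_trans ?_ (le_totalDegree hd)
  rw [Finsupp.sum_fintype _ _ (by simp)]
  refine Finset.sum_le_sum fun i _ => ?_
  refine Polynomial.natDegree_pow_le.trans ?_
  have := Nat.mul_le_mul_left (d i) (hf i)
  simpa using this

lemma natDegree_lin {B : Type*} [CommRing B] (a b : B) :
    (Polynomial.C a + Polynomial.X * Polynomial.C b).natDegree ≤ 1 := by
  rw [add_comm, mul_comm]
  exact Polynomial.natDegree_linear_le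

lemma natDegree_flow (u w F : MvPolynomial (Fin 3) K) : (flow u w F).natDegree ≤ F.totalDegree := by
  apply natDegree_aeval_le
  intro i; fin_cases i
  · exact natDegree_lin _ _
  · exact natDegree_lin _ _
  · simp

lemma coeff_zero_flow (u w F : MvPolynomial (Fin 3) K) : (flow u w F).coeff 0 = F := by
  induction F using MvPolynomial.induction_on with
  | C a => simp [flow, Polynomial.algebraMap_apply]
  | add p q hp hq => simp only [map_add, Polynomial.coeff_add, hp, hq]
  | mul_X p k hp =>
    rw [map_mul, Polynomial.mul_coeff_zero, hp]
    fin_cases k <;> simp [flow]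

lemma vf_hess (P : MvPolynomial (Fin 3) K) :
    pderiv 0 P * vf (pderiv 0 P) (- pderiv 1 P) (- pderiv 1 P)
      - (- pderiv 1 P) * vf (pderiv 0 P) (- pderiv 1 P) (pderiv 0 P) = - hess P := by
  simp [vf, hess, pderiv_swap 0 1]
  ring

/-- All Taylor coefficients along the flow are divisible by `P`. -/
lemma flow_dvd (P : MvPolynomial (Fin 3) K) (hP : Prime P) (hu : ¬ P ∣ pderiv 0 P)
    (hchar : ∀ k : ℕ, 0 < k → k ≤ P.totalDegree → (k : K) ≠ 0) (hH : P ∣ hess P) (k : ℕ) :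
    P ∣ (flow (pderiv 0 P) (- pderiv 1 P) P).coeff k := by
  by_cases hk : P.totalDegree < k
  · rw [Polynomial.coeff_eq_zero_of_natDegree_lt ((natDegree_flow _ _ _).trans_lt hk)]
    exact dvd_zero _
  induction k with
  | zero => rw [coeff_zero_flow]
  | succ k ih =>
    have ih := ih (by omega)
    have h1 := congrArg (fun f => Polynomial.coeff f k) (flow_key (pderiv 0 P) (- pderiv 1 P) P)
    rw [vf_hess] at h1
    simp only [Polynomial.coeff_C_mul, coeff_wt, Polynomial.coeff_add, Polynomial.coeff_mul_C,
      add_mul] at h1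
    have hW : ∀ f, P ∣ f → P ∣ vf (pderiv 0 P) (- pderiv 1 P) f := by
      rintro f ⟨g, rfl⟩
      rw [Derivation.leibniz]
      have : vf (pderiv 0 P) (- pderiv 1 P) P = 0 := by simp [vf]; ring
      rw [this]; simp
    have hx : P ∣ (Polynomial.X * Polynomial.C ((vf (pderiv 0 P) (-pderiv 1 P)) (pderiv 0 P)) *
        Polynomial.derivative (flow (pderiv 0 P) (-pderiv 1 P) P)).coeff k := by
      rw [mul_assoc]
      rcases k with _ | k
      · simp
      · rw [Polynomial.coeff_X_mul, Polynomial.coeff_C_mul, Polynomial.coeff_derivative]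
        exact (ih.mul_right _).mul_left _
    rw [Polynomial.coeff_derivative] at h1
    have h2 : P ∣ pderiv 0 P * ((flow (pderiv 0 P) (- pderiv 1 P) P).coeff (k + 1) * (k + 1)) := by
      rw [show pderiv 0 P * ((flow (pderiv 0 P) (- pderiv 1 P) P).coeff (k + 1) * (k + 1)) =
        pderiv 0 P * (vf ((pderiv 0) P) (-(pderiv 1) P))
          (((flow ((pderiv 0) P) (-(pderiv 1) P)) P).coeff k) -
        (Polynomial.X * Polynomial.C ((vf ((pderiv 0) P) (-(pderiv 1) P)) ((pderiv 0) P)) *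
              Polynomial.derivative ((flow ((pderiv 0) P) (-(pderiv 1) P)) P)).coeff k +
        (Polynomial.X * (flow ((pderiv 0) P) (-(pderiv 1) P)) ((pderiv 0) P)).coeff k * hess P by
          linear_combination -h1]
      exact ((((hW _ ih).mul_left _).sub hx).add (hH.mul_left _))
    rcases hP.dvd_or_dvd h2 with h2 | h2
    · exact absurd h2 hu
    rcases hP.dvd_or_dvd h2 with h2 | h2
    · exact h2
    · exfalso
      have h3 : ((k : MvPolynomial (Fin 3) K) + 1) = C ((k + 1 : ℕ) : K) := by simp
      rw [h3] at h2
      apply hP.not_isUnit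
      refine isUnit_of_dvd_unit h2 ?_
      exact (IsUnit.mk0 _ (hchar (k + 1) (by omega) (by omega))).map C
end Diff

section Core
open MvPolynomial

variable {K : Type*} [Field K]

/-- The map `y ↦ ℓ + h w, s ↦ s₁ + h u, τ ↦ τ`. -/
noncomputable def theta (α β s : K) (u w : MvPolynomial (Fin 3) K) :
    MvPolynomial (Fin 3) K →ₐ[K] Polynomial (Polynomial K) :=
  (Polynomial.mapAlgHom (psi α β s)).comp (flow u w)

lemma theta_X0 (α β s : K) (u w : MvPolynomial (Fin 3) K) : theta α β s u w (X 0) =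
    Polynomial.C (Polynomial.C α * Polynomial.X + Polynomial.C β)
      + Polynomial.X * Polynomial.C (psi α β s w) := by
  simp [theta, flow]
  simp [psi]

lemma theta_X1 (α β s : K) (u w : MvPolynomial (Fin 3) K) : theta α β s u w (X 1) =
    Polynomial.C (Polynomial.C s)
      + Polynomial.X * Polynomial.C (psi α β s u) := by
  simp [theta, flow]
  simp [psi]

lemma theta_X2 (α β s : K) (u w : MvPolynomial (Fin 3) K) : theta α β s u w (X 2) =
    Polynomial.C Polynomial.X := by
  simp [theta, flow]
  simp [psi]

lemma theta_hat (α β s : K) (u w : MvPolynomial (Fin 3) K) (f : Polynomial K) :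
    theta α β s u w (Polynomial.aeval (X 2) f) = Polynomial.C f := by
  rw [← Polynomial.aeval_algHom_apply, theta_X2]
  have := Polynomial.aeval_algHom_apply (Algebra.ofId (Polynomial K) (Polynomial (Polynomial K))|>.restrictScalars K) Polynomial.X f
  simpa [Algebra.ofId_apply] using this

lemma psi_hat (α β s : K) (f : Polynomial K) :
    psi α β s (Polynomial.aeval (X 2) f) = f := by
  rw [← Polynomial.aeval_algHom_apply]
  simp [psi]

lemma theta_rename (α β s : K) (u w : MvPolynomial (Fin 3) K) (r : MvPolynomial (Fin 2) K) :
    theta α β s u w (rename Fin.succ r) = (toQ r).comp (Polynomial.C (Polynomial.C s)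
      + Polynomial.X * Polynomial.C (psi α β s u)) := by
  induction r using MvPolynomial.induction_on with
  | C a => 
    rw [rename_C, ← algebraMap_eq, ← algebraMap_eq, AlgHom.commutes, AlgHom.commutes]
    simp [Polynomial.algebraMap_apply]
  | add p q hp hq => simp only [map_add, hp, hq, Polynomial.add_comp]
  | mul_X p i hp =>
    simp only [map_mul, hp, Polynomial.mul_comp]
    congr 1
    fin_cases i
    · simp [toQ, theta_X1]
    · simp [toQ, theta_X2]

lemma theta_zero (α β s : K) (P : MvPolynomial (Fin 3) K) (hP : Prime P)
    (hu : ¬ P ∣ pderiv 0 P)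
    (hchar : ∀ k : ℕ, 0 < k → k ≤ P.totalDegree → (k : K) ≠ 0) (hH : P ∣ hess P)
    (h0 : psi α β s P = 0) : theta α β s (pderiv 0 P) (- pderiv 1 P) P = 0 := by
  ext1 k
  obtain ⟨q, hq⟩ := flow_dvd P hP hu hchar hH k
  simp only [theta, AlgHom.comp_apply, Polynomial.coe_mapAlgHom, Polynomial.coeff_zero]
  rw [Polynomial.coeff_map, hq]
  simp [h0]

lemma not_isUnit_totalDegree (P : MvPolynomial (Fin 3) K) (h0 : P ≠ 0) (h : ¬ IsUnit P) :
    0 < P.totalDegree := by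
  by_contra hc
  have h1 : P.totalDegree = 0 := by omega
  rw [totalDegree_eq_zero_iff_eq_C] at h1
  apply h
  rw [h1]
  refine IsUnit.map C (IsUnit.mk0 _ ?_)
  intro h2
  rw [h2] at h1
  exact h0 (by simpa using h1)

/-- The ruled surface is a hyperbolic paraboloid type surface determined by two lines. -/
lemma dvd_B12 (α₁ β₁ s₁ α₂ β₂ s₂ : K) (P : MvPolynomial (Fin 3) K) (hP : Prime P)
    (hchar : ∀ k : ℕ, 0 < k → k ≤ P.totalDegree → (k : K) ≠ 0) (hH : P ∣ hess P)
    (h1 : psi α₁ β₁ s₁ P = 0) (h2 : psi α₂ β₂ s₂ P = 0)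
    (hu : psi α₁ β₁ s₁ (pderiv 0 P) ≠ 0) :
    P ∣ C (s₂ - s₁) * (X 0 - (C α₁ * X 2 + C β₁))
      - (X 1 - C s₁) * (C (α₂ - α₁) * X 2 + C (β₂ - β₁)) := by
  have hPu : ¬ P ∣ pderiv 0 P := by
    rintro ⟨q, hq⟩
    rw [hq, map_mul, h1, zero_mul] at hu
    exact hu rfl
  have hth := theta_zero α₁ β₁ s₁ P hP hPu hchar hH h1
  set u := psi α₁ β₁ s₁ (pderiv 0 P) with hu_def
  set w := psi α₁ β₁ s₁ (- pderiv 1 P) with hw_def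
  let uh : MvPolynomial (Fin 3) K := Polynomial.aeval (X 2) u
  let wh : MvPolynomial (Fin 3) K := Polynomial.aeval (X 2) w
  let B : MvPolynomial (Fin 3) K := uh * (X 0 - (C α₁ * X 2 + C β₁)) - (X 1 - C s₁) * wh
  have hB : theta α₁ β₁ s₁ (pderiv 0 P) (- pderiv 1 P) B = 0 := by
    have e : ∀ c : K, theta α₁ β₁ s₁ (pderiv 0 P) (- pderiv 1 P) (C c) =
        Polynomial.C (Polynomial.C c) := by
      intro c
      rw [← algebraMap_eq, AlgHom.commutes]; simp [Polynomial.algebraMap_apply]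
    simp only [B, uh, wh, map_sub, map_mul, theta_hat, map_add, theta_X0, theta_X1, theta_X2, e]
    rw [← hu_def, ← hw_def]
    ring
  have hPB : P ∣ B := by
    by_contra hnd
    have hB0 : B ≠ 0 := by
      rintro h; rw [h] at hnd; exact hnd (dvd_zero _)
    obtain ⟨r, hr, -, a, b, hab⟩ := elim_mv P B hP.ne_zero hB0
      ((hP.irreducible.isRelPrime_iff_not_dvd).mpr hnd)
    have h3 := theta_rename α₁ β₁ s₁ (pderiv 0 P) (- pderiv 1 P) r
    rw [← hab, map_add, map_mul, map_mul, hth, hB, mul_zero, mul_zero, add_zero] at h3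
    have h4 := Polynomial.comp_eq_zero_iff.mp h3.symm
    rcases h4 with h4 | ⟨-, h4⟩
    · exact toQ_ne r hr h4
    · have := congrArg (fun f => Polynomial.coeff f 1) h4
      simp [Polynomial.coeff_C] at this
      exact hu this
  have h5 : u * (Polynomial.C α₂ * Polynomial.X + Polynomial.C β₂ -
      (Polynomial.C α₁ * Polynomial.X + Polynomial.C β₁)) =
      (Polynomial.C s₂ - Polynomial.C s₁) * w := by
    obtain ⟨q, hq⟩ := hPB
    have h6 := congrArg (psi α₂ β₂ s₂) hq
    rw [map_mul, h2, zero_mul] at h6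
    simp only [B, uh, wh, map_sub, map_mul, psi_hat, map_add] at h6
    simp [psi] at h6
    linear_combination h6
  have h7 := congrArg (Polynomial.aeval (X 2 : MvPolynomial (Fin 3) K)) h5
  simp only [map_mul, map_sub, map_add, Polynomial.aeval_C, Polynomial.aeval_X, algebraMap_eq] at h7
  have h8 : P ∣ uh * (C (s₂ - s₁) * (X 0 - (C α₁ * X 2 + C β₁))
      - (X 1 - C s₁) * (C (α₂ - α₁) * X 2 + C (β₂ - β₁))) := by
    have : uh * (C (s₂ - s₁) * (X 0 - (C α₁ * X 2 + C β₁))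
      - (X 1 - C s₁) * (C (α₂ - α₁) * X 2 + C (β₂ - β₁))) = C (s₂ - s₁) * B := by
      simp only [B, uh, wh, map_sub]
      linear_combination - (X 1 - C s₁) * h7
    rw [this]
    exact hPB.mul_left _
  rcases hP.dvd_or_dvd h8 with h9 | h9
  · exfalso
    obtain ⟨q, hq⟩ := h9
    have := congrArg (psi α₁ β₁ s₁) hq
    rw [map_mul, h1, zero_mul] at this
    simp only [uh, psi_hat] at this
    exact hu this
  · exact h9

lemma core_irred {ι κ : Type*} [DecidableEq K] (I : Finset ι) (J : Finset κ) (α β s : ι → K)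
    (γ δ t : κ → K) (hs : Set.InjOn s I) (ht : Set.InjOn t J)
    (P G : MvPolynomial (Fin 3) K) (hP : Irreducible P) (d Q : ℕ)
    (hd : P.totalDegree + G.totalDegree ≤ d)
    (hchar : ∀ k : ℕ, 0 < k → k ≤ d → (k : K) ≠ 0)
    (hI : ∀ i ∈ I, psi (α i) (β i) (s i) P = 0) (hG : ∀ i ∈ I, psi (α i) (β i) (s i) G ≠ 0)
    (hcard : 8 * P.totalDegree ^ 2 < I.card)
    (hJ : ∀ j ∈ J, phi (γ j) (δ j) (t j) (P * G) = 0)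
    (hQ : 4 * d < Q)
    (hdeg : ∀ i ∈ I, Q ≤ (J.filter fun j => α i * t j + β i = γ j * s i + δ j).card) :
    ∃ i₁ ∈ I, ∃ i₂ ∈ I, i₁ ≠ i₂ ∧ Q ≤ d + (J.filter fun j =>
      α i₁ * t j + β i₁ = γ j * s i₁ + δ j ∧ α i₂ * t j + β i₂ = γ j * s i₂ + δ j).card := by
  classical
  have hPp : Prime P := hP.prime
  have hpos := not_isUnit_totalDegree P hP.ne_zero hP.not_isUnit
  set d' := P.totalDegree with hd'
  have hval : ∀ i j, α i * t j + β i = γ j * s i + δ j → ∀ F,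
      (psi (α i) (β i) (s i) F).eval (t j) = (phi (γ j) (δ j) (t j) F).eval (s i) := by
    intro i j h F
    rw [eval_psi, eval_phi, h]
  have hJi : ∀ i ∈ I, Q ≤ d + (J.filter fun j => α i * t j + β i = γ j * s i + δ j ∧
      phi (γ j) (δ j) (t j) P = 0).card := by
    intro i hi
    have h1 := hdeg i hi
    rw [← Finset.card_filter_add_card_filter_not
      (s := J.filter fun j => α i * t j + β i = γ j * s i + δ j)
      (fun j => phi (γ j) (δ j) (t j) P = 0)] at h1
    rw [Finset.filter_filter, Finset.filter_filter] at h1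
    have h2 : (J.filter fun j => α i * t j + β i = γ j * s i + δ j ∧
      ¬ phi (γ j) (δ j) (t j) P = 0).card ≤ d := by
      refine (card_roots_le _ t (ht.mono (by exact_mod_cast Finset.filter_subset _ _)) _ (hG i hi) ?_).trans
        ((natDegree_psi_le _ _ _ _).trans (by omega))
      intro j hj
      rw [Finset.mem_filter] at hj
      rw [hval i j hj.2.1]
      have := hJ j hj.1
      rw [map_mul] at this
      rw [(mul_eq_zero.mp this).resolve_left hj.2.2]; simp
    omega
  have hH : P ∣ hess P := by
    by_contra hnd
    have hne : hess P ≠ 0 := by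
      intro h; rw [h] at hnd; exact hnd (dvd_zero _)
    have := bezout_lines I α β s hs P (hess P) hP.ne_zero hne
      ((hP.isRelPrime_iff_not_dvd).mpr hnd) hI (by
        intro i hi
        by_contra h0
        have h1 := card_roots_le (J.filter fun j => α i * t j + β i = γ j * s i + δ j ∧
          phi (γ j) (δ j) (t j) P = 0) t (ht.mono (by exact_mod_cast Finset.filter_subset _ _)) _ h0 (by
            intro j hj
            rw [Finset.mem_filter] at hj
            rw [hval i j hj.2.1, phi_hess _ _ _ _ hj.2.2]; simp)
        have h2 := (h1.trans (natDegree_psi_le _ _ _ _)).trans (totalDegree_hess P)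
        have := hJi i hi
        omega)
    have h3 := totalDegree_hess P
    rw [← hd'] at this h3
    nlinarith
  have hPy : pderiv 0 P ≠ 0 := by
    intro h
    obtain ⟨r, hr⟩ := exists_rename_of_pderiv P (fun k hk hk' => hchar k hk (by omega)) h
    have hr0 : r ≠ 0 := by
      rintro rfl; exact hP.ne_zero (by rw [← hr]; simp)
    have h1 := card_rename I α β s hs r hr0 (by rw [hr]; exact hI)
    have h2 : r.totalDegree ≤ d' := by
      obtain ⟨g, hg⟩ : ∃ g : Fin 3 → Fin 2, ∀ i, g (Fin.succ i) = i := ⟨![0, 0, 1], by decide⟩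
      have h3 : rename g P = r := by
        rw [← hr, rename_rename, show g ∘ Fin.succ = id from funext hg, rename_id_apply]
      rw [← h3]; exact totalDegree_rename_le _ _
    nlinarith
  obtain ⟨i₁, hi₁, hu⟩ : ∃ i ∈ I, psi (α i) (β i) (s i) (pderiv 0 P) ≠ 0 := by
    by_contra! hc
    have hdeg0 := totalDegree_pderiv_le 0 P
    have hnd : ¬ P ∣ pderiv 0 P := by
      rintro ⟨q, hq⟩
      have hq0 : q ≠ 0 := by rintro rfl; simp at hq; exact hPy hq
      have := totalDegree_mul_of_isDomain hP.ne_zero hq0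
      rw [← hq] at this
      omega
    have := bezout_lines I α β s hs P (pderiv 0 P) hP.ne_zero hPy
      ((hP.isRelPrime_iff_not_dvd).mpr hnd) hI hc
    rw [← hd'] at this hdeg0
    have : (pderiv 0 P).totalDegree ≤ d' := by omega
    nlinarith
  obtain ⟨i₂, hi₂, hne⟩ : ∃ i ∈ I, i ≠ i₁ := by
    apply Finset.exists_mem_ne
    nlinarith
  refine ⟨i₁, hi₁, i₂, hi₂, hne.symm, (hJi i₁ hi₁).trans ?_⟩
  have hB := dvd_B12 (α i₁) (β i₁) (s i₁) (α i₂) (β i₂) (s i₂) P hPp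
    (fun k hk hk' => hchar k hk (by omega)) hH (hI _ hi₁) (hI _ hi₂) hu
  refine Nat.add_le_add_left (Finset.card_le_card ?_) d
  intro j hj
  rw [Finset.mem_filter] at hj ⊢
  refine ⟨hj.1, hj.2.1, ?_⟩
  obtain ⟨q, hq⟩ := hB
  have h1 := congrArg (fun F => (phi (γ j) (δ j) (t j) F).eval (s i₂)) hq
  simp only [map_mul, hj.2.2, zero_mul, Polynomial.eval_zero] at h1
  rw [eval_phi] at h1
  simp at h1
  have hs12 : s i₂ - s i₁ ≠ 0 := by
    intro h
    exact hne (hs hi₂ hi₁ (sub_eq_zero.mp h))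
  have : (s i₂ - s i₁) * (γ j * s i₂ + δ j - (α i₂ * t j + β i₂)) = 0 := by
    linear_combination h1
  have := (mul_eq_zero.mp this).resolve_left hs12
  linear_combination -this

end Core

section Red
open MvPolynomial

variable {K : Type*} [Field K]

lemma core_red {ι κ : Type*} [DecidableEq K] (I : Finset ι) (J : Finset κ) (α β s : ι → K)
    (γ δ t : κ → K) (hs : Set.InjOn s I) (ht : Set.InjOn t J) (d Q : ℕ)
    (hchar : ∀ k : ℕ, 0 < k → k ≤ d → (k : K) ≠ 0)
    (hQ : 4 * d < Q)
    (hdeg : ∀ i ∈ I, Q ≤ (J.filter fun j => α i * t j + β i = γ j * s i + δ j).card) :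
    ∀ (n : ℕ) (P G : MvPolynomial (Fin 3) K), P.totalDegree = n → P ≠ 0 →
    P.totalDegree + G.totalDegree ≤ d → 
    (∀ j ∈ J, phi (γ j) (δ j) (t j) (P * G) = 0) → 
    ∀ I' ⊆ I, (∀ i ∈ I', psi (α i) (β i) (s i) P = 0) →
     (∀ i ∈ I', psi (α i) (β i) (s i) G ≠ 0) →
    (8 * P.totalDegree ^ 2 < I'.card) →
    ∃ i₁ ∈ I, ∃ i₂ ∈ I, i₁ ≠ i₂ ∧ Q ≤ d + (J.filter fun j =>
      α i₁ * t j + β i₁ = γ j * s i₁ + δ j ∧ α i₂ * t j + β i₂ = γ j * s i₂ + δ j).card := by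
  classical
  intro n
  induction n using Nat.strong_induction_on with
  | _ n ih =>
  intro P G hn hP0 hd hJ I' hI' hIP hIG hcard
  have hnu : ¬ IsUnit P := by
    intro hu
    obtain ⟨i, hi⟩ : I'.Nonempty := Finset.card_pos.mp (by omega)
    have := hu.map (psi (α i) (β i) (s i))
    rw [hIP i hi] at this
    exact not_isUnit_zero this
  by_cases hirr : Irreducible P
  · obtain ⟨i₁, h₁, i₂, h₂, h⟩ := core_irred I' J α β s γ δ t
      (hs.mono (by exact_mod_cast hI')) ht P G hirr d Q hd hchar hIP hIG hcard hJ hQ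
      (fun i hi => hdeg i (hI' hi))
    exact ⟨i₁, hI' h₁, i₂, hI' h₂, h⟩
  rw [irreducible_iff] at hirr
  push Not at hirr
  obtain ⟨P₁, P₂, hPP, hu1, hu2⟩ := hirr hnu
  have h10 : P₁ ≠ 0 := by rintro rfl; simp at hPP; exact hP0 hPP
  have h20 : P₂ ≠ 0 := by rintro rfl; simp at hPP; exact hP0 hPP
  have hpos1 := not_isUnit_totalDegree P₁ h10 hu1
  have hpos2 := not_isUnit_totalDegree P₂ h20 hu2
  have hdeg12 : P.totalDegree = P₁.totalDegree + P₂.totalDegree := by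
    rw [hPP]; exact totalDegree_mul_of_isDomain h10 h20
  by_cases hrel : IsRelPrime P₁ P₂
  · -- relatively prime
    have hS : (I'.filter fun i => psi (α i) (β i) (s i) P₁ = 0 ∧ psi (α i) (β i) (s i) P₂ = 0).card
        ≤ 2 * P₁.totalDegree * P₂.totalDegree + P₁.totalDegree := by
      refine bezout_lines _ α β s (hs.mono ?_) P₁ P₂ h10 h20 hrel ?_ ?_
      · intro i hi
        simp only [Finset.coe_filter, Set.mem_setOf_eq] at hi
        exact hI' hi.1
      · intro i hi; exact (Finset.mem_filter.mp hi).2.1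
      · intro i hi; exact (Finset.mem_filter.mp hi).2.2
    have hcov : I'.card ≤ (I'.filter fun i => psi (α i) (β i) (s i) P₁ = 0 ∧
        psi (α i) (β i) (s i) P₂ = 0).card +
        ((I'.filter fun i => psi (α i) (β i) (s i) P₁ = 0 ∧ psi (α i) (β i) (s i) P₂ ≠ 0).card +
        (I'.filter fun i => psi (α i) (β i) (s i) P₂ = 0 ∧ psi (α i) (β i) (s i) P₁ ≠ 0).card) := by
      refine le_trans (Finset.card_le_card ?_) ((Finset.card_union_le _ _).trans
        (Nat.add_le_add_left (Finset.card_union_le _ _) _))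
      intro i hi
      have h := hIP i hi
      rw [hPP, map_mul, mul_eq_zero] at h
      simp only [Finset.mem_union, Finset.mem_filter, hi, true_and]
      tauto
    have hor : 8 * P₁.totalDegree ^ 2 <
        (I'.filter fun i => psi (α i) (β i) (s i) P₁ = 0 ∧ psi (α i) (β i) (s i) P₂ ≠ 0).card ∨
        8 * P₂.totalDegree ^ 2 <
        (I'.filter fun i => psi (α i) (β i) (s i) P₂ = 0 ∧ psi (α i) (β i) (s i) P₁ ≠ 0).card := by
      by_contra! hc
      rw [hdeg12] at hcard
      nlinarith [Nat.mul_le_mul_left P₁.totalDegree hpos2]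
    rcases hor with hor | hor
    · refine ih P₁.totalDegree (by omega) P₁ (P₂ * G) rfl h10 ?_ ?_ _
        ((Finset.filter_subset _ _).trans hI') ?_ ?_ hor
      · have := totalDegree_mul P₂ G; omega
      · rw [← mul_assoc, ← hPP]; exact hJ
      · intro i hi; exact (Finset.mem_filter.mp hi).2.1
      · intro i hi
        rw [Finset.mem_filter] at hi
        rw [map_mul]; exact mul_ne_zero hi.2.2 (hIG i hi.1)
    · refine ih P₂.totalDegree (by omega) P₂ (P₁ * G) rfl h20 ?_ ?_ _
        ((Finset.filter_subset _ _).trans hI') ?_ ?_ hor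
      · have := totalDegree_mul P₁ G; omega
      · rw [← mul_assoc, mul_comm P₂, ← hPP]; exact hJ
      · intro i hi; exact (Finset.mem_filter.mp hi).2.1
      · intro i hi
        rw [Finset.mem_filter] at hi
        rw [map_mul]; exact mul_ne_zero hi.2.2 (hIG i hi.1)
  · -- common factor
    rw [IsRelPrime] at hrel
    push Not at hrel
    obtain ⟨h, ⟨a, ha⟩, ⟨b, hb⟩, hhu⟩ := hrel
    have hh0 : h ≠ 0 := by rintro rfl; simp at ha; exact h10 ha
    have ha0 : a ≠ 0 := by rintro rfl; simp at ha; exact h10 ha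
    have hb0 : b ≠ 0 := by rintro rfl; simp at hb; exact h20 hb
    have hposh := not_isUnit_totalDegree h hh0 hhu
    have hPe : P = h * (h * a * b) := by rw [hPP, ha, hb]; ring
    have hne : h * a * b ≠ 0 := mul_ne_zero (mul_ne_zero hh0 ha0) hb0
    have hdd : P.totalDegree = h.totalDegree + (h * a * b).totalDegree := by
      rw [hPe]; exact totalDegree_mul_of_isDomain hh0 hne
    refine ih (h * a * b).totalDegree (by omega) (h * a * b) G rfl hne (by omega) ?_ I' hI' ?_ hIG ?_
    · intro j hj
      have := hJ j hj
      rw [hPe] at this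
      simp only [map_mul, mul_eq_zero] at this ⊢
      tauto
    · intro i hi
      have := hIP i hi
      rw [hPe] at this
      simp only [map_mul, mul_eq_zero] at this ⊢
      tauto
    · have : (h * a * b).totalDegree ^ 2 ≤ P.totalDegree ^ 2 := Nat.pow_le_pow_left (by omega) 2
      omega

end Red

section Vanish
open MvPolynomial

variable {K : Type*} [Field K]

lemma exists_vanishing {κ : Type*} (J : Finset κ) (γ δ t : κ → K) (D : ℕ)
    (hD : 3 * J.card < D ^ 2) :
    ∃ P : MvPolynomial (Fin 3) K, P ≠ 0 ∧ P.totalDegree ≤ 3 * D ∧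
      ∀ j ∈ J, phi (γ j) (δ j) (t j) P = 0 := by
  classical
  have hDpos : 0 < D := by
    rcases Nat.eq_zero_or_pos D with h | h
    · subst h; simp at hD
    · exact h
  let mon : (Fin 3 → Fin D) → (Fin 3 →₀ ℕ) := fun e => Finsupp.equivFunOnFinite.symm fun i => (e i : ℕ)
  have hmon : Function.Injective mon := by
    intro e e' h
    have h1 := Finsupp.equivFunOnFinite.symm.injective h
    funext i
    exact Fin.ext (congrFun h1 i)
  let pol : ((Fin 3 → Fin D) → K) →ₗ[K] MvPolynomial (Fin 3) K :=
    ∑ e, (monomial (mon e) : K →ₗ[K] _).comp (LinearMap.proj e)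
  have hpol : ∀ c, pol c = ∑ e, monomial (mon e) (c e) := by
    intro c; simp [pol, LinearMap.sum_apply]
  have hdeg : ∀ c, (pol c).totalDegree + 1 ≤ 3 * D := by
    intro c
    have : (pol c).totalDegree ≤ 3 * (D - 1) := by
      rw [hpol]
      refine totalDegree_finsetSum_le fun e _ => ?_
      refine (totalDegree_monomial_le _ _).trans ?_
      rw [Finsupp.sum_fintype _ _ (by simp)]
      have hme : ∀ i, (mon e i) ≤ D - 1 := fun i => by
        have := (e i).2
        simp [mon]; omega
      refine (Finset.sum_le_sum fun i _ => hme i).trans ?_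
      simp
    omega
  let T : ((Fin 3 → Fin D) → K) →ₗ[K] (J × Fin (3 * D) → K) :=
    LinearMap.pi fun x => (Polynomial.lcoeff K (x.2 : ℕ)).comp
      ((phi (γ x.1) (δ x.1) (t x.1)).toLinearMap.comp pol)
  have hker : LinearMap.ker T ≠ ⊥ := by
    apply LinearMap.ker_ne_bot_of_finrank_lt
    simp only [Module.finrank_fintype_fun_eq_card, Fintype.card_prod, Fintype.card_fin,
      Fintype.card_coe, Fintype.card_fun]
    nlinarith
  obtain ⟨c, hc, hc0⟩ := Submodule.exists_mem_ne_zero_of_ne_bot hker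
  refine ⟨pol c, ?_, by have := hdeg c; omega, ?_⟩
  · intro h
    apply hc0
    funext e
    have h1 := congrArg (coeff (mon e)) h
    rw [hpol, coeff_sum, coeff_zero, Finset.sum_eq_single e] at h1
    · simpa using h1
    · intro b _ hb
      rw [coeff_monomial, if_neg (fun h => hb (hmon h))]
    · simp
  · intro j hj
    ext1 n
    rw [Polynomial.coeff_zero]
    by_cases hn : n < 3 * D
    · have h1 := congrFun (LinearMap.mem_ker.mp hc) (⟨j, hj⟩, ⟨n, hn⟩)
      simpa [T] using h1
    · apply Polynomial.coeff_eq_zero_of_natDegree_lt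
      have := hdeg c
      exact (natDegree_phi_le _ _ _ _).trans_lt (by omega)

end Vanish

section Comb
open Classical in
lemma greedy_step {ι κ : Type*} (I : Finset ι) (J : Finset κ) (r : ι → κ → Prop) (d Q : ℕ)
    (hQ : d < Q) (hJ : J.Nonempty) (hdeg : ∀ i ∈ I, Q ≤ (J.filter (r i)).card)
    (J' : Finset κ) (hJ' : J' ⊆ J) :
    ∃ j ∈ J, ((∑ i ∈ I, (d + 1 - ((insert j J').filter (r i)).card) : ℕ) : ℝ) ≤
      (1 - ((Q : ℝ) - d) / ((d + 1) * J.card)) *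
        ((∑ i ∈ I, (d + 1 - (J'.filter (r i)).card) : ℕ) : ℝ) := by
  set Φ : ℕ := ∑ i ∈ I, (d + 1 - (J'.filter (r i)).card) with hΦ
  -- active set
  set Ac := I.filter fun i => (J'.filter (r i)).card ≤ d with hAc
  have h1 : Φ ≤ (d + 1) * Ac.card := by
    rw [hΦ, ← Finset.sum_filter_add_sum_filter_not I (fun i => (J'.filter (r i)).card ≤ d)]
    have e1 : ∑ i ∈ I.filter (fun i => ¬ (J'.filter (r i)).card ≤ d),
        (d + 1 - (J'.filter (r i)).card) = 0 := by
      apply Finset.sum_eq_zero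
      intro i hi
      have := (Finset.mem_filter.mp hi).2
      omega
    rw [e1, add_zero]
    refine (Finset.sum_le_card_nsmul _ _ (d + 1) fun i _ => by omega).trans ?_
    rw [smul_eq_mul, mul_comm]
  have h2 : Ac.card * (Q - d) ≤ ∑ j ∈ J \ J', (Ac.filter fun i => r i j).card := by
    have : ∑ j ∈ J \ J', (Ac.filter fun i => r i j).card =
        ∑ i ∈ Ac, ((J \ J').filter (r i)).card := by
      simp only [Finset.card_filter]
      exact Finset.sum_comm
    rw [this]
    rw [← smul_eq_mul]
    refine Finset.card_nsmul_le_sum _ _ _ fun i hi => ?_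
    rw [hAc, Finset.mem_filter] at hi
    have h3 := hdeg i hi.1
    have h4 : (J.filter (r i)) ⊆ ((J \ J').filter (r i)) ∪ (J'.filter (r i)) := by
      intro j hj
      simp only [Finset.mem_union, Finset.mem_filter, Finset.mem_sdiff] at hj ⊢
      tauto
    have h5 := (Finset.card_le_card h4).trans (Finset.card_union_le _ _)
    have := hi.2
    omega
  -- decrease
  have h3 : ∀ j ∈ J \ J', (∑ i ∈ I, (d + 1 - ((insert j J').filter (r i)).card)) +
      (Ac.filter fun i => r i j).card ≤ Φ := by
    intro j hj
    have hjn := (Finset.mem_sdiff.mp hj).2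
    have : (Ac.filter fun i => r i j).card = ∑ i ∈ I, if ((J'.filter (r i)).card ≤ d ∧ r i j) then 1 else 0 := by
      rw [hAc, Finset.filter_filter, Finset.card_filter]
    rw [this, hΦ, ← Finset.sum_add_distrib]
    refine Finset.sum_le_sum fun i _ => ?_
    rw [Finset.filter_insert]
    by_cases hr : r i j
    · rw [if_pos hr, Finset.card_insert_of_notMem (by simp [hjn])]
      split_ifs with h
      · omega
      · omega
    · rw [if_neg hr, if_neg (by tauto)]; omega
  -- choose
  by_cases hne : (J \ J').Nonempty
  · obtain ⟨j, hj, hmax⟩ := Finset.exists_max_image (J \ J') (fun j => (Ac.filter fun i => r i j).card) hne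
    refine ⟨j, (Finset.mem_sdiff.mp hj).1, ?_⟩
    have h4 : Ac.card * (Q - d) ≤ J.card * (Ac.filter fun i => r i j).card := by
      refine h2.trans ((Finset.sum_le_card_nsmul _ _ _ hmax).trans ?_)
      rw [smul_eq_mul]
      exact Nat.mul_le_mul_right _ (Finset.card_le_card Finset.sdiff_subset)
    have h5 := h3 j hj
    have h6 : Φ * (Q - d) ≤ (d + 1) * J.card * (Ac.filter fun i => r i j).card := by
      calc Φ * (Q - d) ≤ (d + 1) * Ac.card * (Q - d) := Nat.mul_le_mul_right _ h1
        _ = (d + 1) * (Ac.card * (Q - d)) := by ring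
        _ ≤ (d + 1) * (J.card * (Ac.filter fun i => r i j).card) := Nat.mul_le_mul_left _ h4
        _ = _ := by ring
    have h6' : (Φ : ℝ) * ((Q : ℝ) - d) ≤ (d + 1) * J.card * (Ac.filter fun i => r i j).card := by
      rw [← Nat.cast_sub hQ.le]; exact_mod_cast h6
    have h5' : ((∑ i ∈ I, (d + 1 - ((insert j J').filter (r i)).card) : ℕ) : ℝ) +
      (Ac.filter fun i => r i j).card ≤ Φ := by exact_mod_cast h5
    have hJp : (0 : ℝ) < (d + 1) * J.card := by
      have : 0 < J.card := hJ.card_pos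
      positivity
    have h7 : (Φ : ℝ) * (((Q : ℝ) - d) / ((d + 1) * J.card)) ≤ (Ac.filter fun i => r i j).card := by
      rw [← mul_div_assoc, div_le_iff₀ hJp]
      linarith
    linarith
  · rw [Finset.not_nonempty_iff_eq_empty] at hne
    rw [hne, Finset.sum_empty] at h2
    have hA0 : Ac.card = 0 := by
      rcases Nat.eq_zero_or_pos Ac.card with h | h
      · exact h
      · have := Nat.mul_pos h (show 0 < Q - d by omega); omega
    have hΦ0 : Φ = 0 := by rw [hA0] at h1; omega
    obtain ⟨j, hj⟩ := hJ
    refine ⟨j, hj, ?_⟩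
    rw [hΦ0]
    have hsub : J ⊆ J' := by
      rw [← Finset.sdiff_eq_empty_iff_subset]; exact hne
    rw [Finset.insert_eq_self.mpr (hsub hj), ← hΦ, hΦ0]
    simp

open Classical in
lemma greedy {ι κ : Type*} (I : Finset ι) (J : Finset κ) (r : ι → κ → Prop) (d Q : ℕ)
    (hQ : d < Q) (hJ : J.Nonempty) (hdeg : ∀ i ∈ I, Q ≤ (J.filter (r i)).card) (m : ℕ)
    (hm : Real.log (I.card * (d + 1)) < m * (((Q : ℝ) - d) / ((d + 1) * J.card)))
    (hQJ : Q ≤ J.card) :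
    ∃ J' ⊆ J, J'.card ≤ m ∧ ∀ i ∈ I, d < (J'.filter (r i)).card := by
  have hJp : (0 : ℝ) < (d + 1) * J.card := by
    have : 0 < J.card := hJ.card_pos
    positivity
  set ρ := ((Q : ℝ) - d) / ((d + 1) * J.card) with hρ
  have hρ1 : ρ ≤ 1 := by
    rw [hρ, div_le_one hJp]
    have h1 : (Q : ℝ) ≤ J.card := by exact_mod_cast hQJ
    have : (0:ℝ) ≤ d := by positivity
    nlinarith [Nat.cast_nonneg (α := ℝ) J.card]
  have hstep : ∀ m : ℕ, ∃ J' ⊆ J, J'.card ≤ m ∧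
      ((∑ i ∈ I, (d + 1 - (J'.filter (r i)).card) : ℕ) : ℝ) ≤ (1 - ρ) ^ m * (I.card * (d + 1)) := by
    intro m
    induction m with
    | zero => refine ⟨∅, by simp, by simp, ?_⟩; simp
    | succ m ih =>
      obtain ⟨J', hJ', hc, hb⟩ := ih
      obtain ⟨j, hj, h⟩ := greedy_step I J r d Q hQ hJ hdeg J' hJ'
      refine ⟨insert j J', Finset.insert_subset hj hJ', (Finset.card_insert_le _ _).trans (by omega), ?_⟩
      refine h.trans ?_
      rw [← hρ, pow_succ, mul_comm ((1 - ρ) ^ m), mul_assoc]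
      exact mul_le_mul_of_nonneg_left hb (by linarith)
  rcases I.eq_empty_or_nonempty with hI | hI
  · subst hI; exact ⟨∅, by simp, by simp, by simp⟩
  obtain ⟨J', hJ', hc, hb⟩ := hstep m
  refine ⟨J', hJ', hc, ?_⟩
  have hlt : (1 - ρ) ^ m * (I.card * (d + 1) : ℝ) < 1 := by
    have hpos : (0 : ℝ) < I.card * (d + 1) := by
      have : 0 < I.card := hI.card_pos
      positivity
    have h1 : (1 - ρ) ^ m ≤ Real.exp (-(m * ρ)) := by
      have : (1 - ρ) ≤ Real.exp (-ρ) := by linarith [Real.add_one_le_exp (-ρ)]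
      calc (1 - ρ) ^ m ≤ (Real.exp (-ρ)) ^ m := pow_le_pow_left₀ (by linarith) this m
        _ = _ := by rw [← Real.exp_nat_mul]; ring_nf
    calc _ ≤ Real.exp (-(m * ρ)) * (I.card * (d + 1) : ℝ) :=
          mul_le_mul_of_nonneg_right h1 hpos.le
      _ < Real.exp (- Real.log (I.card * (d + 1))) * (I.card * (d + 1) : ℝ) := by
          apply mul_lt_mul_of_pos_right _ hpos
          apply Real.exp_lt_exp.mpr; linarith
      _ = 1 := by rw [Real.exp_neg, Real.exp_log hpos]; field_simp
  have h0 : (∑ i ∈ I, (d + 1 - (J'.filter (r i)).card) : ℕ) = 0 := by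
    have := hb.trans_lt hlt
    have : (∑ i ∈ I, (d + 1 - (J'.filter (r i)).card) : ℕ) < 1 := by exact_mod_cast this
    omega
  intro i hi
  have := (Finset.sum_eq_zero_iff.mp h0) i hi
  omega

open Classical in
lemma prune {ι κ : Type*} (r : ι → κ → Prop) (Q : ℕ) : ∀ (n : ℕ) (I : Finset ι) (J : Finset κ),
    I.card + J.card = n →
    Q * (I.card + J.card) < ∑ i ∈ I, (J.filter (r i)).card →
    ∃ I' ⊆ I, ∃ J' ⊆ J, I'.Nonempty ∧ (∀ i ∈ I', Q ≤ (J'.filter (r i)).card) ∧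
      (∀ j ∈ J', Q ≤ (I'.filter fun i => r i j).card) := by
  intro n
  induction n with
  | zero =>
    intro I J h h2
    have : I = ∅ := Finset.card_eq_zero.mp (by omega)
    subst this; simp at h2
  | succ n ih =>
    intro I J hn h
    by_cases h1 : ∀ i ∈ I, Q ≤ (J.filter (r i)).card
    · by_cases h2 : ∀ j ∈ J, Q ≤ (I.filter fun i => r i j).card
      · refine ⟨I, subset_rfl, J, subset_rfl, ?_, h1, h2⟩
        by_contra hc
        rw [Finset.not_nonempty_iff_eq_empty] at hc
        subst hc; simp at h
      · push Not at h2
        obtain ⟨j, hj, hj2⟩ := h2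
        have hs : ∑ i ∈ I, (J.filter (r i)).card =
            ∑ i ∈ I, ((J.erase j).filter (r i)).card + (I.filter fun i => r i j).card := by
          rw [Finset.card_filter, ← Finset.sum_add_distrib]
          refine Finset.sum_congr rfl fun i _ => ?_
          rw [Finset.card_filter, Finset.card_filter, Finset.sum_erase_add _ _ hj]
        have hc := Finset.card_erase_add_one hj
        obtain ⟨I', hI', J', hJ', h3⟩ := ih I (J.erase j) (by omega) (by
          rw [← hc] at h; rw [hs] at h; nlinarith)
        exact ⟨I', hI', J', hJ'.trans (Finset.erase_subset _ _), h3⟩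
    · push Not at h1
      obtain ⟨i, hi, hi2⟩ := h1
      have hs := Finset.sum_erase_add I (fun i => (J.filter (r i)).card) hi
      have hc := Finset.card_erase_add_one hi
      obtain ⟨I', hI', J', hJ', h3⟩ := ih (I.erase i) J (by omega) (by
          rw [← hc] at h; rw [← hs] at h; nlinarith)
      exact ⟨I', hI'.trans (Finset.erase_subset _ _), J', hJ', h3⟩
end Comb

section Inc
open MvPolynomial

variable {K : Type*} [Field K]

lemma inc_core {ι κ : Type*} [DecidableEq K] (p : ℕ) [CharP K p] (I : Finset ι) (J : Finset κ)
    (α β s : ι → K)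
    (γ δ t : κ → K) (hs : Set.InjOn s I) (ht : Set.InjOn t J) (N k Q : ℕ) (hI : I.Nonempty)
    (hJI : J.card ≤ I.card) (hIN : I.card ≤ N) (hNp : N ≤ p ^ 2)
    (hQ : 10000 * Real.sqrt N * (1 + Real.log N) + k ≤ Q)
    (hdeg : ∀ i ∈ I, Q ≤ (J.filter fun j => α i * t j + β i = γ j * s i + δ j).card)
    (hdeg' : ∀ j ∈ J, Q ≤ (I.filter fun i => α i * t j + β i = γ j * s i + δ j).card)
    (hco : ∀ i₁ ∈ I, ∀ i₂ ∈ I, i₁ ≠ i₂ → (J.filter fun j =>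
      α i₁ * t j + β i₁ = γ j * s i₁ + δ j ∧ α i₂ * t j + β i₂ = γ j * s i₂ + δ j).card ≤ k) :
    False := by
  classical
  obtain ⟨i0, hi0⟩ := hI
  have hQn : Q ≤ J.card := (hdeg i0 hi0).trans (Finset.card_filter_le _ _)
  have hIpos : 0 < I.card := Finset.card_pos.mpr ⟨i0, hi0⟩
  have hN1 : (1 : ℝ) ≤ N := by exact_mod_cast (show 1 ≤ N by omega)
  have hlog : 0 ≤ Real.log N := Real.log_nonneg hN1
  have hsq1 : (1 : ℝ) ≤ Real.sqrt N := by
    rw [Real.one_le_sqrt]; exact hN1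
  have hQ1 : 10000 * Real.sqrt N + k ≤ Q := by nlinarith
  have hQbig : (10000 : ℝ) ≤ Q := by
    have : (0 : ℝ) ≤ k := by positivity
    linarith
  have hQbig' : 10000 ≤ Q := by exact_mod_cast hQbig
  set n := J.card with hn
  set D := Nat.sqrt n / 9 with hD
  have hsn : 100 ≤ Nat.sqrt n := by rw [Nat.le_sqrt]; omega
  have hD11 : 11 ≤ D := by omega
  have hDle : 81 * D ^ 2 ≤ n := by
    have h1 : 9 * D ≤ Nat.sqrt n := by omega
    have h2 := Nat.sqrt_le' n
    nlinarith
  have hDge : n ≤ 324 * D ^ 2 := by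
    have h1 : Nat.sqrt n + 1 ≤ 18 * D := by omega
    have h2 := Nat.lt_succ_sqrt' n
    rw [Nat.succ_eq_add_one] at h2
    nlinarith
  set m := (D ^ 2 - 1) / 3 with hm
  have hD2 : 121 ≤ D ^ 2 := by nlinarith
  have hm3 : 3 * m < D ^ 2 := by omega
  have hm6 : D ^ 2 ≤ 6 * m := by omega
  have hDN : (9 * D : ℝ) ≤ Real.sqrt N := by
    apply Real.le_sqrt_of_sq_le
    have : 81 * D ^ 2 ≤ N := by omega
    have : (81 * D ^ 2 : ℝ) ≤ N := by exact_mod_cast this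
    nlinarith
  have hDp : (0 : ℝ) < D := by exact_mod_cast (show 0 < D by omega)
  have hkr : (0 : ℝ) ≤ k := by positivity
  have hQd : 12 * D + k + 1 ≤ Q := by
    have : (12 * D + k + 1 : ℝ) ≤ Q := by linarith
    exact_mod_cast this
  have hJne : J.Nonempty := Finset.card_pos.mp (by omega)
  obtain ⟨J', hJ', hJc, hJd⟩ := greedy I J (fun i j => α i * t j + β i = γ j * s i + δ j) (3 * D) Q
    (by omega) hJne (by intro i hi; convert hdeg i hi) m (by
      have h1 : Real.log (I.card * ((3 * D : ℕ) + 1)) ≤ 2 * Real.log N := by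
        rw [show 2 * Real.log N = Real.log ((N : ℝ) ^ 2) by rw [Real.log_pow]; norm_num]
        apply Real.log_le_log
        · have : (0 : ℝ) < I.card := by exact_mod_cast hIpos
          positivity
        · have : 3 * D + 1 ≤ N := by nlinarith
          have := Nat.mul_le_mul hIN this
          rw [sq]
          exact_mod_cast this
      refine h1.trans_lt ?_
      have hnp : (0 : ℝ) < n := by exact_mod_cast (show 0 < n by omega)
      rw [← mul_div_assoc, lt_div_iff₀ (by positivity)]
      have e1 : (n : ℝ) ≤ 324 * D ^ 2 := by exact_mod_cast hDge
      have e2 : (D : ℝ) ^ 2 ≤ 6 * m := by exact_mod_cast hm6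
      have e3 : ((3 * D : ℕ) : ℝ) = 3 * D := by push_cast; ring
      rw [e3]
      have e4 : (9000 * Real.sqrt N * (1 + Real.log N)) ≤ (Q : ℝ) - 3 * D := by nlinarith
      have e5 : (9000 * (9 * D) * (1 + Real.log N)) ≤ (Q : ℝ) - 3 * D := by
        refine le_trans ?_ e4
        gcongr
      calc 2 * Real.log N * ((3 * D + 1) * n) ≤ 2 * Real.log N * ((4 * D) * (324 * D ^ 2)) := by
            gcongr
            have : (1 : ℝ) ≤ D := by exact_mod_cast (show 1 ≤ D by omega)
            linarith
        _ = (D ^ 2 / 6) * (15552 * D * Real.log N) := by ring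
        _ < (D ^ 2 / 6) * (9000 * (9 * D) * (1 + Real.log N)) := by
            apply mul_lt_mul_of_pos_left _ (by positivity)
            nlinarith
        _ ≤ m * ((Q : ℝ) - 3 * D) := by
            apply mul_le_mul _ e5 (by positivity) (by positivity)
            linarith) hQn
  obtain ⟨P, hP0, hPd, hPJ⟩ := exists_vanishing J' γ δ t D (by omega)
  have hval : ∀ i j, α i * t j + β i = γ j * s i + δ j → ∀ F,
      (psi (α i) (β i) (s i) F).eval (t j) = (phi (γ j) (δ j) (t j) F).eval (s i) := by
    intro i j h F
    rw [eval_psi, eval_phi, h]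
  have hPI : ∀ i ∈ I, psi (α i) (β i) (s i) P = 0 := by
    intro i hi
    by_contra h0
    have h1 := hJd i hi
    have h2 := card_roots_le (J'.filter fun j => α i * t j + β i = γ j * s i + δ j) t
      (ht.mono (by
        intro j hj
        exact hJ' (Finset.mem_filter.mp (by exact_mod_cast hj)).1)) _ h0 (by
        intro j hj
        rw [Finset.mem_filter] at hj
        rw [hval i j hj.2, hPJ j hj.1]; simp)
    have h3 := natDegree_psi_le (α i) (β i) (s i) P
    have h4 : (J'.filter fun j => α i * t j + β i = γ j * s i + δ j).card ≤ 3 * D := by omega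
    have h5 : (J'.filter fun j => α i * t j + β i = γ j * s i + δ j).card > 3 * D := by
      convert h1
    omega
  have hPJ2 : ∀ j ∈ J, phi (γ j) (δ j) (t j) P = 0 := by
    intro j hj
    by_contra h0
    have h1 := hdeg' j hj
    have h2 := card_roots_le (I.filter fun i => α i * t j + β i = γ j * s i + δ j) s
      (hs.mono (by
        intro i hi
        exact (Finset.mem_filter.mp (by exact_mod_cast hi)).1)) _ h0 (by
        intro i hi
        rw [Finset.mem_filter] at hi
        rw [← hval i j hi.2, hPI i hi.1]; simp)
    have h3 := natDegree_phi_le (γ j) (δ j) (t j) P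
    omega
  obtain ⟨i₁, h₁, i₂, h₂, hne, hle⟩ := core_red I J α β s γ δ t hs ht (3 * D) Q (by
      intro q hq hq' h0
      rw [CharP.cast_eq_zero_iff K p] at h0
      have h1 := Nat.le_of_dvd hq h0
      have h2 : p ≤ 3 * D := h1.trans hq'
      have h3 : 81 * D ^ 2 ≤ p ^ 2 := by omega
      have h4 := Nat.pow_le_pow_left h2 2
      nlinarith) (by omega) hdeg P.totalDegree P 1 rfl hP0 (by
      rw [totalDegree_one]; omega) (by simpa using hPJ2) I subset_rfl hPI (by simp) (by
      have := Nat.pow_le_pow_left hPd 2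
      nlinarith)
  have := hco i₁ h₁ i₂ h₂ hne
  omega

lemma incidence {ι κ : Type*} [DecidableEq K] (p : ℕ) [CharP K p] (I : Finset ι) (J : Finset κ)
    (α β s : ι → K)
    (γ δ t : κ → K) (hs : Set.InjOn s I) (ht : Set.InjOn t J) (N k Q : ℕ)
    (hIN : I.card ≤ N) (hJN : J.card ≤ N) (hNp : N ≤ p ^ 2)
    (hQ : 10000 * Real.sqrt N * (1 + Real.log N) + k ≤ Q)
    (hco : ∀ i₁ ∈ I, ∀ i₂ ∈ I, i₁ ≠ i₂ → (J.filter fun j =>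
      α i₁ * t j + β i₁ = γ j * s i₁ + δ j ∧ α i₂ * t j + β i₂ = γ j * s i₂ + δ j).card ≤ k)
    (hco' : ∀ j₁ ∈ J, ∀ j₂ ∈ J, j₁ ≠ j₂ → (I.filter fun i =>
      α i * t j₁ + β i = γ j₁ * s i + δ j₁ ∧ α i * t j₂ + β i = γ j₂ * s i + δ j₂).card ≤ k) :
    ∑ i ∈ I, (J.filter fun j => α i * t j + β i = γ j * s i + δ j).card ≤
      Q * (I.card + J.card) := by
  classical
  by_contra! hlt
  obtain ⟨I', hI', J', hJ', hne, hd, hd'⟩ := prune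
    (fun i j => α i * t j + β i = γ j * s i + δ j) Q _ I J rfl (by
      refine hlt.trans_le (le_of_eq ?_)
      refine Finset.sum_congr rfl fun i _ => ?_
      congr 1; ext j; simp)
  have hsI := hs.mono (show (I' : Set ι) ⊆ I by exact_mod_cast hI')
  have htJ := ht.mono (show (J' : Set κ) ⊆ J by exact_mod_cast hJ')
  have hdA : ∀ i ∈ I', Q ≤ (J'.filter fun j => α i * t j + β i = γ j * s i + δ j).card := by
    intro i hi; convert hd i hi
  have hdB : ∀ j ∈ J', Q ≤ (I'.filter fun i => α i * t j + β i = γ j * s i + δ j).card := by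
    intro j hj; convert hd' j hj
  have hcI := Finset.card_le_card hI'
  have hcJ := Finset.card_le_card hJ'
  rcases le_total J'.card I'.card with h | h
  · refine inc_core p I' J' α β s γ δ t hsI htJ N k Q hne h (by omega) hNp hQ hdA hdB ?_
    intro i₁ h₁ i₂ h₂ h12
    refine le_trans (Finset.card_le_card ?_) (hco i₁ (hI' h₁) i₂ (hI' h₂) h12)
    exact Finset.filter_subset_filter _ hJ'
  · refine inc_core p J' I' γ δ t α β s htJ hsI N k Q ?_ h (by omega) hNp hQ ?_ ?_ ?_
    · apply Finset.card_pos.mp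
      have := hne.card_pos; omega
    · simpa only [eq_comm] using hdB
    · simpa only [eq_comm] using hdA
    · intro i₁ h₁ i₂ h₂ h12
      refine le_trans (Finset.card_le_card ?_) (hco' i₁ (hJ' h₁) i₂ (hJ' h₂) h12)
      intro i hi
      rw [Finset.mem_filter] at hi ⊢
      exact ⟨hI' hi.1, hi.2.1.symm, hi.2.2.symm⟩
end Inc

section Appl
open Polynomial

variable {F : Type*} [Field F]

lemma appl_T (c : F) : algebraMap F[X] (FractionRing F[X]) (1 - X ^ 3 * C c) ≠ 0 := by
  rw [Ne, FaithfulSMul.algebraMap_eq_zero_iff]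
  intro h
  have := congrArg (fun f => coeff f 0) h
  simp at this

lemma appl_U (c : F) : algebraMap F[X] (FractionRing F[X]) (X ^ 2 * C c + 1) ≠ 0 := by
  rw [Ne, FaithfulSMul.algebraMap_eq_zero_iff]
  intro h
  have := congrArg (fun f => coeff f 0) h
  simp at this

lemma coeff_ext6 {F : Type*} [Field F] (a0 a1 a2 a3 a4 a5 b0 b1 b2 b3 b4 b5 : F)
    (h : C a0 + C a1 * X + C a2 * X ^ 2 + C a3 * X ^ 3 + C a4 * X ^ 4 + C a5 * X ^ 5 =
      C b0 + C b1 * X + C b2 * X ^ 2 + C b3 * X ^ 3 + C b4 * X ^ 4 + C b5 * X ^ 5) :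
    a0 = b0 ∧ a1 = b1 ∧ a2 = b2 ∧ a3 = b3 := by
  refine ⟨?_, ?_, ?_, ?_⟩
  · simpa [coeff_X, coeff_X_pow, coeff_C] using congrArg (fun f => coeff f 0) h
  · simpa [coeff_X, coeff_X_pow, coeff_C] using congrArg (fun f => coeff f 1) h
  · simpa [coeff_X, coeff_X_pow, coeff_C] using congrArg (fun f => coeff f 2) h
  · simpa [coeff_X, coeff_X_pow, coeff_C] using congrArg (fun f => coeff f 3) h

lemma appl_s_inj (x₁ c₁ w₁ x₂ c₂ w₂ : F)
    (h : algebraMap F[X] (FractionRing F[X]) (C x₁ + X * C c₁ + X ^ 2 * C w₁) /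
        algebraMap F[X] (FractionRing F[X]) (1 - X ^ 3 * C c₁) =
      algebraMap F[X] (FractionRing F[X]) (C x₂ + X * C c₂ + X ^ 2 * C w₂) /
        algebraMap F[X] (FractionRing F[X]) (1 - X ^ 3 * C c₂)) :
    x₁ = x₂ ∧ c₁ = c₂ ∧ w₁ = w₂ := by
  rw [div_eq_div_iff (appl_T _) (appl_T _), ← map_mul, ← map_mul] at h
  have h := FaithfulSMul.algebraMap_injective F[X] (FractionRing F[X]) h
  have e : ∀ a b c d : F, (C a + X * C b + X ^ 2 * C c) * (1 - X ^ 3 * C d) =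
      C a + C b * X + C c * X ^ 2 + C (-(a * d)) * X ^ 3 + C (-(b * d)) * X ^ 4
        + C (-(c * d)) * X ^ 5 := by
    intro a b c d
    simp only [map_neg, map_mul]; ring
  rw [e, e] at h
  obtain ⟨h0, h1, h2, -⟩ := coeff_ext6 _ _ _ _ _ _ _ _ _ _ _ _ h
  exact ⟨h0, h1, h2⟩

lemma appl_t_inj (x₁ c₁ w₁ x₂ c₂ w₂ : F)
    (h : algebraMap F[X] (FractionRing F[X]) (X ^ 3 * C w₁ - X * C c₁ - C x₁) /
        algebraMap F[X] (FractionRing F[X]) (X ^ 2 * C c₁ + 1) =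
      algebraMap F[X] (FractionRing F[X]) (X ^ 3 * C w₂ - X * C c₂ - C x₂) /
        algebraMap F[X] (FractionRing F[X]) (X ^ 2 * C c₂ + 1)) :
    x₁ = x₂ ∧ c₁ = c₂ ∧ w₁ = w₂ := by
  rw [div_eq_div_iff (appl_U _) (appl_U _), ← map_mul, ← map_mul] at h
  have h := FaithfulSMul.algebraMap_injective F[X] (FractionRing F[X]) h
  have e : ∀ a b c d : F, (X ^ 3 * C c - X * C b - C a) * (X ^ 2 * C d + 1) =
      C (-a) + C (-b) * X + C (- (a * d)) * X ^ 2 + C (c - b * d) * X ^ 3 + C 0 * X ^ 4 + C (c * d) * X ^ 5 := by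
    intro a b c d
    simp only [map_neg, map_mul, map_sub, map_zero]; ring
  rw [e, e] at h
  obtain ⟨h0, h1, -, h3⟩ := coeff_ext6 _ _ _ _ _ _ _ _ _ _ _ _ h
  exact ⟨neg_injective h0, neg_injective h1, by linear_combination h3⟩

lemma appl_edge (x c' w' x' c w : F) :
    (algebraMap F[X] (FractionRing F[X]) (C c') /
        algebraMap F[X] (FractionRing F[X]) (1 - X ^ 3 * C c')) *
    (algebraMap F[X] (FractionRing F[X]) (X ^ 3 * C w - X * C c - C x') /
        algebraMap F[X] (FractionRing F[X]) (X ^ 2 * C c + 1)) +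
    (algebraMap F[X] (FractionRing F[X]) (C (-w')) /
        algebraMap F[X] (FractionRing F[X]) (1 - X ^ 3 * C c')) =
    (algebraMap F[X] (FractionRing F[X]) (C (-c)) /
        algebraMap F[X] (FractionRing F[X]) (X ^ 2 * C c + 1)) *
    (algebraMap F[X] (FractionRing F[X]) (C x + X * C c' + X ^ 2 * C w') /
        algebraMap F[X] (FractionRing F[X]) (1 - X ^ 3 * C c')) +
    (algebraMap F[X] (FractionRing F[X]) (C (-w)) /
        algebraMap F[X] (FractionRing F[X]) (X ^ 2 * C c + 1)) ↔ w + x * c = w' + x' * c' := by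
  have hT := appl_T c'
  have hU := appl_U c
  have key : algebraMap F[X] (FractionRing F[X]) (C c' * (X ^ 3 * C w - X * C c - C x') +
      C (-w') * (X ^ 2 * C c + 1)) = algebraMap F[X] (FractionRing F[X])
        (C (-c) * (C x + X * C c' + X ^ 2 * C w') + C (-w) * (1 - X ^ 3 * C c')) ↔
        w + x * c = w' + x' * c' := by
    rw [(FaithfulSMul.algebraMap_injective F[X] (FractionRing F[X])).eq_iff]
    constructor
    · intro h
      have h2 : C (w + x * c) = C (w' + x' * c') := by
        simp only [map_neg, map_add, map_mul] at h ⊢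
        linear_combination h
      exact C_injective h2
    · intro h
      have h2 := congrArg C h
      simp only [map_neg, map_add, map_mul] at h2 ⊢
      linear_combination h2
  rw [← key]
  simp only [map_mul, map_add] at hT hU ⊢
  generalize algebraMap F[X] (FractionRing F[X]) (1 - X ^ 3 * C c') = T at *
  generalize algebraMap F[X] (FractionRing F[X]) (X ^ 3 * C w - X * C c - C x') = S at *
  rw [map_one] at *
  generalize algebraMap F[X] (FractionRing F[X]) (X ^ 2) *
    algebraMap F[X] (FractionRing F[X]) (C c) + 1 = U at *
  field_simp
end Appl

/-- The edge relation. -/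
def edgeR {F : Type*} [Field F] (i j : F × F × F) : Prop :=
  (j.2.2 + i.1) * j.2.1 = (i.2.2 + j.1) * i.2.1

open Classical in
lemma codeg_edge {F : Type*} [Field F] [DecidableEq F] (A D : Finset F)
    (i₁ i₂ : F × F × F) (h1 : i₁.2.1 ≠ 0) (hne : i₁ ≠ i₂) :
    ((D ×ˢ (A.erase 0) ×ˢ A).filter fun j => edgeR i₁ j ∧ edgeR i₂ j).card ≤ D.card + A.card := by
  obtain ⟨x₁, c₁, b₁⟩ := i₁
  obtain ⟨x₂, c₂, b₂⟩ := i₂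
  by_cases hx : x₁ = x₂
  · subst hx
    by_cases hc : c₁ = c₂
    · subst hc
      have hb : b₁ ≠ b₂ := by rintro rfl; exact hne rfl
      rw [Finset.filter_eq_empty_iff.mpr]
      · simp
      · rintro ⟨x, c, b⟩ - ⟨e1, e2⟩
        simp only [edgeR] at e1 e2
        apply hb
        have : (b₁ - b₂) * c₁ = 0 := by linear_combination e2 - e1
        exact sub_eq_zero.mp ((mul_eq_zero.mp this).resolve_right h1)
    · refine le_trans ?_ (Nat.le_add_left _ _)
      refine Finset.card_le_card_of_injOn (fun j => j.2.1) ?_ ?_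
      · rintro ⟨x, c, b⟩ hj
        rw [Finset.mem_coe, Finset.mem_filter] at hj
        have := hj.1
        simp at this
        simp [this.2.1.2]
      · rintro ⟨x, c, b⟩ hj ⟨x', c', b'⟩ hj' hcc
        rw [Finset.mem_coe, Finset.mem_filter] at hj hj'
        simp [edgeR] at hj hj' hcc
        subst hcc
        obtain ⟨⟨-, ⟨hc0, -⟩, -⟩, e1, e2⟩ := hj
        obtain ⟨-, e1', e2'⟩ := hj'
        have hxx : (x - x') * (c₁ - c₂) = 0 := by linear_combination e2 - e1 - e2' + e1'
        have hxx := sub_eq_zero.mp ((mul_eq_zero.mp hxx).resolve_right (sub_ne_zero.mpr hc))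
        subst hxx
        have hbb : (b - b') * c = 0 := by linear_combination e1 - e1'
        have hbb := sub_eq_zero.mp ((mul_eq_zero.mp hbb).resolve_right hc0)
        subst hbb; rfl
  · refine le_trans ?_ (Nat.le_add_right _ _)
    refine Finset.card_le_card_of_injOn (fun j => j.1) ?_ ?_
    · rintro ⟨x, c, b⟩ hj
      rw [Finset.mem_coe, Finset.mem_filter] at hj
      have := hj.1
      simp at this
      simp [this.1]
    · rintro ⟨x, c, b⟩ hj ⟨x', c', b'⟩ hj' hcc
      rw [Finset.mem_coe, Finset.mem_filter] at hj hj'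
      simp [edgeR] at hj hj' hcc
      subst hcc
      obtain ⟨⟨-, ⟨hc0, -⟩, -⟩, e1, e2⟩ := hj
      obtain ⟨-, e1', e2'⟩ := hj'
      have hxx : (c - c') * (x₁ - x₂) = 0 := by linear_combination e1 - e2 - e1' + e2'
      have hxx := sub_eq_zero.mp ((mul_eq_zero.mp hxx).resolve_right (sub_ne_zero.mpr hx))
      subst hxx
      have hbb : (b - b') * c = 0 := by linear_combination e1 - e1'
      have hbb := sub_eq_zero.mp ((mul_eq_zero.mp hbb).resolve_right hc0)
      subst hbb; rfl

open Classical in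
lemma edge_bound (p : ℕ) [Fact p.Prime] (A D : Finset (ZMod p)) (N Q : ℕ)
    (hN : (D ×ˢ (A.erase 0) ×ˢ A).card ≤ N) (hNp : N ≤ p ^ 2)
    (hQ : 10000 * Real.sqrt N * (1 + Real.log N) + (D.card + A.card : ℕ) ≤ Q) :
    ∑ i ∈ (D ×ˢ (A.erase 0) ×ˢ A), ((D ×ˢ (A.erase 0) ×ˢ A).filter fun j => edgeR i j).card ≤
      2 * N * Q := by
  set V := D ×ˢ (A.erase 0) ×ˢ A with hV
  have hmem : ∀ v ∈ V, v.2.1 ≠ 0 := by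
    rintro ⟨x, c, b⟩ hv
    simp [hV] at hv
    exact hv.2.1.1
  have hsymm : ∀ i j : ZMod p × ZMod p × ZMod p, edgeR i j ↔ edgeR j i := by
    intro i j; exact eq_comm
  let K := FractionRing (Polynomial (ZMod p))
  haveI : CharP (Polynomial (ZMod p)) p := inferInstance
  haveI : CharP K p := charP_of_injective_algebraMap
    (FaithfulSMul.algebraMap_injective (Polynomial (ZMod p)) K) p
  let am := algebraMap (Polynomial (ZMod p)) K
  have hed : ∀ i j : ZMod p × ZMod p × ZMod p, edgeR i j ↔
      (j.2.2 * j.2.1) + i.1 * j.2.1 = i.2.2 * i.2.1 + j.1 * i.2.1 := by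
    intro i j; simp only [edgeR, add_mul]
  have hinj : ∀ v ∈ V, ∀ v' ∈ V, (v.1 = v'.1 ∧ v.2.1 = v'.2.1 ∧ v.2.2 * v.2.1 = v'.2.2 * v'.2.1) →
      v = v' := by
    rintro ⟨x, c, b⟩ hv ⟨x', c', b'⟩ hv' ⟨h1, h2, h3⟩
    simp only at h1 h2 h3
    subst h1 h2
    have := mul_right_cancel₀ (hmem _ hv) h3
    subst this; rfl
  have main := incidence (K := K) p V V
    (fun v => am (Polynomial.C v.2.1) / am (1 - Polynomial.X ^ 3 * Polynomial.C v.2.1))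
    (fun v => am (Polynomial.C (-(v.2.2 * v.2.1))) / am (1 - Polynomial.X ^ 3 * Polynomial.C v.2.1))
    (fun v => am (Polynomial.C v.1 + Polynomial.X * Polynomial.C v.2.1 +
      Polynomial.X ^ 2 * Polynomial.C (v.2.2 * v.2.1)) /
      am (1 - Polynomial.X ^ 3 * Polynomial.C v.2.1))
    (fun v => am (Polynomial.C (-v.2.1)) / am (Polynomial.X ^ 2 * Polynomial.C v.2.1 + 1))
    (fun v => am (Polynomial.C (-(v.2.2 * v.2.1))) / am (Polynomial.X ^ 2 * Polynomial.C v.2.1 + 1))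
    (fun v => am (Polynomial.X ^ 3 * Polynomial.C (v.2.2 * v.2.1) - Polynomial.X * Polynomial.C v.2.1
      - Polynomial.C v.1) / am (Polynomial.X ^ 2 * Polynomial.C v.2.1 + 1))
    (by
      intro v hv v' hv' h
      exact hinj v hv v' hv' (appl_s_inj _ _ _ _ _ _ h))
    (by
      intro v hv v' hv' h
      exact hinj v hv v' hv' (appl_t_inj _ _ _ _ _ _ h))
    N (D.card + A.card) Q hN hN hNp hQ
    (by
      intro i₁ h₁ i₂ h₂ hne
      refine le_trans (Finset.card_le_card ?_) (codeg_edge A D i₁ i₂ (hmem _ h₁) hne)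
      intro j hj
      rw [Finset.mem_filter] at hj ⊢
      exact ⟨hj.1, (hed _ _).2 ((appl_edge _ _ _ _ _ _).1 hj.2.1),
        (hed _ _).2 ((appl_edge _ _ _ _ _ _).1 hj.2.2)⟩)
    (by
      intro i₁ h₁ i₂ h₂ hne
      refine le_trans (Finset.card_le_card ?_) (codeg_edge A D i₁ i₂ (hmem _ h₁) hne)
      intro j hj
      rw [Finset.mem_filter] at hj ⊢
      exact ⟨hj.1, (hsymm _ _).1 ((hed _ _).2 ((appl_edge _ _ _ _ _ _).1 hj.2.1)),
        (hsymm _ _).1 ((hed _ _).2 ((appl_edge _ _ _ _ _ _).1 hj.2.2))⟩)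
  refine le_trans ?_ (main.trans ?_)
  · refine Finset.sum_le_sum fun i _ => Finset.card_le_card ?_
    intro j hj
    rw [Finset.mem_filter] at hj ⊢
    exact ⟨hj.1, (appl_edge _ _ _ _ _ _).2 ((hed _ _).1 hj.2)⟩
  · nlinarith

lemma rep_eq {p : ℕ} [Fact p.Prime] (A : Finset (ZMod p)) (x : ZMod p) :
    ((A ×ˢ A).filter (fun q => q.1 - q.2 = x)).card = (A.filter fun b => b + x ∈ A).card := by
  refine Finset.card_bij (fun q _ => q.2) ?_ ?_ ?_
  · rintro ⟨u, v⟩ h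
    simp only [Finset.mem_filter, Finset.mem_product] at h ⊢
    obtain ⟨⟨hu, hv⟩, rfl⟩ := h
    exact ⟨hv, by simpa using hu⟩
  · rintro ⟨u, v⟩ h ⟨u', v'⟩ h' e
    simp only [Finset.mem_filter, Finset.mem_product] at h h' e
    subst e
    have : u = u' := by linear_combination h.2 - h'.2
    rw [this]
  · intro b hb
    simp only [Finset.mem_filter, Finset.mem_product] at hb
    exact ⟨(b + x, b), by simp [hb.1, hb.2], rfl⟩

lemma vprime_card {p : ℕ} [Fact p.Prime] (A B D : Finset (ZMod p)) (t : ℕ)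
    (hD : ∀ x ∈ D, t ≤ ((A ×ˢ A).filter (fun q => q.1 - q.2 = x)).card) :
    D.card * t * B.card ≤
      ((D ×ˢ B ×ˢ A).filter fun v => v.2.2 + v.1 ∈ A).card := by
  rw [Finset.card_filter, Finset.sum_product]
  calc D.card * t * B.card = ∑ x ∈ D, B.card * t := by simp; ring
    _ ≤ _ := by
      refine Finset.sum_le_sum fun x hx => ?_
      rw [Finset.sum_product]
      rw [← smul_eq_mul, ← Finset.sum_const]
      refine Finset.sum_le_sum fun c _ => ?_
      refine (hD x hx).trans ?_
      rw [rep_eq, Finset.card_filter]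

lemma cs_fiber {α β : Type*} [DecidableEq β] [DecidableEq α] (S : Finset α) (T : Finset β)
    (f : α → β) (hf : ∀ v ∈ S, f v ∈ T) :
    S.card ^ 2 ≤ T.card * ((S ×ˢ S).filter fun q => f q.1 = f q.2).card := by
  rw [Finset.card_eq_sum_card_fiberwise hf]
  refine (sq_sum_le_card_mul_sum_sq).trans (Nat.mul_le_mul le_rfl (le_of_eq ?_))
  rw [Finset.card_eq_sum_card_fiberwise (f := fun q => f q.1) (t := T)]
  · refine Finset.sum_congr rfl fun y _ => ?_
    rw [sq, ← Finset.card_product]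
    congr 1
    ext ⟨u, v⟩
    simp only [Finset.mem_filter, Finset.mem_product]
    constructor
    · rintro ⟨⟨h1, h2⟩, h3, h4⟩
      exact ⟨⟨⟨h1, h3⟩, h2.trans h4.symm⟩, h2⟩
    · rintro ⟨⟨⟨h1, h3⟩, h4⟩, h2⟩
      exact ⟨⟨h1, h2⟩, h3, h4.symm.trans h2⟩
  · rintro ⟨u, v⟩ h
    simp only [Finset.coe_filter, Finset.mem_product, Set.mem_ofPred_eq] at h
    exact hf _ h.1.1

open Classical in
lemma level (p : ℕ) [Fact p.Prime] (A D : Finset (ZMod p)) (t : ℕ)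
    (hD : ∀ x ∈ D, t ≤ ((A ×ˢ A).filter (fun q => q.1 - q.2 = x)).card) (N Q : ℕ)
    (hN : D.card * ((A.erase 0).card * A.card) ≤ N) (hNp : N ≤ p ^ 2)
    (hQ : 10000 * Real.sqrt N * (1 + Real.log N) + (D.card + A.card : ℕ) ≤ Q) :
    (D.card * t * (A.erase 0).card) ^ 2 ≤ (A * A).card * (2 * N * Q) := by
  have hN' : (D ×ˢ (A.erase 0) ×ˢ A).card ≤ N := by
    rw [Finset.card_product, Finset.card_product]; exact hN
  have h1 := vprime_card A (A.erase 0) D t hD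
  have h2 := edge_bound p A D N Q hN' hNp hQ
  set V := D ×ˢ (A.erase 0) ×ˢ A with hV
  set V' := V.filter fun v => v.2.2 + v.1 ∈ A with hV'
  have h3 := cs_fiber V' (A * A) (fun v => (v.2.2 + v.1) * v.2.1) (by
    rintro ⟨x, c, b⟩ hv
    simp only [hV', hV, Finset.mem_filter, Finset.mem_product, Finset.mem_erase] at hv
    exact Finset.mul_mem_mul hv.2 hv.1.2.1.2)
  refine (Nat.pow_le_pow_left h1 2).trans (h3.trans (Nat.mul_le_mul le_rfl (le_trans ?_ h2)))
  rw [← Finset.card_sigma]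
  refine Finset.card_le_card_of_injOn
    (fun q => (⟨(q.1.1, q.2.2.1, q.2.2.2), (q.2.1, q.1.2.1, q.1.2.2)⟩ :
      Σ _ : ZMod p × ZMod p × ZMod p, ZMod p × ZMod p × ZMod p)) ?_ ?_
  · rintro ⟨⟨x, c, b⟩, ⟨x', c', b'⟩⟩ hq
    rw [Finset.mem_coe, Finset.mem_filter] at hq
    simp only [hV', hV, Finset.mem_filter, Finset.mem_product] at hq
    obtain ⟨⟨⟨⟨h1, h2, h3⟩, h4⟩, ⟨h5, h6, h7⟩, h8⟩, h9⟩ := hq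
    rw [Finset.mem_coe, Finset.mem_sigma, Finset.mem_filter]
    refine ⟨?_, ?_, h9⟩
    · simp only [hV, Finset.mem_product]; exact ⟨h1, h6, h7⟩
    · simp only [hV, Finset.mem_product]; exact ⟨h5, h2, h3⟩
  · rintro ⟨⟨x, c, b⟩, ⟨x', c', b'⟩⟩ _ ⟨⟨y, d, e⟩, ⟨y', d', e'⟩⟩ _ h
    simp only [Sigma.mk.injEq, Prod.mk.injEq, heq_eq_eq] at h ⊢
    tauto

lemma vinh_moment (p : ℕ) [Fact p.Prime] (L : Finset (ZMod p × ZMod p))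
    (hL : ∀ l ∈ L, l.1 ≠ 0) :
    ∑ z : ZMod p × ZMod p, (((L.filter fun l => z.2 = l.1 * (z.1 + l.2)).card : ℝ)
      - L.card / p) ^ 2 ≤ p * L.card := by
  have hp : (0 : ℝ) < p := by exact_mod_cast (Fact.out : p.Prime).pos
  have e1 : ∑ z : ZMod p × ZMod p, ((L.filter fun l => z.2 = l.1 * (z.1 + l.2)).card : ℝ)
      = p * L.card := by
    simp only [Finset.card_filter, Nat.cast_sum, Nat.cast_ite, Nat.cast_one, Nat.cast_zero]
    rw [Finset.sum_comm]
    simp only [Fintype.sum_prod_type, Finset.sum_ite_eq', Finset.mem_univ, if_true,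
      Finset.sum_const, Finset.card_univ, ZMod.card, nsmul_eq_mul, mul_one]
    ring
  have e2 : ∑ z : ZMod p × ZMod p, ((L.filter fun l => z.2 = l.1 * (z.1 + l.2)).card : ℝ) ^ 2
      ≤ p * L.card + L.card ^ 2 := by
    simp only [Finset.card_filter, Nat.cast_sum, Nat.cast_ite, Nat.cast_one, Nat.cast_zero,
      sq (∑ _ ∈ L, _), Finset.sum_mul_sum]
    rw [Finset.sum_comm]
    have : ∀ l ∈ L, ∑ z : ZMod p × ZMod p, ∑ l' ∈ L,
        ((if z.2 = l.1 * (z.1 + l.2) then (1:ℝ) else 0) *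
          (if z.2 = l'.1 * (z.1 + l'.2) then (1:ℝ) else 0)) ≤ p + L.card := by
      intro l hl
      rw [Finset.sum_comm]
      have : ∀ l' ∈ L, ∑ z : ZMod p × ZMod p,
        ((if z.2 = l.1 * (z.1 + l.2) then (1:ℝ) else 0) *
          (if z.2 = l'.1 * (z.1 + l'.2) then (1:ℝ) else 0)) ≤ (if l' = l then (p:ℝ) else 0) + 1 := by
        intro l' hl'
        simp only [Fintype.sum_prod_type, ite_mul, one_mul, zero_mul, Finset.sum_ite_eq',
          Finset.mem_univ, if_true]
        split_ifs with h
        · subst h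
          simp [ZMod.card]
        · rw [zero_add, ← Nat.cast_one, ← Nat.cast_zero]
          simp only [← Nat.cast_ite]
          rw [← Nat.cast_sum, ← Finset.card_filter]
          norm_cast
          rw [Finset.card_le_one]
          intro x hx y hy
          simp only [Finset.mem_filter, Finset.mem_univ, true_and] at hx hy
          by_cases hc : l.1 = l'.1
          · exfalso
            apply h
            rw [hc] at hx
            have := mul_left_cancel₀ (hL _ hl') hx
            exact Prod.ext hc.symm (by linear_combination -this)
          · have : (l.1 - l'.1) * (x - y) = 0 := by linear_combination hx - hy
            exact sub_eq_zero.mp ((mul_eq_zero.mp this).resolve_left (sub_ne_zero.mpr hc))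
      refine (Finset.sum_le_sum this).trans (le_of_eq ?_)
      rw [Finset.sum_add_distrib, Finset.sum_ite_eq' L l]
      simp [hl]
    refine (Finset.sum_le_sum this).trans (le_of_eq ?_)
    rw [Finset.sum_const, nsmul_eq_mul]; ring
  have e3 : ∑ z : ZMod p × ZMod p, (((L.filter fun l => z.2 = l.1 * (z.1 + l.2)).card : ℝ)
      - L.card / p) ^ 2 = ∑ z : ZMod p × ZMod p,
        ((L.filter fun l => z.2 = l.1 * (z.1 + l.2)).card : ℝ) ^ 2
      - 2 * (L.card / p) * (∑ z : ZMod p × ZMod p,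
        ((L.filter fun l => z.2 = l.1 * (z.1 + l.2)).card : ℝ)) + L.card ^ 2 := by
    simp only [sub_sq, Finset.sum_add_distrib, Finset.sum_sub_distrib, Finset.mul_sum]
    congr 1
    · congr 1
      refine Finset.sum_congr rfl fun z _ => by ring
    · simp [ZMod.card]
      field_simp
  rw [e3, e1]
  have : 2 * ((L.card : ℝ) / p) * (p * L.card) = 2 * L.card ^ 2 := by field_simp
  rw [this]; linarith

lemma vinh_level (p : ℕ) [Fact p.Prime] (A D : Finset (ZMod p)) (t : ℕ)
    (hD : ∀ x ∈ D, t ≤ ((A ×ˢ A).filter (fun q => q.1 - q.2 = x)).card) :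
    (D.card * t * (A.erase 0).card : ℝ) ≤
      D.card * (A * A).card * ((A.erase 0).card * A.card) / p +
      Real.sqrt (D.card * (A * A).card * (p * ((A.erase 0).card * A.card))) := by
  have hp : (0 : ℝ) < p := by exact_mod_cast (Fact.out : p.Prime).pos
  set L := (A.erase 0) ×ˢ A with hL
  have hLc : (L.card : ℝ) = (A.erase 0).card * A.card := by rw [hL, Finset.card_product]; push_cast; rfl
  have h1 := vprime_card A (A.erase 0) D t hD
  have hm := vinh_moment p L (by rintro ⟨c, b⟩ h; simp [hL] at h; exact h.1.1)
  set P := D ×ˢ (A * A) with hP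
  have hPc : (P.card : ℝ) = D.card * (A * A).card := by rw [hP, Finset.card_product]; push_cast; rfl
  set W : ZMod p × ZMod p → ℝ := fun z => ((L.filter fun l => z.2 = l.1 * (z.1 + l.2)).card : ℝ)
    with hW
  have h2 : (D.card * t * (A.erase 0).card : ℝ) ≤ ∑ z ∈ P, W z := by
    have : ((D ×ˢ (A.erase 0) ×ˢ A).filter fun v => v.2.2 + v.1 ∈ A).card ≤
        ∑ z ∈ P, (L.filter fun l => z.2 = l.1 * (z.1 + l.2)).card := by
      rw [← Finset.card_sigma]
      refine Finset.card_le_card_of_injOn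
        (fun v => (⟨(v.1, v.2.1 * (v.1 + v.2.2)), v.2⟩ :
          Σ _ : ZMod p × ZMod p, ZMod p × ZMod p)) ?_ ?_
      · rintro ⟨x, c, b⟩ h
        rw [Finset.mem_coe, Finset.mem_filter] at h
        simp only [Finset.mem_product] at h
        rw [Finset.mem_coe, Finset.mem_sigma, Finset.mem_filter]
        simp only [hP, hL, Finset.mem_product]
        refine ⟨⟨h.1.1, Finset.mul_mem_mul (Finset.mem_of_mem_erase h.1.2.1) ?_⟩, h.1.2, trivial⟩
        rw [add_comm]; exact h.2
      · rintro ⟨x, c, b⟩ _ ⟨x', c', b'⟩ _ h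
        simp only [Sigma.mk.injEq, Prod.mk.injEq, heq_eq_eq] at h ⊢
        tauto
    have := h1.trans this
    simp only [hW]
    exact_mod_cast this
  have h3 : (∑ z ∈ P, (W z - L.card / p)) ^ 2 ≤ P.card * (p * L.card) := by
    refine (sq_sum_le_card_mul_sum_sq).trans (mul_le_mul_of_nonneg_left (le_trans ?_ hm) (by positivity))
    exact Finset.sum_le_univ_sum_of_nonneg (fun z => sq_nonneg _)
  have h4 := Real.le_sqrt_of_sq_le h3
  rw [Finset.sum_sub_distrib, Finset.sum_const, nsmul_eq_mul] at h4
  rw [← hPc, ← hLc]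
  have : (P.card : ℝ) * L.card / p = P.card * (L.card / p) := by ring
  rw [this]; linarith

lemma case_alg (a k l p t n M : ℝ) (ha : 0 < a) (hk : 0 < k) (hp : 0 < p) (ht : 0 ≤ t) (hn : 0 ≤ n)
    (h1 : n * t ≤ a ^ 2) (hta : t ≤ a) (hap : a ^ 3 ≤ p ^ 2) (hl : 1 ≤ l) (hM : 128 ≤ M)
    (H : n * t ^ 4 ≤ (M * k ^ 3 * l * a) ^ 2 ∨ (p * t ^ 2 ≤ 2 * M * k ^ 3 * l * a ^ 2 ∧
      (p * t ≤ 2 * k ^ 3 * a ∨ n * t ^ 2 ≤ 8 * k ^ 3 * p))) :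
    t ^ 3 * n ≤ M ^ 2 * l ^ 2 * k ^ 4 * a ^ 2 := by
  have hl0 : 0 < l := by linarith
  have hM0 : 0 < M := by linarith
  have hl2 : 1 ≤ l ^ 2 := one_le_pow₀ hl
  have hll2 : l ≤ l ^ 2 := by nlinarith
  have hl4 : l ≤ l ^ 4 := by
    calc l = l ^ 1 := (pow_one l).symm
      _ ≤ l ^ 4 := pow_le_pow_right₀ hl (by norm_num)
  have hl6 : l ^ 4 ≤ l ^ 6 := pow_le_pow_right₀ hl (by norm_num)
  have hM1 : (1 : ℝ) ≤ M := by linarith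
  have hM6 : M ^ 4 ≤ M ^ 6 := pow_le_pow_right₀ hM1 (by norm_num)
  have hM2 : 2 * M ≤ M ^ 2 := by nlinarith
  have hM2' : 1 ≤ M ^ 2 := one_le_pow₀ hM1
  have hM4 : 128 * M ≤ M ^ 4 := by
    have : M ^ 2 ≤ M ^ 4 := pow_le_pow_right₀ hM1 (by norm_num)
    nlinarith
  have hta2 : t ^ 2 ≤ a ^ 2 := pow_le_pow_left₀ ht hta 2
  have h3 : t ^ 3 * n ≤ t ^ 2 * a ^ 2 := by
    calc t ^ 3 * n = t ^ 2 * (n * t) := by ring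
      _ ≤ _ := by gcongr
  by_cases hka : a ≤ k ^ 2
  · have : a ^ 2 ≤ k ^ 4 := by
      calc a ^ 2 ≤ (k ^ 2) ^ 2 := pow_le_pow_left₀ ha.le hka 2
        _ = k ^ 4 := by ring
    calc t ^ 3 * n ≤ t ^ 2 * a ^ 2 := h3
      _ ≤ k ^ 4 * a ^ 2 := by gcongr; linarith
      _ = 1 * 1 * k ^ 4 * a ^ 2 := by ring
      _ ≤ _ := by gcongr
  push Not at hka
  rcases H with H | ⟨H1, H2⟩
  · refine le_of_pow_le_pow_left₀ (n := 3) (by norm_num) (by positivity) ?_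
    calc (t ^ 3 * n) ^ 3 = (n * t ^ 4) ^ 2 * (n * t) := by ring
      _ ≤ ((M * k ^ 3 * l * a) ^ 2) ^ 2 * a ^ 2 := by gcongr
      _ = M ^ 4 * l ^ 4 * k ^ 12 * a ^ 6 := by ring
      _ ≤ M ^ 6 * l ^ 6 * k ^ 12 * a ^ 6 := by gcongr
      _ = _ := by ring
  by_cases hi : a ^ 2 ≤ p * k
  · refine le_of_mul_le_mul_left (a := p) ?_ hp
    calc p * (t ^ 3 * n) ≤ p * (t ^ 2 * a ^ 2) := by gcongr
      _ = (p * t ^ 2) * a ^ 2 := by ring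
      _ ≤ (2 * M * k ^ 3 * l * a ^ 2) * a ^ 2 := by gcongr
      _ ≤ (2 * M * k ^ 3 * l * (p * k)) * a ^ 2 := by gcongr
      _ = p * ((2 * M) * l * k ^ 4 * a ^ 2) := by ring
      _ ≤ _ := by gcongr
  push Not at hi
  refine le_of_pow_le_pow_left₀ (n := 2) (by norm_num) (by positivity) ?_
  have hlast : 128 * M * l * k ^ 8 * a ^ 4 ≤ (M ^ 2 * l ^ 2 * k ^ 4 * a ^ 2) ^ 2 := by
    calc 128 * M * l * k ^ 8 * a ^ 4 ≤ M ^ 4 * l ^ 4 * k ^ 8 * a ^ 4 := by gcongr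
      _ = _ := by ring
  refine le_trans ?_ hlast
  rcases H2 with H2 | H2
  · have hka4 : k * a ^ 4 ≤ p ^ 3 := by
      refine le_of_pow_le_pow_left₀ (n := 2) (by norm_num) (by positivity) ?_
      calc (k * a ^ 4) ^ 2 = k ^ 2 * a ^ 8 := by ring
        _ ≤ a * a ^ 8 := by gcongr
        _ = (a ^ 3) ^ 3 := by ring
        _ ≤ (p ^ 2) ^ 3 := by gcongr
        _ = _ := by ring
    refine le_of_mul_le_mul_left (a := p ^ 3) ?_ (by positivity)
    calc p ^ 3 * (t ^ 3 * n) ^ 2 = (p * t ^ 2) * (p * t) ^ 2 * (n * t) ^ 2 := by ring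
      _ ≤ (2 * M * k ^ 3 * l * a ^ 2) * (2 * k ^ 3 * a) ^ 2 * (a ^ 2) ^ 2 := by gcongr
      _ = (k * a ^ 4) * (8 * M * l * k ^ 8 * a ^ 4) := by ring
      _ ≤ p ^ 3 * (128 * M * l * k ^ 8 * a ^ 4) := by gcongr; norm_num
  · refine le_of_mul_le_mul_left (a := p) ?_ (by positivity)
    calc p * (t ^ 3 * n) ^ 2 = (p * t ^ 2) * (n * t ^ 2) ^ 2 := by ring
      _ ≤ (2 * M * k ^ 3 * l * a ^ 2) * (8 * k ^ 3 * p) ^ 2 := by gcongr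
      _ = p * (128 * M * l * k ^ 8 * a ^ 2 * (p * k)) := by ring
      _ ≤ p * (128 * M * l * k ^ 8 * a ^ 2 * a ^ 2) := by gcongr
      _ = _ := by ring

lemma level_real (p : ℕ) [Fact p.Prime] (A D : Finset (ZMod p)) (t : ℕ)
    (hD : ∀ x ∈ D, t ≤ ((A ×ˢ A).filter (fun q => q.1 - q.2 = x)).card)
    (ha : 2 ≤ A.card) (hn : 1 ≤ D.card) (hna : D.card ≤ A.card ^ 2)
    (hp : D.card * A.card ^ 2 ≤ p ^ 2) :
    (D.card * t ^ 4 : ℝ) ≤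
      (400024 * (A * A).card * max 1 (Real.log A.card) * A.card) ^ 2 := by
  set l := max 1 (Real.log A.card) with hl
  have hl1 : 1 ≤ l := le_max_left _ _
  have hl2 : Real.log A.card ≤ l := le_max_right _ _
  set a := A.card with haA
  set n := D.card with hnD
  set m := (A.erase 0).card with hm
  have hma : m ≤ a := Finset.card_le_card (Finset.erase_subset _ _)
  have hma2 : a ≤ 2 * m := by
    have : a - 1 ≤ m := Finset.pred_card_le_card_erase
    omega
  have ha' : (2 : ℝ) ≤ a := by exact_mod_cast ha
  have hn' : (1 : ℝ) ≤ n := by exact_mod_cast hn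
  have hna' : (n : ℝ) ≤ a ^ 2 := by exact_mod_cast hna
  have hma2' : (a : ℝ) ≤ 2 * m := by exact_mod_cast hma2
  set s := Real.sqrt n with hs
  have hs1 : 1 ≤ s := by rw [hs]; exact Real.one_le_sqrt.mpr hn'
  have hs2 : s ^ 2 = n := Real.sq_sqrt (by linarith)
  have hsa : s ≤ a := by rw [hs]; exact Real.sqrt_le_iff.mpr ⟨by linarith, hna'⟩
  have hsN : Real.sqrt ((n * a ^ 2 : ℕ) : ℝ) = s * a := by
    push_cast
    rw [Real.sqrt_mul (by linarith), Real.sqrt_sq (by linarith)]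
  have hlogN : Real.log ((n * a ^ 2 : ℕ) : ℝ) ≤ 4 * l := by
    push_cast
    calc Real.log (n * a ^ 2) ≤ Real.log (a ^ 4) := by
          apply Real.log_le_log (by positivity)
          nlinarith [sq_nonneg (a : ℝ)]
      _ = 4 * Real.log a := by rw [Real.log_pow]; norm_num
      _ ≤ _ := by linarith
  set K := (A * A).card with hK
  have hsa0 : 2 ≤ s * a := by nlinarith
  have key := level p A D t hD (n * a ^ 2) ⌈50002 * l * (s * a)⌉₊ (by
      refine Nat.mul_le_mul le_rfl ?_
      rw [sq]; exact Nat.mul_le_mul hma le_rfl) hp (by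
      refine le_trans ?_ (Nat.le_ceil _)
      rw [hsN]; push_cast
      have h1 : (n : ℝ) ≤ s * a := by rw [← hs2, sq]; gcongr
      have h2 : (a : ℝ) ≤ s * a := by nlinarith
      have h3 : 10000 * (s * a) * (1 + Real.log ((n * a ^ 2 : ℕ) : ℝ)) ≤
          10000 * (s * a) * (5 * l) := by gcongr; linarith
      push_cast at h3
      have h4 : s * a ≤ l * (s * a) := by nlinarith
      change 10000 * (s * a) * (1 + Real.log (n * a ^ 2)) + ((n : ℝ) + a) ≤ _
      nlinarith)
  have hQ : ((⌈50002 * l * (s * a)⌉₊ : ℕ) : ℝ) ≤ 50003 * l * (s * a) := by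
    have := (Nat.ceil_lt_add_one (show 0 ≤ 50002 * l * (s * a) by positivity)).le
    nlinarith [mul_le_mul hl1 hsa0 (by norm_num) (by linarith)]
  have key' : ((n : ℝ) * t * m) ^ 2 ≤ K * (2 * (n * a ^ 2) * (50003 * l * (s * a))) := by
    have : ((n : ℝ) * t * m) ^ 2 ≤ K * (2 * (n * a ^ 2) * (⌈50002 * l * (s * a)⌉₊ : ℕ)) := by
      exact_mod_cast key
    refine this.trans ?_
    gcongr
  have k2 : s * t ^ 2 ≤ 400024 * K * l * a := by
    have h5 : ((n : ℝ) * t * a) ^ 2 ≤ 4 * ((n : ℝ) * t * m) ^ 2 := by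
      calc ((n : ℝ) * t * a) ^ 2 ≤ ((n : ℝ) * t * (2 * m)) ^ 2 := by gcongr
        _ = _ := by ring
    refine le_of_mul_le_mul_left (a := s ^ 3 * a ^ 2) ?_ (by positivity)
    calc s ^ 3 * a ^ 2 * (s * t ^ 2) = (s ^ 2 * t * a) ^ 2 := by ring
      _ ≤ 4 * (K * (2 * (n * a ^ 2) * (50003 * l * (s * a)))) := by
          rw [hs2]; linarith
      _ = s ^ 3 * a ^ 2 * (400024 * K * l * a) := by rw [← hs2]; ring
  calc (n * t ^ 4 : ℝ) = (s * t ^ 2) ^ 2 := by rw [← hs2]; ring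
    _ ≤ _ := pow_le_pow_left₀ (by positivity) k2 2

lemma count_le {p : ℕ} [Fact p.Prime] (A D : Finset (ZMod p)) (t : ℕ)
    (hD : ∀ x ∈ D, t ≤ ((A ×ˢ A).filter (fun q => q.1 - q.2 = x)).card) :
    D.card * t ≤ A.card ^ 2 := by
  calc D.card * t = ∑ x ∈ D, t := by simp
    _ ≤ ∑ x ∈ D, ((A ×ˢ A).filter (fun q => q.1 - q.2 = x)).card := Finset.sum_le_sum hD
    _ ≤ (A ×ˢ A).card := by
        rw [Finset.sum_card_fiberwise_eq_card_filter]; exact Finset.card_le_card (Finset.filter_subset _ _)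
    _ = _ := by rw [Finset.card_product, sq]

lemma level_final (p : ℕ) [Fact p.Prime] (A D : Finset (ZMod p)) (t : ℕ) (ht : 1 ≤ t)
    (hD : ∀ x ∈ D, t ≤ ((A ×ˢ A).filter (fun q => q.1 - q.2 = x)).card)
    (ha : 2 ≤ A.card) (hap : A.card ^ 3 ≤ p ^ 2) (k : ℝ) (hk : 0 < k)
    (hkK : k ^ 3 = (A * A).card) :
    (t ^ 3 * D.card : ℝ) ≤
      400024 ^ 2 * (max 1 (Real.log A.card)) ^ 2 * k ^ 4 * A.card ^ 2 := by
  have hpp : 0 < p := (Fact.out : p.Prime).pos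
  rcases Nat.eq_zero_or_pos D.card with h0 | hn
  · rw [h0]; simp; positivity
  have hnt := count_le A D t hD
  have hna : D.card ≤ A.card ^ 2 := le_trans (Nat.le_mul_of_pos_right _ ht) hnt
  have hta : t ≤ A.card := by
    obtain ⟨x, hx⟩ := Finset.card_pos.mp hn
    refine (hD x hx).trans ?_
    rw [rep_eq]; exact Finset.card_le_card (Finset.filter_subset _ _)
  have hcp : A.card ≤ p := by
    have := Finset.card_le_univ A
    rwa [ZMod.card] at this
  set l := max 1 (Real.log A.card) with hl
  have hl1 : 1 ≤ l := le_max_left _ _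
  have haR : (2 : ℝ) ≤ A.card := by exact_mod_cast ha
  have hpR : (0 : ℝ) < p := by exact_mod_cast hpp
  refine case_alg A.card k l p t D.card 400024 (by linarith) hk hpR (by positivity)
    (by positivity) (by exact_mod_cast hnt) (by exact_mod_cast hta) (by exact_mod_cast hap) hl1
    (by norm_num) ?_
  rw [hkK]
  by_cases hc : D.card * A.card ^ 2 ≤ p ^ 2
  · left
    exact level_real p A D t hD ha hn hna hc
  right
  push Not at hc
  have ha2 : 0 < A.card ^ 2 := by positivity
  have hn1 : 1 ≤ p ^ 2 / A.card ^ 2 := by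
    rw [Nat.one_le_div_iff ha2]; exact Nat.pow_le_pow_left hcp 2
  have hn2 : p ^ 2 / A.card ^ 2 ≤ D.card :=
    (Nat.div_lt_of_lt_mul (by rw [mul_comm]; exact hc)).le
  have hn3 : p ^ 2 / A.card ^ 2 * A.card ^ 2 ≤ p ^ 2 := Nat.div_mul_le_self _ _
  have hn4 : p ^ 2 ≤ 2 * (p ^ 2 / A.card ^ 2) * A.card ^ 2 := by
    have h5 := Nat.lt_div_mul_add (a := p ^ 2) ha2
    nlinarith
  obtain ⟨D', hD', hcard⟩ := Finset.exists_subset_card_eq hn2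
  constructor
  · have h := level_real p A D' t (fun x hx => hD x (hD' hx)) ha (by rw [hcard]; exact hn1)
      (by rw [hcard]; exact hn2.trans hna) (by rw [hcard]; exact hn3)
    rw [hcard] at h
    have hn4' : (p : ℝ) ^ 2 ≤ 2 * ((p ^ 2 / A.card ^ 2 : ℕ) : ℝ) * (A.card : ℝ) ^ 2 := by
      exact_mod_cast hn4
    refine le_of_pow_le_pow_left₀ (n := 2) (by norm_num) (by positivity) ?_
    calc (p * t ^ 2 : ℝ) ^ 2 = p ^ 2 * t ^ 4 := by ring
      _ ≤ (2 * ((p ^ 2 / A.card ^ 2 : ℕ) : ℝ) * (A.card : ℝ) ^ 2) * t ^ 4 := by gcongr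
      _ = 2 * A.card ^ 2 * (((p ^ 2 / A.card ^ 2 : ℕ) : ℝ) * t ^ 4) := by ring
      _ ≤ 2 * A.card ^ 2 * (400024 * (A * A).card * l * A.card) ^ 2 := by gcongr
      _ ≤ 4 * A.card ^ 2 * (400024 * (A * A).card * l * A.card) ^ 2 := by gcongr; norm_num
      _ = _ := by ring
  · have hv := vinh_level p A D t hD
    set m := (A.erase 0).card with hm
    have hma2 : A.card ≤ 2 * m := by
      have : A.card - 1 ≤ m := Finset.pred_card_le_card_erase
      omega
    have hma2' : (A.card : ℝ) ≤ 2 * m := by exact_mod_cast hma2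
    have hm0 : (0 : ℝ) < m := by linarith
    have hn0 : (0 : ℝ) < D.card := by exact_mod_cast hn
    set n : ℝ := (D.card : ℝ)
    set K : ℝ := ((A * A).card : ℝ)
    set a : ℝ := (A.card : ℝ)
    have hK0 : 0 ≤ K := by positivity
    rcases le_total (Real.sqrt (n * K * (p * (m * a)))) (n * K * (m * a) / p) with h | h
    · left
      have h2 : n * t * m ≤ 2 * (n * K * (m * a) / p) := by linarith
      refine le_of_mul_le_mul_left (a := n * m) ?_ (by positivity)
      calc n * m * (p * t) = p * (n * t * m) := by ring
        _ ≤ p * (2 * (n * K * (m * a) / p)) := by gcongr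
        _ = _ := by field_simp
    · right
      have h2 : n * t * m ≤ 2 * Real.sqrt (n * K * (p * (m * a))) := by linarith
      have h3 := pow_le_pow_left₀ (by positivity) h2 2
      rw [mul_pow 2, Real.sq_sqrt (by positivity)] at h3
      refine le_of_mul_le_mul_left (a := n * m ^ 2) ?_ (by positivity)
      calc n * m ^ 2 * (n * t ^ 2) = (n * t * m) ^ 2 := by ring
        _ ≤ 2 ^ 2 * (n * K * (p * (m * a))) := h3
        _ ≤ 2 ^ 2 * (n * K * (p * (m * (2 * m)))) := by gcongr
        _ = _ := by ring

lemma dyadic {α : Type*} (S : Finset α) (r : α → ℕ) (a : ℕ) (B : ℝ) (hr : ∀ x ∈ S, r x ≤ a)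
    (hB : ∀ t : ℕ, 1 ≤ t → (t : ℝ) ^ 3 * (S.filter fun x => t ≤ r x).card ≤ B) :
    ∑ x ∈ S, (r x : ℝ) ^ 3 ≤ (Nat.log 2 a + 1 : ℕ) * (8 * B) := by
  have h1 : ∀ x ∈ S, (r x : ℝ) ^ 3 ≤ ∑ j ∈ Finset.range (Nat.log 2 a + 1),
      (if 2 ^ j ≤ r x then 8 * ((2 ^ j : ℕ) : ℝ) ^ 3 else 0) := by
    intro x hx
    rcases Nat.eq_zero_or_pos (r x) with h0 | h0
    · rw [h0]
      simp
    have hj : Nat.log 2 (r x) ∈ Finset.range (Nat.log 2 a + 1) := by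
      rw [Finset.mem_range, Nat.lt_succ_iff]; exact Nat.log_mono_right (hr x hx)
    refine le_trans ?_ (Finset.single_le_sum (f := fun j =>
      (if 2 ^ j ≤ r x then 8 * ((2 ^ j : ℕ) : ℝ) ^ 3 else 0)) (fun j _ => by positivity) hj)
    rw [if_pos (Nat.pow_log_le_self 2 h0.ne')]
    have h2 : r x ≤ 2 * 2 ^ Nat.log 2 (r x) := by
      have := Nat.lt_pow_succ_log_self (b := 2) (by norm_num) (r x)
      rw [pow_succ] at this; omega
    have h3 : (r x : ℝ) ≤ 2 * ((2 ^ Nat.log 2 (r x) : ℕ) : ℝ) := by exact_mod_cast h2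
    calc (r x : ℝ) ^ 3 ≤ (2 * ((2 ^ Nat.log 2 (r x) : ℕ) : ℝ)) ^ 3 := by gcongr
      _ = _ := by ring
  refine (Finset.sum_le_sum h1).trans ?_
  rw [Finset.sum_comm]
  calc _ ≤ ∑ j ∈ Finset.range (Nat.log 2 a + 1), 8 * B := by
        refine Finset.sum_le_sum fun j _ => ?_
        rw [← Finset.sum_filter, Finset.sum_const, nsmul_eq_mul]
        have := hB (2 ^ j) Nat.one_le_two_pow
        linarith
    _ = _ := by rw [Finset.sum_const, Finset.card_range, nsmul_eq_mul]

theorem stmt_14 :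
    ∃ C : ℝ, 0 < C ∧
      ∀ (p : ℕ), p.Prime →
        ∀ (A : Finset (ZMod p)), A.Nonempty →
          (A.card : ℝ) < (p : ℝ) ^ ((2 : ℝ) / 3) →
          (∑ x ∈ A - A, (((A ×ˢ A).filter (fun q => q.1 - q.2 = x)).card : ℝ) ^ 3) ≤
            C * (max 1 (Real.log A.card)) ^ C
              * ((A * A).card : ℝ) ^ ((4 : ℝ) / 3) * (A.card : ℝ) ^ 2 := by
  obtain ⟨M, hM1, hM⟩ : ∃ M : ℝ, 1 ≤ M ∧ M = 400024 ^ 2 := ⟨_, by norm_num, rfl⟩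
  refine ⟨24 * M, by linarith, ?_⟩
  intro p hp A hA hAp
  have : Fact p.Prime := ⟨hp⟩
  set l := max 1 (Real.log A.card) with hl
  have hl1 : 1 ≤ l := le_max_left _ _
  have hK : 0 < (A * A).card := Finset.card_pos.mpr (hA.mul hA)
  have hK1 : (1 : ℝ) ≤ (A * A).card := by exact_mod_cast hK
  have hA1 : 1 ≤ A.card := Finset.card_pos.mpr hA
  have hA1' : (1 : ℝ) ≤ A.card := by exact_mod_cast hA1
  set k : ℝ := ((A * A).card : ℝ) ^ ((1 : ℝ) / 3) with hk
  have hk0 : 0 < k := by positivity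
  have hk3 : k ^ 3 = (A * A).card := by
    rw [hk, ← Real.rpow_natCast, ← Real.rpow_mul (by positivity)]; norm_num
  have hk4 : ((A * A).card : ℝ) ^ ((4 : ℝ) / 3) = k ^ 4 := by
    rw [hk, ← Real.rpow_natCast, ← Real.rpow_mul (by positivity)]; norm_num
  have hk1 : 1 ≤ k ^ 4 := by
    rw [← hk4]; exact Real.one_le_rpow hK1 (by norm_num)
  rw [hk4]
  have hlC : l ^ 3 ≤ l ^ (24 * M) := by
    rw [← Real.rpow_natCast]
    exact Real.rpow_le_rpow_of_exponent_le hl1 (by push_cast; linarith)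
  have hrA : ∀ x ∈ A - A, ((A ×ˢ A).filter (fun q => q.1 - q.2 = x)).card ≤ A.card := by
    intro x _
    rw [rep_eq]; exact Finset.card_le_card (Finset.filter_subset _ _)
  have hap : A.card ^ 3 ≤ p ^ 2 := by
    have h3 : (A.card : ℝ) ^ 3 ≤ ((p : ℝ) ^ ((2 : ℝ) / 3)) ^ 3 :=
      pow_le_pow_left₀ (by positivity) hAp.le 3
    rw [← Real.rpow_natCast ((p : ℝ) ^ ((2 : ℝ) / 3)), ← Real.rpow_mul (by positivity)] at h3
    norm_num at h3
    exact_mod_cast h3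
  have hmain : ∀ t : ℕ, 1 ≤ t → (t : ℝ) ^ 3 * ((A - A).filter fun x =>
      t ≤ ((A ×ˢ A).filter (fun q => q.1 - q.2 = x)).card).card ≤
      M * l ^ 2 * k ^ 4 * A.card ^ 2 := by
    intro t ht
    have hD : ∀ x ∈ ((A - A).filter fun x =>
        t ≤ ((A ×ˢ A).filter (fun q => q.1 - q.2 = x)).card),
        t ≤ ((A ×ˢ A).filter (fun q => q.1 - q.2 = x)).card := fun x hx =>
      (Finset.mem_filter.mp hx).2
    rcases Nat.lt_or_ge A.card 2 with h2 | h2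
    · have hA1e : A.card = 1 := by omega
      set D := ((A - A).filter fun x =>
        t ≤ ((A ×ˢ A).filter (fun q => q.1 - q.2 = x)).card) with hDD
      have h1 := count_le A D t hD
      rw [hA1e, one_pow] at h1
      have hle : t ^ 3 * D.card ≤ 1 := by
        rcases Nat.eq_zero_or_pos D.card with h0 | h0
        · simp [h0]
        · have : t = 1 := by nlinarith
          subst this
          simpa using h1
      calc (t : ℝ) ^ 3 * D.card ≤ 1 := by exact_mod_cast hle
        _ = 1 * 1 * 1 * 1 := by norm_num
        _ ≤ _ := by
          gcongr
          · exact one_le_pow₀ hl1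
          · exact one_le_pow₀ hA1'
    · rw [hM]
      exact level_final p A _ t ht hD h2 hap k hk0 hk3
  have hlog : ((Nat.log 2 A.card + 1 : ℕ) : ℝ) ≤ 3 * l := by
    have h1 : (Nat.log 2 A.card : ℝ) ≤ Real.logb 2 A.card := Real.natLog_le_logb _ _
    have h2 : Real.logb 2 A.card ≤ 2 * l := by
      rw [Real.logb, div_le_iff₀ (Real.log_pos (by norm_num))]
      have := Real.log_two_gt_d9
      have h3 : Real.log A.card ≤ l := le_max_right _ _
      nlinarith
    push_cast; linarith
  have hM0 : 0 ≤ M := by linarith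
  clear_value l k
  clear hM
  have hfin := dyadic (A - A) (fun x => ((A ×ˢ A).filter (fun q => q.1 - q.2 = x)).card) A.card
    (M * l ^ 2 * k ^ 4 * A.card ^ 2) hrA hmain
  refine hfin.trans ?_
  have e1 : ((Nat.log 2 A.card + 1 : ℕ) : ℝ) * (8 * (M * l ^ 2 * k ^ 4 * A.card ^ 2)) ≤
      3 * l * (8 * (M * l ^ 2 * k ^ 4 * A.card ^ 2)) :=
    mul_le_mul_of_nonneg_right hlog (by positivity)
  refine e1.trans ?_
  have e2 : 3 * l * (8 * (M * l ^ 2 * k ^ 4 * (A.card : ℝ) ^ 2)) =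
      (24 * M * (k ^ 4 * A.card ^ 2)) * l ^ 3 := by ring
  have e3 : 24 * M * l ^ (24 * M) * k ^ 4 * (A.card : ℝ) ^ 2 =
      (24 * M * (k ^ 4 * A.card ^ 2)) * l ^ (24 * M) := by ring
  rw [e2, e3]
  exact mul_le_mul_of_nonneg_left hlC (by positivity)
end
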